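/- arXiv:1801.03014 — 2 statements merged into one kernel-verified Lean document; each statement's English description precedes it below -/
import Mathlib

section
/- Let Ω ⊂ ℝⁿ be a bounded Lipschitz domain, T₀ ∈ W^{1,∞}(Ω;ℝ^{N×n}), and let f ∈ C²([0,∞)) satisfy f(0) = f'(0) = 0. If u ∈ W^{2,∞}(Ω;ℝ^N) minimises the functional 𝔉[w] = ∫_Ω (f(|∇w|) − T₀ · ∇w) dx among all w ∈ W^{1,1}(Ω;ℝ^N), then u satisfies div(f'(|∇u|)|∇u|⁻¹ ∇u) = div(T₀) pointwise almost everywhere in Ω, and f'(|∇u|)|∇u|⁻¹ ∇u · ν_{∂Ω} = T₀ · ν_{∂Ω} pointwise ℋ^{n−1}-almost everywhere on ∂Ω, where ν_{∂Ω} is the outward unit normal of ∂Ω. -/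
open MeasureTheory Filter Topology Set
open scoped ENNReal RealInnerProductSpace

noncomputable section

/-- Euclidean space `ℝⁿ`. -/
abbrev EVec (n : ℕ) := EuclideanSpace ℝ (Fin n)

/-- Frobenius inner product of two "matrices". -/
def mdot {ι κ : Type*} [Fintype ι] [Fintype κ] (A B : ι → κ → ℝ) : ℝ :=
  ∑ a, ∑ i, A a i * B a i

/-- Frobenius norm. -/
noncomputable def mnorm {ι κ : Type*} [Fintype ι] [Fintype κ] (A : ι → κ → ℝ) : ℝ :=
  Real.sqrt (mdot A A)

/-- Euclidean norm of a vector given as a tuple. -/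
noncomputable def vnorm {ι : Type*} [Fintype ι] (v : ι → ℝ) : ℝ :=
  Real.sqrt (∑ a, v a ^ 2)

/-- `Ω ⊆ ℝⁿ` is a (nonempty, open, connected) Lipschitz domain: every boundary point has
a neighbourhood on which `Ω` can be flattened to a half space by a bi-Lipschitz map. -/
def IsLipschitzDomain {n : ℕ} (Ω : Set (EVec n)) : Prop :=
  IsOpen Ω ∧ Ω.Nonempty ∧ IsConnected Ω ∧
  ∀ x ∈ frontier Ω, ∃ (U : Set (EVec n)) (h hinv : EVec n → EVec n) (K : NNReal)
      (e : EVec n),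
    ‖e‖ = 1 ∧ IsOpen U ∧ x ∈ U ∧ LipschitzOnWith K h U ∧
    LipschitzOnWith K hinv (h '' U) ∧ (∀ y ∈ U, hinv (h y) = y) ∧
    h '' (U ∩ Ω) = (h '' U) ∩ {y : EVec n | 0 < ⟪e, y⟫}

/-- `Du` is the weak (distributional) gradient of `u` on `Ω`, and both are integrable;
i.e. `u ∈ W^{1,1}(Ω; ℝ^ι)` with weak gradient `Du`. -/
def HasWeakDerivOn {n : ℕ} {ι : Type*} [Fintype ι] (Ω : Set (EVec n))
    (u : EVec n → ι → ℝ) (Du : EVec n → ι → Fin n → ℝ) : Prop :=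
  IntegrableOn u Ω volume ∧ IntegrableOn Du Ω volume ∧
  ∀ φ : EVec n → ℝ, ContDiff ℝ 1 φ → HasCompactSupport φ → tsupport φ ⊆ Ω →
    ∀ (a : ι) (i : Fin n),
      ∫ x in Ω, u x a * fderiv ℝ φ x (EuclideanSpace.single i 1) =
        - ∫ x in Ω, Du x a i * φ x

/-- `u ∈ W^{1,2}(Ω;ℝ^ι)` with weak gradient `Du`. -/
def MemW12 {n : ℕ} {ι : Type*} [Fintype ι] (Ω : Set (EVec n))
    (u : EVec n → ι → ℝ) (Du : EVec n → ι → Fin n → ℝ) : Prop :=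
  HasWeakDerivOn Ω u Du ∧ IntegrableOn (fun x => vnorm (u x) ^ 2) Ω volume ∧
    IntegrableOn (fun x => mnorm (Du x) ^ 2) Ω volume

/-- vanishing mean value `(u)_Ω = 0`. -/
def ZeroMean {n : ℕ} {ι : Type*} [Fintype ι] (Ω : Set (EVec n))
    (u : EVec n → ι → ℝ) : Prop :=
  ∀ a : ι, ∫ x in Ω, u x a = 0

/-- The `L^∞(Ω)` norm of a matrix field (w.r.t. the pointwise Frobenius norm). -/
noncomputable def linfNormOn {n N : ℕ} (Ω : Set (EVec n))
    (T : EVec n → Fin N → Fin n → ℝ) : ℝ≥0∞ :=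
  essSup (fun x => ENNReal.ofReal (mnorm (T x))) (volume.restrict Ω)

/-- `T ∈ W^{1,∞}(Ω)`: bounded and Lipschitz on `Ω`. -/
def MemW1inf {n N : ℕ} (Ω : Set (EVec n)) (T : EVec n → Fin N → Fin n → ℝ) : Prop :=
  ∃ C : NNReal, (∀ x ∈ Ω, ‖T x‖ ≤ C) ∧ LipschitzOnWith C T Ω

/-- `T ∈ W^{2,∞}(Ω)`: `T` is bounded with bounded Lipschitz derivative on `Ω`. -/
def MemW2inf {n N : ℕ} (Ω : Set (EVec n)) (T : EVec n → Fin N → Fin n → ℝ) : Prop :=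
  ∃ (C : NNReal) (DT : EVec n → EVec n →L[ℝ] (Fin N → Fin n → ℝ)),
    (∀ x ∈ Ω, ‖T x‖ ≤ C) ∧ (∀ x ∈ Ω, HasFDerivWithinAt T (DT x) Ω x) ∧
    (∀ x ∈ Ω, ‖DT x‖ ≤ C) ∧ LipschitzOnWith C DT Ω

/-- The nonlinear map `A(z) = f'(|z|) z / |z|` (equal to `0` at `z = 0`). -/
noncomputable def Amap {N n : ℕ} (f' : ℝ → ℝ) (z : Fin N → Fin n → ℝ) :
    Fin N → Fin n → ℝ :=
  fun a i => (f' (mnorm z) / mnorm z) * z a i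

/-- `u` is a weak solution of the Neumann problem for the integrand `f(|·|)` and datum `T₀`. -/
def IsWeakSolution {n N : ℕ} (Ω : Set (EVec n)) (f' : ℝ → ℝ)
    (T₀ : EVec n → Fin N → Fin n → ℝ)
    (u : EVec n → Fin N → ℝ) (Du : EVec n → Fin N → Fin n → ℝ) : Prop :=
  HasWeakDerivOn Ω u Du ∧
  ∀ φ Dφ, HasWeakDerivOn Ω φ Dφ →
    ∫ x in Ω, mdot (Amap f' (Du x)) (Dφ x) = ∫ x in Ω, mdot (T₀ x) (Dφ x)

/-- The functional `𝔉[w] = ∫_Ω (f(|∇w|) − T₀ · ∇w) dx` (as a function of the gradient). -/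
noncomputable def FF {n N : ℕ} (Ω : Set (EVec n)) (f : ℝ → ℝ)
    (T₀ : EVec n → Fin N → Fin n → ℝ) (Du : EVec n → Fin N → Fin n → ℝ) : ℝ :=
  ∫ x in Ω, (f (mnorm (Du x)) - mdot (T₀ x) (Du x))

/-- The regularised functional `𝔉_k[w] = 𝔉[w] + (2k)⁻¹ ∫_Ω |∇w|² dx`. -/
noncomputable def FFk {n N : ℕ} (Ω : Set (EVec n)) (f : ℝ → ℝ)
    (T₀ : EVec n → Fin N → Fin n → ℝ) (k : ℕ)
    (Du : EVec n → Fin N → Fin n → ℝ) : ℝ :=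
  FF Ω f T₀ Du + (2 * (k : ℝ))⁻¹ * ∫ x in Ω, mnorm (Du x) ^ 2

end

/-- `ν` is the measure-theoretic outward unit normal of `Ω` at `x` (De Giorgi). -/
def IsOuterNormal {n : ℕ} (Ω : Set (EVec n)) (x ν : EVec n) : Prop :=
  ‖ν‖ = 1 ∧
  Filter.Tendsto (fun r : ℝ =>
      volume (Ω ∩ Metric.ball x r ∩ {y : EVec n | 0 < ⟪ν, y - x⟫}) /
        volume (Metric.ball x r))
    (nhdsWithin 0 (Set.Ioi 0)) (nhds 0) ∧
  Filter.Tendsto (fun r : ℝ =>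
      volume ((Metric.ball x r \ Ω) ∩ {y : EVec n | ⟪ν, y - x⟫ < 0}) /
        volume (Metric.ball x r))
    (nhdsWithin 0 (Set.Ioi 0)) (nhds 0)


/-!
Write `A(z) = f'(|z|) z / |z|`. Differentiating `t ↦ 𝔉[u + t v]` at the minimum `t = 0` shows that
`∫_Ω (A(∇u) - T₀) · ∇v = 0` for every `C¹` function `v` with compact support in `ℝⁿ`; since `A` is
Lipschitz on bounded sets, every row of `A(∇u) - T₀` is thus a Lipschitz field `X` on `Ω` with
`∫_Ω ∇φ · X = 0` for all test functions `φ`, including those not vanishing on `∂Ω`.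

For `φ` supported in `Ω`, integration by parts and the fundamental lemma of the calculus of
variations give `div X = 0` almost everywhere. At a boundary point `x` with measure-theoretic
normal `ν` the identity is blown up: it persists for `z ↦ X (x + r z)` on `(Ω - x) / r`, and as
`r → 0` it passes to the constant field `X x` on the half space `⟪ν, z⟫ < 0`. Testing there with a
radial function and reflecting in the axis `ℝ ν` leaves only `⟪X x, ν⟫` times a nonzero integral.
-/
section RadialField

variable {E : Type*} [SeminormedAddCommGroup E] [NormedSpace ℝ E] {g : ℝ → ℝ} {R : ℝ} {K : NNReal}

/-- The radial vector field `z ↦ g(|z|) z / |z|` on a normed space, with value `0` at `z = 0`;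
it is the gradient of `z ↦ G(|z|)` when `G' = g`. -/
noncomputable def radialField (g : ℝ → ℝ) (z : E) : E :=
  (g ‖z‖ / ‖z‖) • z

theorem norm_radialField (hg0 : g 0 = 0) (z : E) : ‖radialField g z‖ = |g ‖z‖| := by
  rw [radialField, norm_smul, Real.norm_eq_abs, abs_div, abs_norm]
  exact div_mul_cancel_of_imp fun hz => by rw [hz, hg0, abs_zero]

theorem norm_radialField_sub_le (hg0 : g 0 = 0) (z w : E) :
    ‖radialField g z - radialField g w‖ ≤
      2 * (|g ‖z‖ / ‖z‖| * ‖z - w‖) + |g ‖z‖ - g ‖w‖| := by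
  have cancel (s : ℝ) : g s / s * s = g s :=
    div_mul_cancel_of_imp fun hs => by rw [hs, hg0]
  have split : radialField g z - radialField g w =
      (g ‖z‖ / ‖z‖) • (z - w) + (g ‖z‖ / ‖z‖ - g ‖w‖ / ‖w‖) • w := by
    simp only [radialField]
    module
  have coefficient : (g ‖z‖ / ‖z‖ - g ‖w‖ / ‖w‖) * ‖w‖ =
      g ‖z‖ / ‖z‖ * (‖w‖ - ‖z‖) + (g ‖z‖ - g ‖w‖) := by
    linear_combination cancel ‖z‖ - cancel ‖w‖
  have second : ‖(g ‖z‖ / ‖z‖ - g ‖w‖ / ‖w‖) • w‖ ≤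
      |g ‖z‖ / ‖z‖| * ‖z - w‖ + |g ‖z‖ - g ‖w‖| := by
    rw [norm_smul, Real.norm_eq_abs, ← abs_norm w, ← abs_mul, abs_norm, coefficient]
    refine (abs_add_le _ _).trans ?_
    rw [abs_mul, norm_sub_rev]
    gcongr
    exact abs_norm_sub_norm_le w z
  calc ‖radialField g z - radialField g w‖
      ≤ ‖(g ‖z‖ / ‖z‖) • (z - w)‖ + ‖(g ‖z‖ / ‖z‖ - g ‖w‖ / ‖w‖) • w‖ :=
        split ▸ norm_add_le _ _
    _ ≤ |g ‖z‖ / ‖z‖| * ‖z - w‖ + (|g ‖z‖ / ‖z‖| * ‖z - w‖ + |g ‖z‖ - g ‖w‖|) := by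
        gcongr
        rw [norm_smul, Real.norm_eq_abs]
    _ = _ := by ring

theorem lipschitzOnWith_radialField (hg : LipschitzOnWith K g (Icc 0 R)) (hg0 : g 0 = 0) :
    LipschitzOnWith (3 * K) (radialField g : E → E) (Metric.closedBall 0 R) := by
  refine LipschitzOnWith.of_dist_le_mul fun z hz w hw => ?_
  have norm_mem {v : E} (hv : v ∈ Metric.closedBall 0 R) : ‖v‖ ∈ Icc 0 R :=
    ⟨norm_nonneg v, mem_closedBall_zero_iff.1 hv⟩
  have zero_mem : (0 : ℝ) ∈ Icc 0 R := ⟨le_rfl, (norm_mem hz).1.trans (norm_mem hz).2⟩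
  have quotient_le : |g ‖z‖ / ‖z‖| ≤ K := by
    rw [abs_div, abs_norm]
    refine div_le_of_le_mul₀ (norm_nonneg z) K.coe_nonneg ?_
    simpa [Real.dist_eq, hg0] using hg.dist_le_mul _ (norm_mem hz) _ zero_mem
  have increment_le : |g ‖z‖ - g ‖w‖| ≤ K * ‖z - w‖ :=
    calc |g ‖z‖ - g ‖w‖| ≤ K * |‖z‖ - ‖w‖| := hg.dist_le_mul _ (norm_mem hz) _ (norm_mem hw)
      _ ≤ K * ‖z - w‖ := by gcongr; exact abs_norm_sub_norm_le z w
  calc dist (radialField g z) (radialField g w)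
      ≤ 2 * (|g ‖z‖ / ‖z‖| * ‖z - w‖) + |g ‖z‖ - g ‖w‖| := by
        rw [dist_eq_norm]; exact norm_radialField_sub_le hg0 z w
    _ ≤ 2 * (K * ‖z - w‖) + K * ‖z - w‖ := by gcongr
    _ = (3 * K : NNReal) * dist z w := by rw [dist_eq_norm]; push_cast; ring

end RadialField

section RadialEnergy

variable {H : Type*} [NormedAddCommGroup H] [InnerProductSpace ℝ H] {f f' : ℝ → ℝ}

theorem hasFDerivAt_norm_of_ne_zero {z : H} (hz : z ≠ 0) :
    HasFDerivAt (fun w : H => ‖w‖) (‖z‖⁻¹ • innerSL ℝ z) z := by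
  have h := (hasStrictFDerivAt_norm_sq z).hasFDerivAt.sqrt (by positivity)
  simp only [Real.sqrt_sq (norm_nonneg _)] at h
  convert h using 1
  module

theorem hasFDerivAt_comp_norm (hf : ∀ t ∈ Ici (0 : ℝ), HasDerivWithinAt f (f' t) (Ici 0) t)
    (hf'0 : f' 0 = 0) (z : H) :
    HasFDerivAt (fun w : H => f ‖w‖) (innerSL ℝ (radialField f' z)) z := by
  rcases eq_or_ne z 0 with rfl | hz
  · have tendsto_norm : Tendsto (fun w : H => ‖w‖) (𝓝 0) (𝓝[≥] 0) :=
      tendsto_nhdsWithin_iff.2 ⟨tendsto_norm_zero, .of_forall norm_nonneg⟩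
    have littleO := (hasDerivWithinAt_iff_isLittleO.1 (hf 0 self_mem_Ici)).comp_tendsto
      tendsto_norm
    rw [hasFDerivAt_iff_isLittleO, ← Asymptotics.isLittleO_norm_right]
    simpa [Function.comp_def, radialField, hf'0] using littleO
  · have hf_at : HasDerivAt f (f' ‖z‖) ‖z‖ :=
      (hf ‖z‖ (norm_nonneg z)).hasDerivAt (Ici_mem_nhds (norm_pos_iff.2 hz))
    have gradient_eq : innerSL ℝ (radialField f' z) = f' ‖z‖ • ‖z‖⁻¹ • innerSL ℝ z := by
      rw [radialField, map_smul, smul_smul, div_eq_mul_inv]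
    rw [gradient_eq]
    exact hf_at.comp_hasFDerivAt z (hasFDerivAt_norm_of_ne_zero hz)

theorem abs_le_mul_of_abs_deriv_le {M R t : ℝ}
    (hf : ∀ t ∈ Ici (0 : ℝ), HasDerivWithinAt f (f' t) (Ici 0) t) (hf0 : f 0 = 0)
    (hM : ∀ t ∈ Icc 0 R, |f' t| ≤ M) (ht : t ∈ Icc 0 R) : |f t| ≤ M * t := by
  have mean_value := (convex_Icc 0 R).norm_image_sub_le_of_norm_hasDerivWithin_le
    (fun s hs => (hf s hs.1).mono Icc_subset_Ici_self) hM ⟨le_rfl, ht.1.trans ht.2⟩ ht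
  simpa [hf0, abs_of_nonneg ht.1] using mean_value

end RadialEnergy

section FirstVariation

variable {α H : Type*} [MeasurableSpace α] {μ : Measure α} [NormedAddCommGroup H]
  [InnerProductSpace ℝ H] {f f' : ℝ → ℝ} {z η τ : α → H} {A B C : ℝ}

theorem aestronglyMeasurable_radialField {g : ℝ → ℝ} (hg : ContinuousOn g (Ici 0))
    (hz : AEStronglyMeasurable z μ) :
    AEStronglyMeasurable (fun x => radialField g (z x)) μ := by
  have hgz : AEStronglyMeasurable (fun x => g ‖z x‖) μ :=
    (hg.comp_continuous continuous_norm norm_nonneg).comp_aestronglyMeasurable hz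
  exact (hgz.aemeasurable.div hz.norm.aemeasurable).aestronglyMeasurable.smul hz

theorem hasDerivAt_energy_density (hf : ∀ t ∈ Ici (0 : ℝ), HasDerivWithinAt f (f' t) (Ici 0) t)
    (hf'0 : f' 0 = 0) (p v q : H) (t : ℝ) :
    HasDerivAt (fun t : ℝ => f ‖p + t • v‖ - ⟪q, p + t • v⟫)
      ⟪radialField f' (p + t • v) - q, v⟫ t := by
  have segment : HasDerivAt (fun t : ℝ => p + t • v) v t := by
    simpa using ((hasDerivAt_id t).smul_const v).const_add p
  have energy := (hasFDerivAt_comp_norm hf hf'0 (p + t • v)).comp_hasDerivAt t segment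
  have load := (innerSL ℝ q).hasFDerivAt.comp_hasDerivAt t segment
  rw [inner_sub_left]
  exact energy.sub load

theorem integrable_energy_density
    (hf : ∀ t ∈ Ici (0 : ℝ), HasDerivWithinAt f (f' t) (Ici 0) t)
    (hf' : ContinuousOn f' (Ici 0)) (hf0 : f 0 = 0)
    (hz : Integrable z μ) (hzA : ∀ᵐ x ∂μ, ‖z x‖ ≤ A)
    (hτ : AEStronglyMeasurable τ μ) (hτC : ∀ᵐ x ∂μ, ‖τ x‖ ≤ C) :
    Integrable (fun x => f ‖z x‖ - ⟪τ x, z x⟫) μ := by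
  obtain ⟨M, hM⟩ := isCompact_Icc.exists_bound_of_continuousOn
    (hf'.mono (Icc_subset_Ici_self : Icc 0 A ⊆ Ici 0))
  have hfz : AEStronglyMeasurable (fun x => f ‖z x‖) μ :=
    (ContinuousOn.comp_continuous (fun t ht => (hf t ht).continuousWithinAt)
      continuous_norm norm_nonneg).comp_aestronglyMeasurable hz.1
  refine Integrable.sub ((hz.norm.const_mul M).mono' hfz ?_)
    ((hz.norm.const_mul C).mono' (hτ.inner hz.1) ?_)
  · filter_upwards [hzA] with x hx
    exact abs_le_mul_of_abs_deriv_le hf hf0 hM ⟨norm_nonneg _, hx⟩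
  · filter_upwards [hτC] with x hx
    exact (norm_inner_le_norm _ _).trans (by gcongr)

theorem hasDerivAt_integral_energy_density
    (hf : ∀ t ∈ Ici (0 : ℝ), HasDerivWithinAt f (f' t) (Ici 0) t)
    (hf' : ContinuousOn f' (Ici 0)) (hf0 : f 0 = 0) (hf'0 : f' 0 = 0)
    (hz : Integrable z μ) (hzA : ∀ᵐ x ∂μ, ‖z x‖ ≤ A)
    (hη : Integrable η μ) (hηB : ∀ᵐ x ∂μ, ‖η x‖ ≤ B)
    (hτ : AEStronglyMeasurable τ μ) (hτC : ∀ᵐ x ∂μ, ‖τ x‖ ≤ C) :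
    HasDerivAt (fun t : ℝ => ∫ x, (f ‖z x + t • η x‖ - ⟪τ x, z x + t • η x⟫) ∂μ)
      (∫ x, ⟪radialField f' (z x) - τ x, η x⟫ ∂μ) 0 := by
  obtain ⟨M, hM⟩ := isCompact_Icc.exists_bound_of_continuousOn
    (hf'.mono (Icc_subset_Ici_self : Icc 0 (A + B) ⊆ Ici 0))
  have hzη (t : ℝ) : AEStronglyMeasurable (fun x => z x + t • η x) μ :=
    hz.1.add (hη.1.const_smul t)
  have f_norm_continuous : Continuous fun w : H => f ‖w‖ :=
    ContinuousOn.comp_continuous (fun t ht => (hf t ht).continuousWithinAt)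
      continuous_norm norm_nonneg
  have derivative := (hasDerivAt_integral_of_dominated_loc_of_deriv_le
    (F := fun t x => f ‖z x + t • η x‖ - ⟪τ x, z x + t • η x⟫)
    (F' := fun t x => ⟪radialField f' (z x + t • η x) - τ x, η x⟫)
    (bound := fun x => (M + C) * ‖η x‖) (Metric.ball_mem_nhds (0 : ℝ) one_pos)
    (.of_forall fun t => (f_norm_continuous.comp_aestronglyMeasurable (hzη t)).sub
      (hτ.inner (hzη t)))
    (by simpa using integrable_energy_density hf hf' hf0 hz hzA hτ hτC)
    (((aestronglyMeasurable_radialField hf' (hzη 0)).sub hτ).inner hη.1) ?_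
    (hη.norm.const_mul _)
    (ae_of_all _ fun x t _ => hasDerivAt_energy_density hf hf'0 _ _ _ t)).2
  · simpa using derivative
  filter_upwards [hzA, hηB, hτC] with x hzx hηx hτx t ht
  have in_range : ‖z x + t • η x‖ ∈ Icc 0 (A + B) := by
    refine ⟨norm_nonneg _, (norm_add_le _ _).trans (add_le_add hzx ?_)⟩
    rw [norm_smul]
    exact (mul_le_of_le_one_left (norm_nonneg _) (mem_ball_zero_iff.1 ht).le).trans hηx
  calc ‖⟪radialField f' (z x + t • η x) - τ x, η x⟫‖
      ≤ ‖radialField f' (z x + t • η x) - τ x‖ * ‖η x‖ := norm_inner_le_norm _ _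
    _ ≤ (M + C) * ‖η x‖ := by
        gcongr
        refine (norm_sub_le _ _).trans (add_le_add ?_ hτx)
        exact (norm_radialField hf'0 _).trans_le (hM _ in_range)

end FirstVariation

section Frobenius

variable {ι κ : Type*}

/-- The identity map from matrices with the sup norm to matrices with the Frobenius norm, realised
as Euclidean tuples of Euclidean rows. -/
noncomputable def toFrobenius : (ι → κ → ℝ) ≃L[ℝ] PiLp 2 fun _ : ι => EuclideanSpace ℝ κ :=
  (ContinuousLinearEquiv.piCongrRight fun _ => (EuclideanSpace.equiv κ ℝ).symm).trans
    (PiLp.continuousLinearEquiv 2 ℝ fun _ => EuclideanSpace ℝ κ).symm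

theorem toFrobenius_apply (z : ι → κ → ℝ) (a : ι) (i : κ) : toFrobenius z a i = z a i :=
  rfl

variable [Fintype ι] [Fintype κ]

theorem mdot_eq_inner_toFrobenius (z w : ι → κ → ℝ) :
    mdot z w = ⟪toFrobenius z, toFrobenius w⟫ := by
  simp only [mdot, PiLp.inner_apply, toFrobenius_apply, RCLike.inner_apply, conj_trivial, mul_comm]

theorem mnorm_eq_norm_toFrobenius (z : ι → κ → ℝ) : mnorm z = ‖toFrobenius z‖ := by
  rw [mnorm, mdot_eq_inner_toFrobenius, norm_eq_sqrt_real_inner]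

variable {n N : ℕ} {f' : ℝ → ℝ}

theorem toFrobenius_Amap (f' : ℝ → ℝ) (z : Fin N → Fin n → ℝ) :
    toFrobenius (Amap f' z) = radialField f' (toFrobenius z) := by
  ext a i
  simp only [toFrobenius_apply, Amap, radialField, mnorm_eq_norm_toFrobenius, PiLp.smul_apply,
    smul_eq_mul]

theorem exists_lipschitzOnWith_Amap (hf' : LocallyLipschitzOn (Ici 0) f') (hf'0 : f' 0 = 0)
    (R : ℝ) : ∃ K, LipschitzOnWith K (Amap f' : (Fin N → Fin n → ℝ) → _)
      (Metric.closedBall 0 R) := by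
  let Φ : (Fin N → Fin n → ℝ) ≃L[ℝ] _ := toFrobenius
  have mapsTo : MapsTo Φ (Metric.closedBall 0 R)
      (Metric.closedBall 0 (‖Φ.toContinuousLinearMap‖ * R)) :=
    fun z hz => mem_closedBall_zero_iff.2 <|
      Φ.toContinuousLinearMap.le_opNorm_of_le (mem_closedBall_zero_iff.1 hz)
  obtain ⟨K, hK⟩ := (hf'.mono Icc_subset_Ici_self).exists_lipschitzOnWith_of_compact
    (isCompact_Icc (b := ‖Φ.toContinuousLinearMap‖ * R))
  have conjugate : Amap f' = Φ.symm ∘ radialField f' ∘ Φ := by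
    ext1 z
    exact Φ.injective <| by simp [Φ, toFrobenius_Amap]
  rw [conjugate]
  exact ⟨_, Φ.symm.lipschitz.comp_lipschitzOnWith
    ((lipschitzOnWith_radialField hK hf'0).comp Φ.lipschitz.lipschitzOnWith mapsTo)⟩

end Frobenius

section IntegrationByParts

variable {V : Type*} [NormedAddCommGroup V] [NormedSpace ℝ V] {φ ψ : V → ℝ}

theorem continuous_fderiv_apply_const (hφ : ContDiff ℝ 1 φ) (v : V) :
    Continuous fun x => fderiv ℝ φ x v :=
  (hφ.continuous_fderiv one_ne_zero).clm_apply continuous_const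

theorem setIntegral_mul_fderiv_eq_neg [FiniteDimensional ℝ V] [MeasurableSpace V] [BorelSpace V]
    {μ : Measure V} [μ.IsAddHaarMeasure] {Ω : Set V} (hφ : ContDiff ℝ 1 φ) (hψ : ContDiff ℝ 1 ψ)
    (hψc : HasCompactSupport ψ) (hψΩ : tsupport ψ ⊆ Ω) (v : V) :
    ∫ x in Ω, φ x * fderiv ℝ ψ x v ∂μ = -∫ x in Ω, fderiv ℝ φ x v * ψ x ∂μ := by
  have hψ'c : HasCompactSupport fun x => fderiv ℝ ψ x v := hψc.fderiv_apply ℝ v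
  have by_parts := integral_mul_fderiv_eq_neg_fderiv_mul_of_integrable (μ := μ) (v := v)
    (((continuous_fderiv_apply_const hφ v).mul
      hψ.continuous).integrable_of_hasCompactSupport hψc.mul_left)
    ((hφ.continuous.mul
      (continuous_fderiv_apply_const hψ v)).integrable_of_hasCompactSupport hψ'c.mul_left)
    ((hφ.continuous.mul hψ.continuous).integrable_of_hasCompactSupport hψc.mul_left)
    (fun x _ => hφ.differentiable one_ne_zero x) (fun x _ => hψ.differentiable one_ne_zero x)
  rwa [setIntegral_eq_integral_of_forall_compl_eq_zero,
    setIntegral_eq_integral_of_forall_compl_eq_zero]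
  · intro x hx
    rw [image_eq_zero_of_notMem_tsupport fun h => hx (hψΩ h), mul_zero]
  · intro x hx
    rw [fderiv_of_notMem_tsupport (𝕜 := ℝ) fun h => hx (hψΩ h), zero_apply, mul_zero]

end IntegrationByParts

section WeakDerivative

variable {n : ℕ} {ι : Type*} {Ω : Set (EVec n)}

/-- The Jacobian matrix of a tuple-valued map, the classical counterpart of the weak gradient in
`HasWeakDerivOn`. -/
noncomputable def jacobian (v : EVec n → ι → ℝ) (x : EVec n) : ι → Fin n → ℝ :=
  fun a i => fderiv ℝ (fun y => v y a) x (EuclideanSpace.single i 1)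

theorem hasCompactSupport_jacobian {v : EVec n → ι → ℝ} (hvc : HasCompactSupport v) :
    HasCompactSupport (jacobian v) := by
  refine HasCompactSupport.intro' hvc isClosed_closure fun x hx => ?_
  ext a i
  have component : tsupport (fun y => v y a) ⊆ tsupport v :=
    tsupport_comp_subset (g := fun w : ι → ℝ => w a) rfl v
  simp [jacobian, fderiv_of_notMem_tsupport (𝕜 := ℝ) fun h => hx (component h)]

variable [Fintype ι] {u v : EVec n → ι → ℝ} {Du Dv : EVec n → ι → Fin n → ℝ}

theorem continuous_jacobian (hv : ContDiff ℝ 1 v) : Continuous (jacobian v) :=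
  continuous_pi fun a => continuous_pi fun _ =>
    continuous_fderiv_apply_const (contDiff_pi.1 hv a) _

namespace HasWeakDerivOn

theorem add (hu : HasWeakDerivOn Ω u Du) (hv : HasWeakDerivOn Ω v Dv) :
    HasWeakDerivOn Ω (fun x => u x + v x) (fun x => Du x + Dv x) := by
  refine ⟨hu.1.add hv.1, hu.2.1.add hv.2.1, fun φ hφ hφc hφΩ a i => ?_⟩
  have integrable_mul {g h : EVec n → ℝ} (hg : Integrable g (volume.restrict Ω))
      (hh : Continuous h) (hhc : HasCompactSupport h) :
      Integrable (fun x => g x * h x) (volume.restrict Ω) :=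
    hg.locallyIntegrable.integrable_smul_right_of_hasCompactSupport hh hhc
  have hφ' := continuous_fderiv_apply_const hφ (EuclideanSpace.single i 1)
  have hφ'c := hφc.fderiv_apply ℝ (EuclideanSpace.single i 1)
  simp only [Pi.add_apply, add_mul]
  rw [integral_add (integrable_mul (hu.1.eval a) hφ' hφ'c) (integrable_mul (hv.1.eval a) hφ' hφ'c),
    integral_add (integrable_mul ((hu.2.1.eval a).eval i) hφ.continuous hφc)
      (integrable_mul ((hv.2.1.eval a).eval i) hφ.continuous hφc),
    hu.2.2 φ hφ hφc hφΩ, hv.2.2 φ hφ hφc hφΩ, neg_add]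

theorem const_smul (hu : HasWeakDerivOn Ω u Du) (t : ℝ) :
    HasWeakDerivOn Ω (fun x => t • u x) (fun x => t • Du x) := by
  refine ⟨hu.1.smul t, hu.2.1.smul t, fun φ hφ hφc hφΩ a i => ?_⟩
  simp only [Pi.smul_apply, smul_eq_mul, mul_assoc]
  rw [integral_const_mul, integral_const_mul, hu.2.2 φ hφ hφc hφΩ, mul_neg]

end HasWeakDerivOn

theorem hasWeakDerivOn_jacobian (hv : ContDiff ℝ 1 v) (hvc : HasCompactSupport v) :
    HasWeakDerivOn Ω v (jacobian v) :=
  ⟨(hv.continuous.integrable_of_hasCompactSupport hvc).integrableOn,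
    ((continuous_jacobian hv).integrable_of_hasCompactSupport
      (hasCompactSupport_jacobian hvc)).integrableOn,
    fun _ hφ hφc hφΩ a i =>
      setIntegral_mul_fderiv_eq_neg (contDiff_pi.1 hv a) hφ hφc hφΩ (EuclideanSpace.single i 1)⟩

end WeakDerivative

section EulerLagrange

variable {n N : ℕ} {Ω : Set (EVec n)} {f f' : ℝ → ℝ} {T₀ : EVec n → Fin N → Fin n → ℝ}
  {u v : EVec n → Fin N → ℝ} {Du Dv : EVec n → Fin N → Fin n → ℝ} {A B C : ℝ}

theorem hasDerivAt_FF (hf : ∀ t ∈ Ici (0 : ℝ), HasDerivWithinAt f (f' t) (Ici 0) t)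
    (hf' : ContinuousOn f' (Ici 0)) (hf0 : f 0 = 0) (hf'0 : f' 0 = 0)
    (hT : AEStronglyMeasurable T₀ (volume.restrict Ω))
    (hTC : ∀ᵐ x ∂volume.restrict Ω, ‖T₀ x‖ ≤ C)
    (hDu : IntegrableOn Du Ω) (hDuA : ∀ᵐ x ∂volume.restrict Ω, ‖Du x‖ ≤ A)
    (hDv : IntegrableOn Dv Ω) (hDvB : ∀ᵐ x ∂volume.restrict Ω, ‖Dv x‖ ≤ B) :
    HasDerivAt (fun t : ℝ => FF Ω f T₀ fun x => Du x + t • Dv x)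
      (∫ x in Ω, mdot (Amap f' (Du x) - T₀ x) (Dv x)) 0 := by
  let Φ : (Fin N → Fin n → ℝ) →L[ℝ] _ := toFrobenius.toContinuousLinearMap
  have bound {w : EVec n → Fin N → Fin n → ℝ} {c : ℝ}
      (hw : ∀ᵐ x ∂volume.restrict Ω, ‖w x‖ ≤ c) :
      ∀ᵐ x ∂volume.restrict Ω, ‖toFrobenius (w x)‖ ≤ ‖Φ‖ * c :=
    hw.mono fun x hx => Φ.le_opNorm_of_le hx
  simp only [FF, mdot_eq_inner_toFrobenius, mnorm_eq_norm_toFrobenius, map_add, map_sub, map_smul,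
    toFrobenius_Amap]
  exact hasDerivAt_integral_energy_density hf hf' hf0 hf'0
    (Φ.integrable_comp hDu) (bound hDuA) (Φ.integrable_comp hDv) (bound hDvB)
    (Φ.continuous.comp_aestronglyMeasurable hT) (bound hTC)

theorem integral_mdot_jacobian_eq_zero
    (hf : ∀ t ∈ Ici (0 : ℝ), HasDerivWithinAt f (f' t) (Ici 0) t)
    (hf' : ContinuousOn f' (Ici 0)) (hf0 : f 0 = 0) (hf'0 : f' 0 = 0)
    (hT : AEStronglyMeasurable T₀ (volume.restrict Ω))
    (hTC : ∀ᵐ x ∂volume.restrict Ω, ‖T₀ x‖ ≤ C)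
    (hu : HasWeakDerivOn Ω u Du) (hDuA : ∀ᵐ x ∂volume.restrict Ω, ‖Du x‖ ≤ A)
    (hmin : ∀ w Dw, HasWeakDerivOn Ω w Dw → FF Ω f T₀ Du ≤ FF Ω f T₀ Dw)
    (hv : ContDiff ℝ 1 v) (hvc : HasCompactSupport v) :
    ∫ x in Ω, mdot (Amap f' (Du x) - T₀ x) (jacobian v x) = 0 := by
  have hDv : HasWeakDerivOn Ω v (jacobian v) := hasWeakDerivOn_jacobian hv hvc
  obtain ⟨B, hB⟩ := (hasCompactSupport_jacobian hvc).exists_bound_of_continuous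
    (continuous_jacobian hv)
  have minimum_at_zero : IsLocalMin (fun t : ℝ => FF Ω f T₀ fun x => Du x + t • jacobian v x) 0 :=
    .of_forall fun t => by simpa using hmin _ _ (hu.add (hDv.const_smul t))
  exact minimum_at_zero.hasDerivAt_eq_zero <|
    hasDerivAt_FF hf hf' hf0 hf'0 hT hTC hu.2.1 hDuA hDv.2.1 (ae_of_all _ hB)

end EulerLagrange

section Divergence

variable {V : Type*} [NormedAddCommGroup V] [InnerProductSpace ℝ V]

/-- The divergence of a vector field: the trace of its derivative. -/
noncomputable def divergence (X : V → V) (x : V) : ℝ :=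
  LinearMap.trace ℝ V (fderiv ℝ X x)

variable {X Y : V → V} {x : V} {K : NNReal}

theorem divergence_sub (hX : DifferentiableAt ℝ X x) (hY : DifferentiableAt ℝ Y x) :
    divergence (X - Y) x = divergence X x - divergence Y x := by
  simp only [divergence, fderiv_sub hX hY, ContinuousLinearMap.toLinearMap_sub, map_sub]

theorem divergence_congr (h : X =ᶠ[𝓝 x] Y) : divergence X x = divergence Y x := by
  rw [divergence, divergence, h.fderiv_eq]

theorem divergence_eq_sum_fderiv {n : ℕ} {X : EVec n → EVec n} {x : EVec n}
    (hX : DifferentiableAt ℝ X x) :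
    divergence X x = ∑ i, fderiv ℝ (fun y => X y i) x (EuclideanSpace.single i 1) := by
  rw [divergence, LinearMap.trace_eq_sum_inner _ (EuclideanSpace.basisFun (Fin n) ℝ)]
  refine Finset.sum_congr rfl fun i _ => ?_
  have component : HasFDerivAt (fun y => X y i) ((EuclideanSpace.proj i).comp (fderiv ℝ X x)) x :=
    (EuclideanSpace.proj i : EVec n →L[ℝ] ℝ).hasFDerivAt.comp x hX.hasFDerivAt
  simp [component.fderiv, EuclideanSpace.inner_single_left]

variable [FiniteDimensional ℝ V] [MeasurableSpace V] [BorelSpace V]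

theorem locallyIntegrable_inner_fderiv (hX : LipschitzWith K X) (v w : V) :
    LocallyIntegrable fun x => ⟪v, fderiv ℝ X x w⟫ := by
  have measurable : Measurable fun x => ⟪v, fderiv ℝ X x w⟫ :=
    measurable_const.inner (measurable_fderiv_apply_const ℝ X w)
  refine (locallyIntegrable_const (‖v‖ * (K * ‖w‖))).mono measurable.aestronglyMeasurable
    (ae_of_all _ fun x => ?_)
  calc ‖⟪v, fderiv ℝ X x w⟫‖ ≤ ‖v‖ * ‖fderiv ℝ X x w‖ := norm_inner_le_norm _ _
    _ ≤ ‖v‖ * (K * ‖w‖) := by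
        gcongr
        exact (fderiv ℝ X x).le_of_opNorm_le (norm_fderiv_le_of_lipschitz ℝ hX) w
    _ ≤ ‖‖v‖ * (K * ‖w‖)‖ := le_abs_self _

theorem locallyIntegrable_divergence (hX : LipschitzWith K X) :
    LocallyIntegrable (divergence X) := by
  let b := stdOrthonormalBasis ℝ V
  have expansion : divergence X = fun x => ∑ i, ⟪b i, fderiv ℝ X x (b i)⟫ :=
    funext fun x => LinearMap.trace_eq_sum_inner _ b
  rw [expansion]
  exact locallyIntegrable_finsetSum _ fun i _ => locallyIntegrable_inner_fderiv hX (b i) (b i)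

theorem integral_mul_inner_fderiv_eq_neg (hX : LipschitzWith K X) {g : V → ℝ}
    (hg : ContDiff ℝ 1 g) (hgc : HasCompactSupport g) (v w : V) :
    ∫ x, g x * ⟪v, fderiv ℝ X x w⟫ = -∫ x, ⟪v, X x⟫ * fderiv ℝ g x w := by
  obtain ⟨D, hD⟩ := hg.lipschitzWith_of_hasCompactSupport hgc one_ne_zero
  have component_lipschitz : LipschitzWith (‖innerSL ℝ v‖₊ * K) fun x => ⟪v, X x⟫ :=
    (innerSL ℝ v).lipschitz.comp hX
  have component_lineDeriv : ∀ᵐ x, lineDeriv ℝ (fun y => ⟪v, X y⟫) x w = ⟪v, fderiv ℝ X x w⟫ := by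
    filter_upwards [hX.ae_differentiableAt] with x hx
    exact (((innerSL ℝ v).hasFDerivAt.comp x hx.hasFDerivAt).hasLineDerivAt w).lineDeriv
  calc ∫ x, g x * ⟪v, fderiv ℝ X x w⟫
      = ∫ x, lineDeriv ℝ (fun y => ⟪v, X y⟫) x w * g x := by
        refine integral_congr_ae (component_lineDeriv.mono fun x hx => ?_)
        simp only [hx, mul_comm]
    _ = ∫ x, lineDeriv ℝ g x (-w) * ⟪v, X x⟫ :=
        component_lipschitz.integral_lineDeriv_mul_eq hD hgc w
    _ = -∫ x, ⟪v, X x⟫ * fderiv ℝ g x w := by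
        rw [← integral_neg]
        congr with x
        rw [(hg.differentiable one_ne_zero x).lineDeriv_eq_fderiv, map_neg]
        ring

theorem integral_mul_divergence (hX : LipschitzWith K X) {g : V → ℝ} (hg : ContDiff ℝ 1 g)
    (hgc : HasCompactSupport g) :
    ∫ x, g x * divergence X x = -∫ x, fderiv ℝ g x (X x) := by
  let b := stdOrthonormalBasis ℝ V
  have left_integrable (i) : Integrable fun x => g x * ⟪b i, fderiv ℝ X x (b i)⟫ :=
    (locallyIntegrable_inner_fderiv hX _ _).integrable_smul_left_of_hasCompactSupport
      hg.continuous hgc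
  have right_integrable (i) : Integrable fun x => ⟪b i, X x⟫ * fderiv ℝ g x (b i) :=
    ((continuous_const.inner hX.continuous).mul
      (continuous_fderiv_apply_const hg _)).integrable_of_hasCompactSupport
        (hgc.fderiv_apply ℝ (b i)).mul_left
  calc ∫ x, g x * divergence X x = ∫ x, ∑ i, g x * ⟪b i, fderiv ℝ X x (b i)⟫ := by
        simp only [divergence, LinearMap.trace_eq_sum_inner _ b, Finset.mul_sum]; rfl
    _ = ∑ i, -∫ x, ⟪b i, X x⟫ * fderiv ℝ g x (b i) := by
        rw [integral_finsetSum _ fun i _ => left_integrable i]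
        simp only [integral_mul_inner_fderiv_eq_neg hX hg hgc]
    _ = -∫ x, ∑ i, ⟪b i, X x⟫ * fderiv ℝ g x (b i) := by
        rw [Finset.sum_neg_distrib, integral_finsetSum _ fun i _ => right_integrable i]
    _ = -∫ x, fderiv ℝ g x (X x) := by
        congr with x
        conv_rhs => rw [← b.sum_repr' (X x), map_sum]
        simp only [map_smul, smul_eq_mul]

end Divergence

section WeaklySolenoidal

variable {V : Type*} [NormedAddCommGroup V] [InnerProductSpace ℝ V] [FiniteDimensional ℝ V]
  [MeasurableSpace V] [BorelSpace V]

/-- The vector field `X` is divergence free in `Ω` with vanishing normal component on `∂Ω`, in the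
weak sense: it is orthogonal to the gradients of all test functions, which are not required to
vanish on `∂Ω`. -/
def IsWeaklySolenoidalOn (Ω : Set V) (X : V → V) : Prop :=
  ∀ φ : V → ℝ, ContDiff ℝ 1 φ → HasCompactSupport φ → ∫ x in Ω, fderiv ℝ φ x (X x) = 0

namespace IsWeaklySolenoidalOn

variable {Ω : Set V} {X Y : V → V} {K : NNReal}

theorem congr (hX : IsWeaklySolenoidalOn Ω X) (hΩ : MeasurableSet Ω) (hXY : EqOn X Y Ω) :
    IsWeaklySolenoidalOn Ω Y := fun φ hφ hφc => by
  rw [← hX φ hφ hφc]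
  exact setIntegral_congr_fun hΩ fun x hx => by simp only [hXY hx]

theorem ae_divergence_eq_zero_of_lipschitzWith (h : IsWeaklySolenoidalOn Ω X) (hΩ : IsOpen Ω)
    (hX : LipschitzWith K X) : ∀ᵐ x, x ∈ Ω → divergence X x = 0 := by
  refine hΩ.ae_eq_zero_of_integral_contDiff_smul_eq_zero
    ((locallyIntegrable_divergence hX).locallyIntegrableOn Ω) fun g hg hgc hgΩ => ?_
  have hg1 : ContDiff ℝ 1 g := hg.of_le (by simp)
  simp only [smul_eq_mul, integral_mul_divergence hX hg1 hgc, neg_eq_zero]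
  rw [← h g hg1 hgc, setIntegral_eq_integral_of_forall_compl_eq_zero]
  intro x hx
  rw [fderiv_of_notMem_tsupport (𝕜 := ℝ) fun hxg => hx (hgΩ hxg), zero_apply]

theorem ae_divergence_eq_zero (h : IsWeaklySolenoidalOn Ω X) (hΩ : IsOpen Ω)
    (hX : LipschitzOnWith K X Ω) : ∀ᵐ x, x ∈ Ω → divergence X x = 0 := by
  obtain ⟨W, hW, hXW⟩ := hX.extend_finite_dimension
  filter_upwards [(h.congr hΩ.measurableSet hXW).ae_divergence_eq_zero_of_lipschitzWith hΩ hW]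
    with x hx hxΩ
  rw [← hx hxΩ]
  exact divergence_congr (hXW.eventuallyEq_of_mem (hΩ.mem_nhds hxΩ))

theorem ae_sum_fderiv_eq {n : ℕ} {Ω : Set (EVec n)} {S T : EVec n → EVec n} {L : NNReal}
    (h : IsWeaklySolenoidalOn Ω (S - T)) (hΩ : IsOpen Ω) (hS : LipschitzOnWith K S Ω)
    (hT : LipschitzOnWith L T Ω) :
    ∀ᵐ x ∂volume.restrict Ω,
      (∀ i, DifferentiableAt ℝ (fun y => S y i) x ∧ DifferentiableAt ℝ (fun y => T y i) x) ∧
      ∑ i, fderiv ℝ (fun y => S y i) x (EuclideanSpace.single i 1) =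
        ∑ i, fderiv ℝ (fun y => T y i) x (EuclideanSpace.single i 1) := by
  rw [ae_restrict_iff' hΩ.measurableSet]
  filter_upwards [h.ae_divergence_eq_zero hΩ (hS.sub hT), hS.ae_differentiableWithinAt_of_mem,
    hT.ae_differentiableWithinAt_of_mem] with x hdiv hSx hTx hx
  have hS' : DifferentiableAt ℝ S x := (hSx hx).differentiableAt (hΩ.mem_nhds hx)
  have hT' : DifferentiableAt ℝ T x := (hTx hx).differentiableAt (hΩ.mem_nhds hx)
  refine ⟨fun i => ⟨differentiableAt_euclidean.1 hS' i, differentiableAt_euclidean.1 hT' i⟩, ?_⟩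
  rw [← divergence_eq_sum_fderiv hS', ← divergence_eq_sum_fderiv hT', ← sub_eq_zero,
    ← divergence_sub hS' hT']
  exact hdiv hx

end IsWeaklySolenoidalOn

end WeaklySolenoidal

section BlowUp

theorem tendsto_setIntegral_of_tendsto_measure_symmDiff {α ι E : Type*} [MeasurableSpace α]
    [NormedAddCommGroup E] [NormedSpace ℝ E] {μ : Measure α} {l : Filter ι} {S : ι → Set α}
    {H : Set α} {G : α → E} (hG : Integrable G μ) (hS : ∀ᶠ j in l, MeasurableSet (S j))
    (hH : MeasurableSet H) (hSH : Tendsto (fun j => μ (symmDiff (S j) H)) l (𝓝 0)) :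
    Tendsto (fun j => ∫ x in S j, G x ∂μ) l (𝓝 (∫ x in H, G x ∂μ)) := by
  have gained : Tendsto (fun j => ∫ x in S j \ H, G x ∂μ) l (𝓝 0) :=
    hG.tendsto_setIntegral_nhds_zero (tendsto_of_tendsto_of_tendsto_of_le_of_le
      tendsto_const_nhds hSH (fun _ => zero_le) fun _ => measure_mono subset_union_left)
  have lost : Tendsto (fun j => ∫ x in H \ S j, G x ∂μ) l (𝓝 0) :=
    hG.tendsto_setIntegral_nhds_zero (tendsto_of_tendsto_of_tendsto_of_le_of_le
      tendsto_const_nhds hSH (fun _ => zero_le) fun _ => measure_mono subset_union_right)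
  have balance : ∀ᶠ j in l, (∫ x in H, G x ∂μ) + ∫ x in S j \ H, G x ∂μ - ∫ x in H \ S j, G x ∂μ
      = ∫ x in S j, G x ∂μ := by
    filter_upwards [hS] with j hj
    rw [← integral_inter_add_sdiff hj hG.integrableOn,
      ← integral_inter_add_sdiff (s := S j) hH hG.integrableOn, inter_comm H]
    abel
  simpa using ((tendsto_const_nhds.add gained).sub lost).congr' balance

variable {V : Type*} [NormedAddCommGroup V] [InnerProductSpace ℝ V] {X : V → V} {x : V} {r : ℝ}

/-- The map `z ↦ x + r z`, which blows up the ball of radius `r` around `x` to the unit ball. -/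
def blowUp (x : V) (r : ℝ) (z : V) : V := x + r • z

theorem continuous_blowUp : Continuous (blowUp x r) := by unfold blowUp; fun_prop

theorem blowUp_preimage_ball (hr : 0 < r) (R : ℝ) :
    blowUp x r ⁻¹' Metric.ball x (r * R) = Metric.ball 0 R := by
  ext z
  simp [blowUp, norm_smul, abs_of_pos hr, mul_lt_mul_iff_right₀ hr]

theorem inner_blowUp_sub (ν z : V) : ⟪ν, blowUp x r z - x⟫ = r * ⟪ν, z⟫ := by
  rw [blowUp, add_sub_cancel_left, inner_smul_right]

theorem tendstoLocallyUniformly_comp_blowUp (hX : Continuous X) :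
    TendstoLocallyUniformly (fun r => X ∘ blowUp x r) (fun _ => X x) (𝓝[>] 0) := by
  rw [tendstoLocallyUniformly_iff_forall_tendsto]
  intro z
  have jointly_continuous : Continuous fun p : ℝ × V => (X x, X (blowUp x p.1 p.2)) := by
    unfold blowUp; fun_prop
  have limit := jointly_continuous.tendsto (0, z)
  rw [blowUp, zero_smul, add_zero, nhds_prod_eq] at limit
  exact (limit.mono_left (prod_mono_left _ nhdsWithin_le_nhds)).mono_right (nhds_le_uniformity _)

theorem hasCompactSupport_fderiv_apply {φ : V → ℝ} (hφc : HasCompactSupport φ) (Z : V → V) :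
    HasCompactSupport fun z => fderiv ℝ φ z (Z z) :=
  (hφc.fderiv ℝ).mono fun z hz h => hz (by simp only [h, zero_apply])

variable [FiniteDimensional ℝ V] [MeasurableSpace V] [BorelSpace V] {Ω : Set V}

theorem volume_blowUp_preimage (hr : 0 < r) (A : Set V) :
    volume (blowUp x r ⁻¹' A) = ENNReal.ofReal |(r ^ Module.finrank ℝ V)⁻¹| * volume A := by
  rw [show blowUp x r = (x + ·) ∘ (r • ·) from rfl, preimage_comp,
    Measure.addHaar_preimage_smul _ hr.ne', measure_preimage_add]

theorem volume_blowUp_preimage_eq_div_mul (hr : 0 < r) {R : ℝ} (hR : 0 < R) (A : Set V) :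
    volume (blowUp x r ⁻¹' A) =
      volume A / volume (Metric.ball x (r * R)) * volume (Metric.ball (0 : V) R) := by
  have ball_ne_zero : volume (Metric.ball x (r * R)) ≠ 0 :=
    (Metric.measure_ball_pos volume x (by positivity)).ne'
  rw [← blowUp_preimage_ball hr R, volume_blowUp_preimage hr, volume_blowUp_preimage hr,
    mul_left_comm, ENNReal.div_mul_cancel ball_ne_zero measure_ball_lt_top.ne]

theorem tendsto_setIntegral_of_hasCompactSupport {ι : Type*} {l : Filter ι} {S : ι → Set V}
    {H : Set V} {G : V → ℝ} (hG : Integrable G) (hGc : HasCompactSupport G)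
    (hS : ∀ᶠ j in l, MeasurableSet (S j)) (hH : MeasurableSet H)
    (hSH : ∀ R > 0, Tendsto (fun j => volume (symmDiff (S j) H ∩ Metric.ball 0 R)) l (𝓝 0)) :
    Tendsto (fun j => ∫ x in S j, G x) l (𝓝 (∫ x in H, G x)) := by
  obtain ⟨R, hR, hGR⟩ := hGc.isCompact.isBounded.subset_ball_lt 0 0
  have localise (s : Set V) : ∫ x in s, G x ∂volume.restrict (Metric.ball 0 R) = ∫ x in s, G x := by
    rw [← Measure.restrict_comm measurableSet_ball]
    refine setIntegral_eq_integral_of_forall_compl_eq_zero fun x hx => ?_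
    exact image_eq_zero_of_notMem_tsupport fun hxG => hx (hGR hxG)
  have hSR : Tendsto (fun j => volume.restrict (Metric.ball 0 R) (symmDiff (S j) H)) l (𝓝 0) := by
    simpa only [Measure.restrict_apply' measurableSet_ball] using hSH R hR
  simpa only [localise] using
    tendsto_setIntegral_of_tendsto_measure_symmDiff hG.restrict hS hH hSR

namespace IsWeaklySolenoidalOn

theorem comp_blowUp (h : IsWeaklySolenoidalOn Ω X) (hΩ : MeasurableSet Ω) (hr : 0 < r) :
    IsWeaklySolenoidalOn (blowUp x r ⁻¹' Ω) (X ∘ blowUp x r) := fun φ hφ hφc => by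
  let ψ : V → ℝ := fun y => φ (r⁻¹ • (y - x))
  have hψ : ContDiff ℝ 1 ψ := hφ.comp (by fun_prop)
  have hψc : HasCompactSupport ψ :=
    hφc.comp_homeomorph ((Homeomorph.subRight x).trans (Homeomorph.smulOfNeZero _ (by positivity)))
  have chain_rule (z v : V) : fderiv ℝ φ z v = r * fderiv ℝ ψ (blowUp x r z) v := by
    have hφψ : φ = ψ ∘ blowUp x r := by
      ext z; simp [ψ, blowUp, inv_smul_smul₀ hr.ne']
    have hblow : HasFDerivAt (blowUp x r) (r • ContinuousLinearMap.id ℝ V) z :=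
      ((hasFDerivAt_id z).const_smul r).const_add x
    conv_lhs => rw [hφψ]
    rw [((hψ.differentiable one_ne_zero _).hasFDerivAt.comp z hblow).fderiv]
    simp
  calc ∫ z in blowUp x r ⁻¹' Ω, fderiv ℝ φ z (X (blowUp x r z))
      = r * ∫ z, Ω.indicator (fun y => fderiv ℝ ψ y (X y)) (x + r • z) := by
        simp only [chain_rule, integral_const_mul]
        rw [← integral_indicator (continuous_blowUp.measurable hΩ)]
        rfl
    _ = 0 := by
        rw [Measure.integral_comp_smul volume
            (fun y => Ω.indicator (fun y => fderiv ℝ ψ y (X y)) (x + y)) r,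
          integral_add_left_eq_self, integral_indicator hΩ, h ψ hψ hψc, smul_zero, mul_zero]

theorem norm_setIntegral_fderiv_le {S : Set V} {Z Z₀ : V → V} (h : IsWeaklySolenoidalOn S Z)
    (hZ : Continuous Z) (hZ₀ : Continuous Z₀) {φ : V → ℝ} (hφ : ContDiff ℝ 1 φ)
    (hφc : HasCompactSupport φ) {ε : ℝ} (hε : ∀ z ∈ tsupport φ, ‖Z₀ z - Z z‖ ≤ ε) :
    ‖∫ z in S, fderiv ℝ φ z (Z₀ z)‖ ≤ (∫ z, ‖fderiv ℝ φ z‖) * ε := by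
  have hφ' : Continuous (fderiv ℝ φ) := hφ.continuous_fderiv one_ne_zero
  have integrable {W : V → V} (hW : Continuous W) : Integrable fun z => fderiv ℝ φ z (W z) :=
    (hφ'.clm_apply hW).integrable_of_hasCompactSupport (hasCompactSupport_fderiv_apply hφc W)
  have bound_integrable : Integrable fun z => ‖fderiv ℝ φ z‖ * ε :=
    (hφ'.norm.integrable_of_hasCompactSupport (hφc.fderiv ℝ).norm).mul_const ε
  have pointwise (z : V) : ‖fderiv ℝ φ z (Z₀ z - Z z)‖ ≤ ‖fderiv ℝ φ z‖ * ε := by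
    by_cases hz : z ∈ tsupport φ
    · exact (fderiv ℝ φ z).le_opNorm_of_le (hε z hz)
    · simp [fderiv_of_notMem_tsupport (𝕜 := ℝ) hz]
  calc ‖∫ z in S, fderiv ℝ φ z (Z₀ z)‖ = ‖∫ z in S, fderiv ℝ φ z (Z₀ z - Z z)‖ := by
        simp only [map_sub]
        rw [integral_sub (integrable hZ₀).integrableOn (integrable hZ).integrableOn, h φ hφ hφc,
          sub_zero]
    _ ≤ ∫ z in S, ‖fderiv ℝ φ z‖ * ε :=
        norm_integral_le_of_norm_le bound_integrable.integrableOn (ae_of_all _ pointwise)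
    _ ≤ ∫ z, ‖fderiv ℝ φ z‖ * ε :=
        setIntegral_le_integral bound_integrable
          (ae_of_all _ fun z => (norm_nonneg _).trans (pointwise z))
    _ = (∫ z, ‖fderiv ℝ φ z‖) * ε := integral_mul_const ε _

theorem of_tendsto {ι : Type*} {l : Filter ι} [l.NeBot] {S : ι → Set V} {H : Set V}
    {Z : ι → V → V} {Z₀ : V → V} (h : ∀ᶠ j in l, IsWeaklySolenoidalOn (S j) (Z j))
    (hS : ∀ᶠ j in l, MeasurableSet (S j)) (hH : MeasurableSet H)
    (hSH : ∀ R > 0, Tendsto (fun j => volume (symmDiff (S j) H ∩ Metric.ball 0 R)) l (𝓝 0))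
    (hZcont : ∀ᶠ j in l, Continuous (Z j)) (hZ : TendstoLocallyUniformly Z Z₀ l) :
    IsWeaklySolenoidalOn H Z₀ := fun φ hφ hφc => by
  have hZ₀ : Continuous Z₀ := hZ.continuous hZcont.frequently
  let G := fun z => fderiv ℝ φ z (Z₀ z)
  have hG : Continuous G := (hφ.continuous_fderiv one_ne_zero).clm_apply hZ₀
  have hGc : HasCompactSupport G := hasCompactSupport_fderiv_apply hφc Z₀
  have to_limit : Tendsto (fun j => ∫ z in S j, G z) l (𝓝 (∫ z in H, G z)) :=
    tendsto_setIntegral_of_hasCompactSupport (hG.integrable_of_hasCompactSupport hGc) hGc hS hH hSH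
  have to_zero : Tendsto (fun j => ∫ z in S j, G z) l (𝓝 0) := by
    rw [Metric.tendsto_nhds]
    intro ε hε
    set C := ∫ z, ‖fderiv ℝ φ z‖
    have C_add_one_pos : 0 < C + 1 :=
      add_pos_of_nonneg_of_pos (integral_nonneg fun _ => norm_nonneg _) one_pos
    have uniform := Metric.tendstoUniformlyOn_iff.1
      (tendstoLocallyUniformly_iff_forall_isCompact.1 hZ (tsupport φ) hφc.isCompact)
      (ε / (C + 1)) (div_pos hε C_add_one_pos)
    filter_upwards [h, hZcont, uniform] with j hj hjcont hjε
    rw [dist_zero_right]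
    calc ‖∫ z in S j, G z‖ ≤ C * (ε / (C + 1)) :=
          hj.norm_setIntegral_fderiv_le hjcont hZ₀ hφ hφc fun z hz =>
            (dist_eq_norm (Z₀ z) (Z j z)).ge.trans (hjε z hz).le
      _ < ε := by
          rw [mul_div_assoc', div_lt_iff₀ C_add_one_pos]
          linarith
  exact tendsto_nhds_unique to_limit to_zero

end IsWeaklySolenoidalOn

end BlowUp

section HalfSpace

theorem hasDerivAt_max_zero_sq (s : ℝ) :
    HasDerivAt (fun t : ℝ => max t 0 ^ 2) (2 * max s 0) s := by
  rcases lt_trichotomy s 0 with hs | rfl | hs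
  · rw [max_eq_right hs.le, mul_zero]
    refine (hasDerivAt_const s (0 : ℝ)).congr_of_eventuallyEq ?_
    filter_upwards [Iio_mem_nhds hs] with t ht
    rw [max_eq_right (le_of_lt ht), zero_pow two_ne_zero]
  · have quadratic : (fun t : ℝ => max t 0 ^ 2) =O[𝓝 0] fun t => ‖t - 0‖ ^ 2 := by
      refine Asymptotics.IsBigO.of_norm_le fun t => ?_
      rw [sub_zero, norm_pow, Real.norm_eq_abs, Real.norm_eq_abs, abs_of_nonneg (le_max_right t 0)]
      gcongr
      exact max_le (le_abs_self t) (abs_nonneg t)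
    simpa using (quadratic.hasFDerivAt one_lt_two).hasDerivAt
  · rw [max_eq_left hs.le]
    have square : HasDerivAt (fun t : ℝ => t ^ 2) (2 * s) s := by simpa using hasDerivAt_pow 2 s
    refine square.congr_of_eventuallyEq ?_
    filter_upwards [Ioi_mem_nhds hs] with t ht
    rw [max_eq_left (le_of_lt ht)]

theorem contDiff_max_zero_sq : ContDiff ℝ 1 fun t : ℝ => max t 0 ^ 2 := by
  have deriv_eq : deriv (fun t : ℝ => max t 0 ^ 2) = fun s => 2 * max s 0 :=
    funext fun s => (hasDerivAt_max_zero_sq s).deriv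
  refine contDiff_one_iff_deriv.2 ⟨fun s => (hasDerivAt_max_zero_sq s).differentiableAt, ?_⟩
  rw [deriv_eq]
  fun_prop

variable {V : Type*} [NormedAddCommGroup V]

/-- The radial function `(1 - |z|²)₊`; its square is a `C¹` function supported in the closed unit
ball. -/
def tent (z : V) : ℝ := max (1 - ‖z‖ ^ 2) 0

theorem tent_nonneg (z : V) : 0 ≤ tent z := le_max_right _ _

theorem continuous_tent : Continuous (tent : V → ℝ) := by unfold tent; fun_prop

variable [InnerProductSpace ℝ V] {ν c : V}

theorem hasFDerivAt_tent_sq (z : V) :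
    HasFDerivAt (fun y : V => tent y ^ 2) ((-4 * tent z) • innerSL ℝ z) z := by
  have inner_deriv : HasFDerivAt (fun y : V => 1 - ‖y‖ ^ 2) (-((2 : ℝ) • innerSL ℝ z)) z := by
    simpa only [ofNat_smul_eq_nsmul] using (hasStrictFDerivAt_norm_sq z).hasFDerivAt.const_sub 1
  refine ((hasDerivAt_max_zero_sq (1 - ‖z‖ ^ 2)).comp_hasFDerivAt z inner_deriv).congr_fderiv ?_
  unfold tent
  module

theorem contDiff_tent_sq : ContDiff ℝ 1 fun z : V => tent z ^ 2 :=
  contDiff_max_zero_sq.comp (contDiff_const.sub (contDiff_norm_sq ℝ))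

theorem tent_comp_linearIsometryEquiv (e : V ≃ₗᵢ[ℝ] V) (z : V) : tent (e z) = tent z := by
  rw [tent, e.norm_map, tent]

/-- The open half space with outward normal `ν` and the origin on its boundary. -/
def halfSpace (ν : V) : Set V := {z | ⟪ν, z⟫ < 0}

theorem mem_halfSpace {z : V} : z ∈ halfSpace ν ↔ ⟪ν, z⟫ < 0 := Iff.rfl

theorem isOpen_halfSpace (ν : V) : IsOpen (halfSpace ν) :=
  isOpen_lt (by fun_prop) continuous_const

variable [FiniteDimensional ℝ V]

theorem hasCompactSupport_tent : HasCompactSupport (tent : V → ℝ) := by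
  refine HasCompactSupport.intro (isCompact_closedBall 0 1) fun z hz => max_eq_right ?_
  have : 1 < ‖z‖ := by simpa using hz
  nlinarith

variable [MeasurableSpace V] [BorelSpace V]

theorem integrable_tent_mul_inner (d : V) : Integrable fun z : V => tent z * ⟪d, z⟫ :=
  (continuous_tent.mul (by fun_prop)).integrable_of_hasCompactSupport
    hasCompactSupport_tent.mul_right

theorem setIntegral_tent_mul_inner_neg (hν : ‖ν‖ = 1) :
    ∫ z in halfSpace ν, tent z * ⟪ν, z⟫ < 0 := by
  have hν_sq : ⟪ν, ν⟫ = 1 := by rw [real_inner_self_eq_norm_sq, hν, one_pow]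
  have positive : 0 < ∫ z : V, tent z * max (-⟪ν, z⟫) 0 := by
    refine (continuous_tent.mul (by fun_prop)).integral_pos_of_hasCompactSupport_nonneg_nonzero
      (x := (-(1 / 2 : ℝ)) • ν) hasCompactSupport_tent.mul_right
      (fun z => mul_nonneg (tent_nonneg z) (le_max_right _ _)) ?_
    rw [tent, norm_smul, inner_smul_right, hν_sq, hν]
    norm_num
  suffices ∫ z in halfSpace ν, tent z * ⟪ν, z⟫ =
      -∫ z : V, tent z * max (-⟪ν, z⟫) 0 by linarith
  rw [← integral_indicator (isOpen_halfSpace ν).measurableSet, ← integral_neg]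
  congr with z
  by_cases hz : ⟪ν, z⟫ < 0
  · rw [indicator_of_mem (mem_halfSpace.2 hz), max_eq_left (by linarith), mul_neg, neg_neg]
  · rw [indicator_of_notMem (mt mem_halfSpace.1 hz), max_eq_right (by linarith), mul_zero, neg_zero]

-- The reflection fixing `ν` preserves both the half space and `tent`, so only the component of
-- `c` along `ν` survives in the integral.
theorem setIntegral_tent_mul_inner (hν : ‖ν‖ = 1) :
    ∫ z in halfSpace ν, tent z * ⟪c, z⟫ =
      ⟪c, ν⟫ * ∫ z in halfSpace ν, tent z * ⟪ν, z⟫ := by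
  let H := halfSpace ν
  let ρ : V ≃ₗᵢ[ℝ] V := (ℝ ∙ ν).reflection
  have ρ_apply (z : V) : ρ z = (2 * ⟪ν, z⟫) • ν - z := by
    simp [ρ, Submodule.reflection_singleton_apply, hν, two_smul, two_mul, add_smul]
  have ρ_preimage : ρ ⁻¹' H = H := by
    ext z
    have : ⟪ν, ρ z⟫ = ⟪ν, z⟫ := by
      rw [ρ_apply, inner_sub_right, inner_smul_right, real_inner_self_eq_norm_sq, hν]; ring
    simp only [H, mem_preimage, mem_halfSpace, this]
  have reflected : ∫ z in H, tent z * ⟪c, ρ z⟫ = ∫ z in H, tent z * ⟪c, z⟫ := by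
    have change_of_variables := ρ.measurePreserving.setIntegral_preimage_emb
      ρ.toHomeomorph.measurableEmbedding (fun z => tent z * ⟪c, z⟫) H
    simpa only [ρ_preimage, tent_comp_linearIsometryEquiv] using change_of_variables
  have expanded : ∫ z in H, tent z * ⟪c, ρ z⟫ =
      2 * ⟪c, ν⟫ * (∫ z in H, tent z * ⟪ν, z⟫) - ∫ z in H, tent z * ⟪c, z⟫ := by
    rw [← integral_const_mul, ← integral_sub
      ((integrable_tent_mul_inner ν).integrableOn.const_mul _)
      (integrable_tent_mul_inner c).integrableOn]
    congr with z
    rw [ρ_apply, inner_sub_right, inner_smul_right]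
    ring
  linarith

theorem IsWeaklySolenoidalOn.inner_eq_zero_of_halfSpace
    (h : IsWeaklySolenoidalOn (halfSpace ν) fun _ => c) (hν : ‖ν‖ = 1) : ⟪c, ν⟫ = 0 := by
  have tested : ∫ z in halfSpace ν, tent z * ⟪c, z⟫ = 0 := by
    have hφc : HasCompactSupport fun z : V => tent z ^ 2 :=
      hasCompactSupport_tent.comp_left (zero_pow two_ne_zero)
    have key := h _ contDiff_tent_sq hφc
    simp only [(hasFDerivAt_tent_sq _).fderiv, smul_apply, innerSL_apply_apply, smul_eq_mul,
      mul_assoc, integral_const_mul, real_inner_comm c] at key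
    linarith
  rw [setIntegral_tent_mul_inner hν] at tested
  exact (mul_eq_zero.1 tested).resolve_right (setIntegral_tent_mul_inner_neg hν).ne

end HalfSpace

section OuterNormal

variable {n : ℕ} {Ω : Set (EVec n)} {x ν : EVec n} {X : EVec n → EVec n}

theorem volume_inner_eq_zero (hν : ν ≠ 0) :
    volume {z : EVec n | ⟪ν, z⟫ = 0} = 0 := by
  have hyperplane : {z : EVec n | ⟪ν, z⟫ = 0} = ((ℝ ∙ ν)ᗮ : Submodule ℝ (EVec n)) := by
    ext z
    exact Submodule.mem_orthogonal_singleton_iff_inner_right.symm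
  rw [hyperplane]
  refine Measure.addHaar_submodule _ _ fun h => hν ?_
  have : ν ∈ (ℝ ∙ ν)ᗮ := h ▸ Submodule.mem_top
  exact inner_self_eq_zero.1 (Submodule.mem_orthogonal_singleton_iff_inner_right.1 this)

theorem symmDiff_blowUp_preimage_halfSpace_subset {r : ℝ} (hr : 0 < r)
    (R : ℝ) :
    symmDiff (blowUp x r ⁻¹' Ω) (halfSpace ν) ∩ Metric.ball 0 R ⊆
      blowUp x r ⁻¹' (Ω ∩ Metric.ball x (r * R) ∩ {y | 0 < ⟪ν, y - x⟫}) ∪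
      blowUp x r ⁻¹' ((Metric.ball x (r * R) \ Ω) ∩ {y | ⟪ν, y - x⟫ < 0}) ∪
      {z | ⟪ν, z⟫ = 0} := by
  rw [← blowUp_preimage_ball (x := x) hr R]
  rintro z ⟨⟨hzΩ, hzν⟩ | ⟨hzν, hzΩ⟩, hzR⟩
  · rcases (not_lt.1 (mt mem_halfSpace.2 hzν)).eq_or_lt with hz | hz
    · exact Or.inr hz.symm
    · exact Or.inl (Or.inl ⟨⟨hzΩ, hzR⟩, by
        rw [mem_ofPred_eq, inner_blowUp_sub]; exact mul_pos hr hz⟩)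
  · exact Or.inl (Or.inr ⟨⟨hzR, hzΩ⟩, by
      rw [mem_ofPred_eq, inner_blowUp_sub]; exact mul_neg_of_pos_of_neg hr hzν⟩)

namespace IsOuterNormal

theorem tendsto_volume_symmDiff_blowUp (hν : IsOuterNormal Ω x ν) {R : ℝ} (hR : 0 < R) :
    Tendsto (fun r => volume (symmDiff (blowUp x r ⁻¹' Ω) (halfSpace ν) ∩ Metric.ball 0 R))
      (𝓝[>] 0) (𝓝 0) := by
  obtain ⟨hν1, outside, inside⟩ := hν
  have ν_ne_zero : ν ≠ 0 := norm_ne_zero_iff.1 (hν1 ▸ one_ne_zero)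
  have rescale : Tendsto (· * R) (𝓝[>] 0) (𝓝[>] 0) := by
    refine tendsto_nhdsWithin_iff.2 ⟨?_, ?_⟩
    · exact ((continuous_mul_const R).tendsto' 0 0 (zero_mul R)).mono_left nhdsWithin_le_nhds
    · filter_upwards [self_mem_nhdsWithin] with r hr using mul_pos hr hR
  have density := ENNReal.Tendsto.mul_const
    ((outside.comp rescale).add (inside.comp rescale))
    (Or.inr (measure_ball_lt_top (μ := volume) (x := (0 : EVec n)) (r := R)).ne)
  rw [add_zero, zero_mul] at density
  refine tendsto_of_tendsto_of_tendsto_of_le_of_le' tendsto_const_nhds density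
    (Eventually.of_forall fun _ => zero_le) ?_
  filter_upwards [self_mem_nhdsWithin] with r hr
  refine (measure_mono (symmDiff_blowUp_preimage_halfSpace_subset hr R)).trans ?_
  rw [add_mul]
  refine (measure_union_le _ _).trans ?_
  rw [volume_inner_eq_zero ν_ne_zero, add_zero]
  refine (measure_union_le _ _).trans_eq ?_
  simp only [volume_blowUp_preimage_eq_div_mul hr hR, Function.comp_apply]

theorem inner_eq_zero (hν : IsOuterNormal Ω x ν) (hΩ : MeasurableSet Ω) (hX : Continuous X)
    (h : IsWeaklySolenoidalOn Ω X) : ⟪X x, ν⟫ = 0 := by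
  have blown_up : ∀ᶠ r in 𝓝[>] 0, IsWeaklySolenoidalOn (blowUp x r ⁻¹' Ω) (X ∘ blowUp x r) := by
    filter_upwards [self_mem_nhdsWithin] with r hr
    exact h.comp_blowUp hΩ hr
  have limit : IsWeaklySolenoidalOn (halfSpace ν) fun _ => X x :=
    .of_tendsto blown_up (Eventually.of_forall fun _ => continuous_blowUp.measurable hΩ)
      (isOpen_halfSpace ν).measurableSet (fun _ => hν.tendsto_volume_symmDiff_blowUp)
      (Eventually.of_forall fun _ => hX.comp continuous_blowUp)
      (tendstoLocallyUniformly_comp_blowUp hX)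
  exact limit.inner_eq_zero_of_halfSpace hν.1

theorem tendsto_inner (hν : IsOuterNormal Ω x ν) (hΩ : MeasurableSet Ω) {K : NNReal}
    (hX : LipschitzOnWith K X Ω) (h : IsWeaklySolenoidalOn Ω X) :
    Tendsto (fun y => ⟪X y, ν⟫) (𝓝[Ω] x) (𝓝 0) := by
  obtain ⟨W, hW, hXW⟩ := hX.extend_finite_dimension
  rw [← hν.inner_eq_zero hΩ hW.continuous (h.congr hΩ hXW)]
  have continuous : Continuous fun y => ⟪W y, ν⟫ := hW.continuous.inner continuous_const
  refine ((continuous.tendsto x).mono_left nhdsWithin_le_nhds).congr' ?_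
  filter_upwards [self_mem_nhdsWithin] with y hy
  rw [hXW hy]

end IsOuterNormal

end OuterNormal

section NeumannProblem

/-- The `a`-th row of a matrix, as a Euclidean vector. -/
noncomputable def row {ι κ : Type*} (a : ι) : (ι → κ → ℝ) →L[ℝ] EuclideanSpace ℝ κ :=
  (EuclideanSpace.equiv κ ℝ).symm.toContinuousLinearMap.comp (ContinuousLinearMap.proj a)

theorem row_apply {ι κ : Type*} (a : ι) (z : ι → κ → ℝ) (i : κ) : row a z i = z a i :=
  rfl

theorem mdot_jacobian_single {ι : Type*} [Fintype ι] [DecidableEq ι] {n : ℕ} (a : ι)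
    (z : ι → Fin n → ℝ) (φ : EVec n → ℝ) (x : EVec n) :
    mdot z (jacobian (fun y => Pi.single a (φ y)) x) = fderiv ℝ φ x (row a z) := by
  have other_rows (b : ι) (hb : b ≠ a) :
      ∑ i, z b i * jacobian (fun y => Pi.single a (φ y)) x b i = 0 := by
    simp [jacobian, Pi.single_eq_of_ne hb]
  rw [mdot, Finset.sum_eq_single a (fun b _ => other_rows b) (by simp)]
  conv_rhs => rw [← (EuclideanSpace.basisFun (Fin n) ℝ).sum_repr (row a z), map_sum]
  simp [jacobian, row_apply]

theorem locallyLipschitzOn_of_hasDerivWithinAt {g g' : ℝ → ℝ} {s : Set ℝ} (hs : Convex ℝ s)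
    (hsu : UniqueDiffOn ℝ s) (hg : ∀ t ∈ s, HasDerivWithinAt g (g' t) s t)
    (hg' : ContinuousOn g' s) : LocallyLipschitzOn s g := by
  refine ContDiffOn.locallyLipschitzOn hs ?_
  refine (contDiffOn_one_iff_derivWithin hsu).2 ⟨fun t ht => (hg t ht).differentiableWithinAt, ?_⟩
  exact hg'.congr fun t ht => (hg t ht).derivWithin (hsu t ht)

variable {n N : ℕ} {Ω : Set (EVec n)} {f f' : ℝ → ℝ} {T₀ : EVec n → Fin N → Fin n → ℝ}
  {u : EVec n → Fin N → ℝ} {Du : EVec n → Fin N → Fin n → ℝ}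

theorem exists_lipschitzOnWith_row (a : Fin N) (hT : MemW1inf Ω T₀) :
    ∃ K, LipschitzOnWith K (fun y => row a (T₀ y)) Ω :=
  let ⟨_, _, hTlip⟩ := hT
  ⟨_, (row a).lipschitz.comp_lipschitzOnWith hTlip⟩

theorem memW1inf_Amap (hf' : LocallyLipschitzOn (Ici 0) f') (hf'0 : f' 0 = 0)
    (hDu : MemW1inf Ω Du) : MemW1inf Ω fun y => Amap f' (Du y) := by
  obtain ⟨C, hC, hlip⟩ := hDu
  obtain ⟨K, hK⟩ := exists_lipschitzOnWith_Amap (N := N) (n := n) hf' hf'0 C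
  have mapsTo : MapsTo Du Ω (Metric.closedBall 0 C) := fun y hy =>
    mem_closedBall_zero_iff.2 (hC y hy)
  have Amap_zero : Amap f' (0 : Fin N → Fin n → ℝ) = 0 := by ext; simp [Amap]
  refine ⟨K * C, fun y hy => ?_, hK.comp hlip mapsTo⟩
  calc ‖Amap f' (Du y)‖ = dist (Amap f' (Du y)) (Amap f' 0) := by rw [Amap_zero, dist_zero_right]
    _ ≤ K * dist (Du y) 0 := hK.dist_le_mul _ (mapsTo hy) _ (by simp)
    _ ≤ K * C := by
        gcongr
        exact mapsTo hy

theorem isWeaklySolenoidalOn_row_sub (hΩ : IsOpen Ω)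
    (hf : ∀ t ∈ Ici (0 : ℝ), HasDerivWithinAt f (f' t) (Ici 0) t)
    (hf' : ContinuousOn f' (Ici 0)) (hf0 : f 0 = 0) (hf'0 : f' 0 = 0) (hT : MemW1inf Ω T₀)
    (hu : HasWeakDerivOn Ω u Du) (hDu : MemW1inf Ω Du)
    (hmin : ∀ w Dw, HasWeakDerivOn Ω w Dw → FF Ω f T₀ Du ≤ FF Ω f T₀ Dw) (a : Fin N) :
    IsWeaklySolenoidalOn Ω
      ((fun y => row a (Amap f' (Du y))) - fun y => row a (T₀ y)) := fun φ hφ hφc => by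
  obtain ⟨C, hTC, hTlip⟩ := hT
  obtain ⟨A, hDuA, -⟩ := hDu
  have hv : ContDiff ℝ 1 fun x => (Pi.single a (φ x) : Fin N → ℝ) :=
    (ContinuousLinearMap.single ℝ (fun _ : Fin N => ℝ) a).contDiff.comp hφ
  have hvc : HasCompactSupport fun x => (Pi.single a (φ x) : Fin N → ℝ) :=
    hφc.comp_left (Pi.single_zero a)
  have euler_lagrange := integral_mdot_jacobian_eq_zero hf hf' hf0 hf'0
    (hTlip.continuousOn.aestronglyMeasurable hΩ.measurableSet)
    (ae_restrict_of_forall_mem hΩ.measurableSet hTC) hu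
    (ae_restrict_of_forall_mem hΩ.measurableSet hDuA) hmin hv hvc
  simpa only [mdot_jacobian_single, map_sub, Pi.sub_apply] using euler_lagrange

theorem minimiser_solves_pointwise_general (hΩ : IsOpen Ω)
    (hf : ∀ t ∈ Ici (0 : ℝ), HasDerivWithinAt f (f' t) (Ici 0) t)
    (hf' : LocallyLipschitzOn (Ici 0) f') (hf0 : f 0 = 0) (hf'0 : f' 0 = 0) (hT : MemW1inf Ω T₀)
    (hu : HasWeakDerivOn Ω u Du) (hDu : MemW1inf Ω Du)
    (hmin : ∀ w Dw, HasWeakDerivOn Ω w Dw → FF Ω f T₀ Du ≤ FF Ω f T₀ Dw) :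
    (∀ᵐ x ∂volume.restrict Ω, ∀ a,
      (∀ i, DifferentiableAt ℝ (fun y => Amap f' (Du y) a i) x ∧
        DifferentiableAt ℝ (fun y => T₀ y a i) x) ∧
      ∑ i, fderiv ℝ (fun y => Amap f' (Du y) a i) x (EuclideanSpace.single i 1) =
        ∑ i, fderiv ℝ (fun y => T₀ y a i) x (EuclideanSpace.single i 1)) ∧
    ∀ x ν, IsOuterNormal Ω x ν → ∀ a,
      Tendsto (fun y => ∑ i, (Amap f' (Du y) a i - T₀ y a i) * ν i) (𝓝[Ω] x) (𝓝 0) := by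
  have solenoidal (a) := isWeaklySolenoidalOn_row_sub hΩ hf hf'.continuousOn hf0 hf'0 hT hu hDu
    hmin a
  choose K hK using fun a => exists_lipschitzOnWith_row a (memW1inf_Amap hf' hf'0 hDu)
  choose L hL using fun a => exists_lipschitzOnWith_row a hT
  refine ⟨ae_all_iff.2 fun a => ?_, fun x ν hν a => ?_⟩
  · exact (solenoidal a).ae_sum_fderiv_eq hΩ (hK a) (hL a)
  · simpa [PiLp.inner_apply, row_apply, mul_comm] using
      hν.tendsto_inner hΩ.measurableSet ((hK a).sub (hL a)) (solenoidal a)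

end NeumannProblem

/-- **Lemma 1.3 (consistency).** If `f ∈ C²([0,∞))` with `f(0) = f'(0) = 0`,
`T₀ ∈ W^{1,∞}(Ω;ℝ^{N×n})` and `u ∈ W^{2,∞}(Ω;ℝ^N)` minimises
`𝔉[w] = ∫_Ω (f(|∇w|) − T₀·∇w) dx` among all `w ∈ W^{1,1}(Ω;ℝ^N)`, then
`div(f'(|∇u|)|∇u|⁻¹∇u) = div T₀` a.e. in `Ω` and the Neumann boundary condition
`f'(|∇u|)|∇u|⁻¹∇u · ν_∂Ω = T₀ · ν_∂Ω` holds `ℋ^{n-1}`-a.e. on `∂Ω` (expressed via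
boundary limits from inside `Ω` against any measure-theoretic outward unit normal). -/
theorem minimiser_solves_pointwise
    {n N : ℕ} (Ω : Set (EVec n))
    (hΩ : IsLipschitzDomain Ω) (hΩbdd : Bornology.IsBounded Ω)
    (f f' f'' : ℝ → ℝ)
    (hderiv : ∀ t ∈ Set.Ici (0:ℝ), HasDerivWithinAt f (f' t) (Set.Ici 0) t)
    (hderiv' : ∀ t ∈ Set.Ici (0:ℝ), HasDerivWithinAt f' (f'' t) (Set.Ici 0) t)
    (hf''cont : ContinuousOn f'' (Set.Ici 0))
    (hf0 : f 0 = 0) (hf'0 : f' 0 = 0)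
    (T₀ : EVec n → Fin N → Fin n → ℝ)
    (hT : MemW1inf Ω T₀)
    (u : EVec n → Fin N → ℝ) (Du : EVec n → Fin N → Fin n → ℝ)
    (hu : HasWeakDerivOn Ω u Du)
    -- `u ∈ W^{2,∞}(Ω;ℝ^N)`: `u` is (classically) differentiable on `Ω` with gradient `Du`,
    -- and `u`, `Du` are bounded with `Du` Lipschitz on `Ω`
    (hclass : ∀ x ∈ Ω, ∀ a : Fin N,
      HasFDerivAt (fun y => u y a)
        (innerSL ℝ ((WithLp.equiv 2 (Fin n → ℝ)).symm (Du x a))) x)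
    (hW2inf : ∃ C : NNReal, (∀ x ∈ Ω, ‖u x‖ ≤ C ∧ ‖Du x‖ ≤ C) ∧
      LipschitzOnWith C Du Ω)
    (hmin : ∀ (w : EVec n → Fin N → ℝ) (Dw : EVec n → Fin N → Fin n → ℝ),
      HasWeakDerivOn Ω w Dw → FF Ω f T₀ Du ≤ FF Ω f T₀ Dw) :
    (∀ᵐ x ∂(volume.restrict Ω), ∀ a : Fin N,
      (∀ i : Fin n, DifferentiableAt ℝ (fun y => Amap f' (Du y) a i) x ∧
        DifferentiableAt ℝ (fun y => T₀ y a i) x) ∧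
      ∑ i : Fin n, fderiv ℝ (fun y => Amap f' (Du y) a i) x (EuclideanSpace.single i 1) =
        ∑ i : Fin n, fderiv ℝ (fun y => T₀ y a i) x (EuclideanSpace.single i 1)) ∧
    (∀ᵐ x ∂((μH[(n : ℝ) - 1]).restrict (frontier Ω)), ∀ νx : EVec n,
      IsOuterNormal Ω x νx → ∀ a : Fin N,
        Filter.Tendsto
          (fun y => ∑ i : Fin n, (Amap f' (Du y) a i - T₀ y a i) * νx i)
          (nhdsWithin x Ω) (nhds 0)) := by
  have pointwise := minimiser_solves_pointwise_general hΩ.1 hderiv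
    (locallyLipschitzOn_of_hasDerivWithinAt (convex_Ici 0) (uniqueDiffOn_Ici 0) hderiv' hf''cont)
    hf0 hf'0 hT hu (hW2inf.imp fun _ h => ⟨fun x hx => (h.1 x hx).2, h.2⟩) hmin
  exact pointwise.imp_right (ae_of_all _)
end

section
/- Let Ω ⊂ ℝⁿ be a bounded Lipschitz domain, let f ∈ C¹([0,∞)) be convex with f(0) = f'(0) = 0 and of linear growth νt − L ≤ f(t) ≤ L(t+1) for all t ≥ 0, and let T₀ ∈ L^∞(Ω;ℝ^{N×n}) satisfy ‖T₀‖_{L^∞(Ω;ℝ^{N×n})} < f^∞(1). Then there exists R₀ > 0, depending only on f and T₀, such that for every w ∈ W^{1,1}(Ω;ℝ^N) one has 𝔉[w] ≥ ½(f^∞(1) − ‖T₀‖_{L^∞(Ω;ℝ^{N×n})}) ‖∇w‖_{L¹(Ω;ℝ^{N×n})} − f^∞(1)|Ω|R₀. In particular, if (w_k) is a sequence in W^{1,1}(Ω;ℝ^N) with (w_k)_Ω = 0 for all k and ‖w_k‖_{W^{1,1}(Ω;ℝ^N)} → ∞ as k → ∞, then 𝔉[w_k] → ∞. -/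
open MeasureTheory Filter Topology Set
open scoped ENNReal RealInnerProductSpace

/-!
If `T := ‖T₀‖_∞ < f^∞(1)`, then `f t ≥ ½ (f^∞(1) + T) t - M` for all `t ≥ 0`, and by Cauchy–Schwarz
`f |∇w| - T₀ · ∇w ≥ ½ (f^∞(1) - T) |∇w| - M`; integrating gives the bound with
`R₀ = M / f^∞(1)`. So `𝔉[w_k] → ∞` as soon as `‖∇w_k‖_{L¹} → ∞`, which for functions of mean zero
follows from `‖w_k‖_{W^{1,1}} → ∞` by the Poincaré inequality.

The Poincaré inequality is first proved on the bi-Lipschitz image `g(D)` of a convex set `D`. For a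
mollification `U` of `w`, the difference `U (g y) - U (g z)` is bounded by the integral of `|DU|`
along the curve that is the image of the segment from `y` to `z`, and averaging over `y, z ∈ D`
gives `∬ |U (g y) - U (g z)| ≤ C ∫ |DU|`. Finitely many such images cover `Ω`, and the inequalities
on two overlapping sets combine to one on their union, so connectedness yields the inequality
on `Ω`.

That the charts have open images is invariance of domain, for bi-Lipschitz maps. A Lipschitz map `F`
that is the identity off a ball satisfies `∫ det DF = vol` over the ball, so `F` cannot map the ball
into a sphere, where `det DF = 0`; hence a Lipschitz map that is the identity near infinity is onto.
If the image of `h` missed a point `c` close to `h x₀`, pushing `h` radially off an `ε`-ball around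
`c` and composing with `h⁻¹` would give a map that is close to the identity, hence reaches all
points `p` near `x₀`; each of them would satisfy `|h p - c| ≥ ε` or lie in the null set
`h⁻¹(∂B(c, ε))`.
-/

/-! ### Lipschitz maps and Haar measure -/

section LipschitzHaar

variable {E : Type*} [NormedAddCommGroup E] [NormedSpace ℝ E] [FiniteDimensional ℝ E]
  [MeasurableSpace E] [BorelSpace E] (μ : Measure E) [μ.IsAddHaarMeasure]
  {K : NNReal} {f : E → E} {s : Set E}

theorem addHaar_image_le_of_lipschitzOnWith (hf : LipschitzOnWith K f s) :
    μ (f '' s) ≤ (K : ℝ≥0∞) ^ Module.finrank ℝ E * μ s := by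
  have hHaar : (Measure.hausdorffMeasure (Module.finrank ℝ E : ℝ) : Measure E).IsAddHaarMeasure :=
    isAddHaarMeasure_hausdorffMeasure
  have himage := hf.hausdorffMeasure_image_le (Nat.cast_nonneg (Module.finrank ℝ E))
  rw [Measure.isAddLeftInvariant_eq_smul μ (Measure.hausdorffMeasure (Module.finrank ℝ E : ℝ))]
  simp only [Measure.smul_apply, ENNReal.smul_def, smul_eq_mul]
  rw [ENNReal.rpow_natCast] at himage
  rw [mul_left_comm]
  gcongr

theorem addHaar_image_eq_zero_of_lipschitzOnWith (hf : LipschitzOnWith K f s) (hs : μ s = 0) :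
    μ (f '' s) = 0 :=
  le_antisymm (by simpa [hs] using addHaar_image_le_of_lipschitzOnWith μ hf) bot_le

theorem lintegral_abs_det_fderiv_eq_addHaar_image_of_lipschitzWith (hf : LipschitzWith K f)
    (hs : MeasurableSet s) (hinj : InjOn f s) :
    ∫⁻ x in s, ENNReal.ofReal |(fderiv ℝ f x).det| ∂μ = μ (f '' s) := by
  set d : Set E := {x | DifferentiableAt ℝ f x}
  have hd : ∀ᵐ x ∂μ, x ∈ d := hf.ae_differentiableAt
  have hdc : μ dᶜ = 0 := hd
  have hsd : (s ∩ d : Set E) =ᵐ[μ] s :=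
    inter_ae_eq_left_of_ae_eq_univ (eventuallyEq_univ.2 hd)
  have himage : μ (f '' (s ∩ d)) = μ (f '' s) := by
    refine le_antisymm (measure_mono (image_mono inter_subset_left)) ?_
    calc μ (f '' s) ≤ μ (f '' (s ∩ d)) + μ (f '' dᶜ) := by
          rw [← inter_union_sdiff s d, image_union]
          refine (measure_union_le _ _).trans ?_
          rw [inter_union_sdiff]
          gcongr
          exact fun x hx => hx.2
      _ = μ (f '' (s ∩ d)) := by
          rw [addHaar_image_eq_zero_of_lipschitzOnWith μ hf.lipschitzOnWith hdc, add_zero]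
  rw [← himage, ← setLIntegral_congr hsd]
  exact lintegral_abs_det_fderiv_eq_addHaar_image μ
    (hs.inter (measurableSet_of_differentiableAt ℝ f))
    (fun x hx => hx.2.hasFDerivAt.hasFDerivWithinAt) (hinj.mono inter_subset_left)

end LipschitzHaar

/-! ### The Jacobian integral of a compactly supported perturbation of the identity -/

section Determinant

theorem polynomial_eval_eq_sum_lagrangeBasis {k : Type*} [Field k] [DecidableEq k]
    {p : Polynomial k} {s : Finset k} (hp : p.degree < s.card) (x : k) :
    p.eval x = ∑ t ∈ s, (Lagrange.basis s id t).eval x * p.eval t := by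
  conv_lhs => rw [Lagrange.eq_interpolate (v := id) (injOn_id _) hp]
  simp [Lagrange.interpolate_apply, Polynomial.eval_finsetSum, mul_comm]

theorem exists_polynomial_eval_eq_det_id_add_smul {k V : Type*} [Field k] [AddCommGroup V]
    [Module k V] [FiniteDimensional k V] (A : V →ₗ[k] V) :
    ∃ p : Polynomial k, p.natDegree ≤ Module.finrank k V ∧
      ∀ t, p.eval t = LinearMap.det (LinearMap.id + t • A) := by
  let b := Module.finBasis k V
  let M := LinearMap.toMatrix b b A
  refine ⟨((Polynomial.X : Polynomial k) • M.map Polynomial.C +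
    (1 : Matrix _ _ k).map Polynomial.C).det, ?_, fun t => ?_⟩
  · simpa using Polynomial.natDegree_det_X_add_C_le M 1
  · have hmatrix : LinearMap.toMatrix b b (LinearMap.id + t • A) = 1 + t • M := by
      rw [map_add, map_smul, LinearMap.toMatrix_id]
    rw [← Polynomial.coe_evalRingHom, RingHom.map_det, ← LinearMap.det_toMatrix b, hmatrix]
    congr 1
    ext i j
    by_cases hij : i = j <;> simp [hij, add_comm, mul_comm t]

variable {E : Type*} [NormedAddCommGroup E] [NormedSpace ℝ E]

theorem det_id_add_pos_of_norm_lt_one [CompleteSpace E] {A : E →L[ℝ] E} (hA : ‖A‖ < 1) :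
    0 < (ContinuousLinearMap.id ℝ E + A).det := by
  have hunit (t : ℝ) (ht : t ∈ Icc (0 : ℝ) 1) :
      (ContinuousLinearMap.id ℝ E + t • A).det ≠ 0 := by
    have hnorm : ‖-(t • A)‖ < 1 := by
      rw [norm_neg, norm_smul, Real.norm_of_nonneg ht.1]
      nlinarith [ht.2, norm_nonneg A]
    have h : IsUnit (ContinuousLinearMap.id ℝ E + t • A) := by
      simpa using! isUnit_one_sub_of_norm_lt_one hnorm
    exact (LinearMap.isUnit_det _ (h.map ContinuousLinearMap.toLinearMapRingHom)).ne_zero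
  have hcont : ContinuousOn (fun t : ℝ => (ContinuousLinearMap.id ℝ E + t • A).det) (Icc 0 1) :=
    (ContinuousLinearMap.continuous_det.comp (by fun_prop)).continuousOn
  by_contra! hneg
  obtain ⟨t, ht, hzero⟩ := intermediate_value_Icc' zero_le_one hcont
    (show (0 : ℝ) ∈ Icc _ _ by simpa [ContinuousLinearMap.det] using hneg)
  exact hunit t ht hzero

theorem exists_det_id_add_eq_sum_det_id_add_smul [FiniteDimensional ℝ E] {δ : ℝ} (hδ : 0 < δ) :
    ∃ (S : Finset ℝ) (c : ℝ → ℝ), (S : Set ℝ) ⊆ Ioo 0 δ ∧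
      ∀ A : E →L[ℝ] E, (ContinuousLinearMap.id ℝ E + A).det =
        ∑ t ∈ S, c t * (ContinuousLinearMap.id ℝ E + t • A).det := by
  obtain ⟨S, hSδ, hScard⟩ := (Ioo_infinite hδ).exists_subset_card_eq (Module.finrank ℝ E + 1)
  refine ⟨S, fun t => (Lagrange.basis S id t).eval 1, hSδ, fun A => ?_⟩
  obtain ⟨p, hpdeg, hp⟩ := exists_polynomial_eval_eq_det_id_add_smul (A : E →ₗ[ℝ] E)
  have hdeg : p.degree < S.card := by
    rw [hScard]
    exact (Polynomial.degree_le_of_natDegree_le hpdeg).trans_lt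
      (by exact_mod_cast Nat.lt_succ_self _)
  have hinterp := polynomial_eval_eq_sum_lagrangeBasis hdeg 1
  simp only [hp, one_smul] at hinterp
  exact hinterp

theorem bijective_id_add_of_lipschitzWith {E : Type*} [NormedAddCommGroup E] [CompleteSpace E]
    {K : NNReal} {g : E → E} (hg : LipschitzWith K g) (hK : K < 1) :
    Function.Bijective fun x => x + g x := by
  refine ⟨((AntilipschitzWith.id).add_lipschitzWith hg (by simpa using hK)).injective,
    fun y => ?_⟩
  have hcontr : ContractingWith K fun x => y - g x :=
    ⟨hK, LipschitzWith.of_dist_le_mul fun a b => by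
      simpa only [dist_sub_left] using hg.dist_le_mul a b⟩
  exact ⟨hcontr.fixedPoint, eq_sub_iff_add_eq.1 hcontr.fixedPoint_isFixedPt.eq.symm⟩

theorem image_eq_self_of_eqOn_id_compl {α : Type*} {f : α → α} {s : Set α}
    (hf : Function.Bijective f) (hs : EqOn f id sᶜ) : f '' s = s := by
  rw [← compl_inj_iff, ← image_compl_eq hf, hs.image_eq, image_id]

end Determinant

section JacobianIntegral

variable {E : Type*} [NormedAddCommGroup E] [NormedSpace ℝ E] [FiniteDimensional ℝ E]
  [MeasurableSpace E] [BorelSpace E] {K : NNReal} {g : E → E} {s : Set E}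

theorem measurable_det_id_add_fderiv (g : E → E) :
    Measurable fun x => (ContinuousLinearMap.id ℝ E + fderiv ℝ g x).det :=
  ContinuousLinearMap.continuous_det.measurable.comp ((measurable_fderiv ℝ g).const_add _)

theorem integrableOn_det_id_add_fderiv {ν : Measure E} (hg : LipschitzWith K g)
    (hνs : ν s ≠ ∞) :
    IntegrableOn (fun x => (ContinuousLinearMap.id ℝ E + fderiv ℝ g x).det) s ν := by
  obtain ⟨C, hC⟩ := (isCompact_closedBall (0 : E →L[ℝ] E) K).exists_bound_of_continuousOn
    (f := fun A => (ContinuousLinearMap.id ℝ E + A).det)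
    (ContinuousLinearMap.continuous_det.comp (by fun_prop)).continuousOn
  exact Measure.integrableOn_of_bounded hνs (measurable_det_id_add_fderiv g).aestronglyMeasurable
    (ae_of_all _ fun x => hC _ (by simpa using norm_fderiv_le_of_lipschitz ℝ hg))

variable (μ : Measure E) [μ.IsAddHaarMeasure]

theorem lintegral_det_id_add_fderiv_of_lt_one (hg : LipschitzWith K g) (hK : K < 1)
    (hs : MeasurableSet s) (hgs : ∀ x ∉ s, g x = 0) :
    ∫⁻ x in s, ENNReal.ofReal (ContinuousLinearMap.id ℝ E + fderiv ℝ g x).det ∂μ = μ s := by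
  have hbij := bijective_id_add_of_lipschitzWith hg hK
  have himage : (fun x => x + g x) '' s = s :=
    image_eq_self_of_eqOn_id_compl hbij fun x hx => by simp [hgs x hx]
  have hdet : ∀ᵐ x ∂μ, ENNReal.ofReal (ContinuousLinearMap.id ℝ E + fderiv ℝ g x).det =
      ENNReal.ofReal |(fderiv ℝ (fun x => x + g x) x).det| := by
    filter_upwards [hg.ae_differentiableAt (μ := μ)] with x hx
    have hpos := det_id_add_pos_of_norm_lt_one
      ((norm_fderiv_le_of_lipschitz ℝ hg (x₀ := x)).trans_lt hK)
    rw [fderiv_fun_add differentiableAt_fun_id hx, fderiv_fun_id, abs_of_pos hpos]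
  have harea := lintegral_abs_det_fderiv_eq_addHaar_image_of_lipschitzWith μ
    (LipschitzWith.id.add hg) hs hbij.injective.injOn
  exact (setLIntegral_congr_fun_ae hs (hdet.mono fun _ h _ => h)).trans
    (harea.trans (congrArg μ himage))

theorem integral_det_id_add_fderiv_of_lt_one (hg : LipschitzWith K g) (hK : K < 1)
    (hs : MeasurableSet s) (hgs : ∀ x ∉ s, g x = 0) :
    ∫ x in s, (ContinuousLinearMap.id ℝ E + fderiv ℝ g x).det ∂μ = μ.real s := by
  have hpos (x : E) : 0 ≤ (ContinuousLinearMap.id ℝ E + fderiv ℝ g x).det :=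
    (det_id_add_pos_of_norm_lt_one
      ((norm_fderiv_le_of_lipschitz ℝ hg (x₀ := x)).trans_lt hK)).le
  rw [integral_eq_lintegral_of_nonneg_ae (ae_of_all _ hpos)
    (measurable_det_id_add_fderiv g).aestronglyMeasurable,
    lintegral_det_id_add_fderiv_of_lt_one μ hg hK hs hgs, Measure.real]

-- `t ↦ ∫ det (1 + t • Dg)` is a polynomial, and it is constant for small `t`.
theorem integral_det_id_add_fderiv (hg : LipschitzWith K g) (hs : MeasurableSet s)
    (hμs : μ s ≠ ∞) (hgs : ∀ x ∉ s, g x = 0) :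
    ∫ x in s, (ContinuousLinearMap.id ℝ E + fderiv ℝ g x).det ∂μ = μ.real s := by
  obtain ⟨S, c, hS, hdet⟩ := exists_det_id_add_eq_sum_det_id_add_smul (E := E)
    (show (0 : ℝ) < 1 / (K + 1) by positivity)
  have hlip (t : ℝ) : LipschitzWith (‖t‖₊ * K) (t • g) :=
    (lipschitzWith_smul t).comp hg
  have hsmall (t : ℝ) (ht : t ∈ S) : ‖t‖₊ * K < 1 := by
    obtain ⟨ht0, ht1⟩ := hS ht
    rw [lt_div_iff₀ (by positivity)] at ht1
    rw [← NNReal.coe_lt_coe, NNReal.coe_mul, coe_nnnorm, Real.norm_of_nonneg ht0.le]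
    push_cast
    linarith
  have hsum : ∑ t ∈ S, c t = 1 := by simpa [ContinuousLinearMap.det] using (hdet 0).symm
  calc ∫ x in s, (ContinuousLinearMap.id ℝ E + fderiv ℝ g x).det ∂μ
      = ∫ x in s, ∑ t ∈ S, c t * (ContinuousLinearMap.id ℝ E + fderiv ℝ (t • g) x).det ∂μ := by
        simp only [hdet (fderiv ℝ g _), fderiv_const_smul_field, Pi.smul_apply]
    _ = ∑ t ∈ S, c t * ∫ x in s, (ContinuousLinearMap.id ℝ E + fderiv ℝ (t • g) x).det ∂μ := by
        rw [integral_finsetSum _ fun t _ =>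
          (integrableOn_det_id_add_fderiv (hlip t) hμs).const_mul _]
        simp only [integral_const_mul]
    _ = ∑ t ∈ S, c t * μ.real s := Finset.sum_congr rfl fun t ht => by
        rw [integral_det_id_add_fderiv_of_lt_one μ (hlip t) (hsmall t ht) hs
          fun x hx => by simp [hgs x hx]]
    _ = μ.real s := by rw [← Finset.sum_mul, hsum, one_mul]

end JacobianIntegral

/-! ### Invariance of domain for bi-Lipschitz maps -/

section RadialPushOut

variable {E : Type*} [NormedAddCommGroup E] [NormedSpace ℝ E]

theorem norm_div_norm_smul_sub_le {v w : E} (hv : v ≠ 0) (hw : w ≠ 0) (a : ℝ) {b : ℝ}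
    (hb : 0 ≤ b) :
    ‖(a / ‖v‖) • v - (b / ‖w‖) • w‖ ≤ |a - b| + 2 * (b / ‖w‖) * ‖v - w‖ := by
  have hv' : 0 < ‖v‖ := norm_pos_iff.2 hv
  have hsplit : (a / ‖v‖) • v - (b / ‖w‖) • w =
      ((a - b) / ‖v‖) • v + (b / ‖w‖) • (((‖w‖ - ‖v‖) / ‖v‖) • v + (v - w)) := by
    match_scalars <;> field_simp
    ring
  have hnorm (t : ℝ) : ‖(t / ‖v‖) • v‖ = |t| := by
    rw [norm_smul, norm_div, norm_norm, Real.norm_eq_abs, div_mul_cancel₀ _ hv'.ne']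
  calc _ ≤ |a - b| + b / ‖w‖ * (|‖w‖ - ‖v‖| + ‖v - w‖) := by
        rw [hsplit]
        refine (norm_add_le _ _).trans ?_
        rw [norm_smul (b / ‖w‖), Real.norm_of_nonneg (by positivity), hnorm]
        gcongr
        exact (norm_add_le _ _).trans_eq (by rw [hnorm])
    _ ≤ |a - b| + b / ‖w‖ * (‖v - w‖ + ‖v - w‖) := by
        gcongr
        rw [abs_sub_comm]
        exact abs_norm_sub_norm_le v w
    _ = _ := by ring

/-- The radial push-out of the ball of radius `ε` about `c` onto its boundary sphere: points at
distance at least `ε` from `c` stay fixed. The centre `c` itself, where the projection is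
undefined, is sent to `c` by division by zero. -/
noncomputable def radialPushOut (c : E) (ε : ℝ) (y : E) : E :=
  c + (max ε ‖y - c‖ / ‖y - c‖) • (y - c)

variable {c y : E} {ε : ℝ}

theorem radialPushOut_of_le (h : ε ≤ ‖y - c‖) : radialPushOut c ε y = y := by
  rcases eq_or_ne y c with rfl | hy
  · simp [radialPushOut]
  · rw [radialPushOut, max_eq_right h, div_self (norm_ne_zero_iff.2 (sub_ne_zero.2 hy)), one_smul,
      add_sub_cancel]

theorem norm_radialPushOut_sub (hy : y ≠ c) : ‖radialPushOut c ε y - c‖ = max ε ‖y - c‖ := by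
  rw [radialPushOut, add_sub_cancel_left, norm_smul, norm_div, norm_norm,
    div_mul_cancel₀ _ (norm_ne_zero_iff.2 (sub_ne_zero.2 hy)),
    Real.norm_of_nonneg ((norm_nonneg _).trans (le_max_right _ _))]

theorem dist_radialPushOut_le (hε : 0 ≤ ε) : dist (radialPushOut c ε y) y ≤ ε := by
  rcases eq_or_ne y c with rfl | hy
  · simpa [radialPushOut] using hε
  · have hpos : 0 < ‖y - c‖ := norm_pos_iff.2 (sub_ne_zero.2 hy)
    have hdiff : radialPushOut c ε y - y = ((max ε ‖y - c‖ - ‖y - c‖) / ‖y - c‖) • (y - c) := by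
      rw [radialPushOut]
      match_scalars <;> field_simp
      ring
    rw [dist_eq_norm, hdiff, norm_smul, norm_div, norm_norm, div_mul_cancel₀ _ hpos.ne',
      Real.norm_of_nonneg (sub_nonneg.2 (le_max_right _ _)), sub_le_iff_le_add]
    exact max_le (by linarith) (by linarith)

theorem exists_lipschitzOnWith_radialPushOut {s : Set E} (hs : IsClosed s) (hc : c ∉ s) (ε : ℝ) :
    ∃ K : NNReal, LipschitzOnWith K (radialPushOut c ε) s := by
  obtain ⟨d, hd, hds⟩ := Metric.mem_nhds_iff.1 (hs.isOpen_compl.mem_nhds hc)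
  have hdist {y : E} (hy : y ∈ s) : d ≤ ‖y - c‖ :=
    not_lt.1 fun h => hds (mem_ball_iff_norm.2 h) hy
  have hratio {z : E} (hz : z ∈ s) : max ε ‖z - c‖ / ‖z - c‖ ≤ max (|ε| / d) 1 := by
    have hpos := hd.trans_le (hdist hz)
    rw [← max_div_div_right hpos.le, div_self hpos.ne']
    refine max_le_max_right 1 ?_
    exact (div_le_div_of_nonneg_right (le_abs_self ε) hpos.le).trans
      (div_le_div_of_nonneg_left (abs_nonneg ε) hd (hdist hz))
  refine ⟨⟨1 + 2 * max (|ε| / d) 1, by positivity⟩, LipschitzOnWith.of_dist_le_mul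
    fun y hy z hz => ?_⟩
  have hmax : |max ε ‖y - c‖ - max ε ‖z - c‖| ≤ dist y z := by
    refine (abs_max_sub_max_le_max _ _ _ _).trans ?_
    simpa [dist_eq_norm] using abs_norm_sub_norm_le (y - c) (z - c)
  calc dist (radialPushOut c ε y) (radialPushOut c ε z)
      ≤ |max ε ‖y - c‖ - max ε ‖z - c‖| + 2 * (max ε ‖z - c‖ / ‖z - c‖) * dist y z := by
        rw [radialPushOut, radialPushOut, dist_add_left, dist_eq_norm, dist_eq_norm,
          ← sub_sub_sub_cancel_right y z c]
        exact norm_div_norm_smul_sub_le (norm_pos_iff.1 (hd.trans_le (hdist hy)))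
          (norm_pos_iff.1 (hd.trans_le (hdist hz))) _ ((norm_nonneg _).trans (le_max_right _ _))
    _ ≤ dist y z + 2 * max (|ε| / d) 1 * dist y z := by
        gcongr
        exact hratio hz
    _ = (1 + 2 * max (|ε| / d) 1) * dist y z := by ring

end RadialPushOut

section InvarianceOfDomain

variable {E : Type*} [NormedAddCommGroup E] [InnerProductSpace ℝ E] [FiniteDimensional ℝ E]

theorem det_fderiv_eq_zero_of_norm_sub_eq {f : E → E} {x c : E} {R : ℝ} (hR : R ≠ 0)
    (hf : DifferentiableAt ℝ f x) (hnorm : ∀ᶠ y in 𝓝 x, ‖f y - c‖ = R) :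
    (fderiv ℝ f x).det = 0 := by
  by_contra hdet
  have hsurj : Function.Surjective (fderiv ℝ f x) :=
    ((Module.End.isUnit_iff _).1 ((LinearMap.isUnit_iff_isUnit_det _).2
      (isUnit_iff_ne_zero.2 hdet))).2
  obtain ⟨v, hv⟩ := hsurj (f x - c)
  have hderiv := ((hf.hasFDerivAt.sub_const c).norm_sq.congr_of_eventuallyEq
    (hnorm.mono fun y hy => (congrArg (· ^ 2) hy.symm))).unique (hasFDerivAt_const (R ^ 2) x)
  have hzero := congrArg (fun L => L v) hderiv
  simp only [smul_apply, ContinuousLinearMap.comp_apply, hv, innerSL_apply_apply, zero_apply]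
    at hzero
  rw [real_inner_self_eq_norm_sq, hnorm.self_of_nhds] at hzero
  exact hR (by simpa using hzero)

theorem exists_norm_sub_ne_of_eqOn_id {K : NNReal} {F : E → E} (hF : LipschitzWith K F) {c : E}
    {R : ℝ} (hR : 0 < R) (hid : EqOn F id (Metric.ball c R)ᶜ) :
    ∃ x ∈ Metric.ball c R, ‖F x - c‖ ≠ R := by
  borelize E
  by_contra! hsphere
  have hzero : ∫ x in Metric.ball c R,
      (ContinuousLinearMap.id ℝ E + fderiv ℝ (fun x => F x - x) x).det = 0 := by
    refine setIntegral_eq_zero_of_ae_eq_zero ?_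
    filter_upwards [hF.ae_differentiableAt] with x hd hx
    rw [fderiv_fun_sub hd differentiableAt_fun_id, fderiv_fun_id, add_sub_cancel]
    exact det_fderiv_eq_zero_of_norm_sub_eq hR.ne' hd
      (eventually_of_mem (Metric.isOpen_ball.mem_nhds hx) hsphere)
  have hvolume := integral_det_id_add_fderiv volume (hF.sub LipschitzWith.id) measurableSet_ball
    (measure_ball_lt_top (x := c) (r := R)).ne fun x hx => by simp [hid hx]
  exact (ENNReal.toReal_pos (Metric.measure_ball_pos _ _ hR).ne' measure_ball_lt_top.ne).ne'
    (hvolume.symm.trans hzero)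

theorem surjective_of_lipschitzWith_of_eventually_eq_id {K : NNReal} {F : E → E}
    (hF : LipschitzWith K F) (hid : ∀ᶠ x in cocompact E, F x = x) : Function.Surjective F := by
  by_contra hsurj
  obtain ⟨p, hp⟩ := not_forall.1 hsurj
  have hclosed : IsClosed (range F) := (isProperMap_iff_tendsto_cocompact.2
    ⟨hF.continuous, tendsto_id.congr' (hid.mono fun _ h => h.symm)⟩).isClosedMap.isClosed_range
  obtain ⟨R₁, hR₁⟩ := Metric.closedBall_compl_subset_of_mem_cocompact hid p
  obtain ⟨R₂, hR₂⟩ :=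
    ((isCompact_closedBall p R₁).image hF.continuous).isBounded.subset_closedBall p
  obtain ⟨R, hRpos, hR₁R, hR₂R⟩ : ∃ R : ℝ, 0 < R ∧ R₁ < R ∧ R₂ ≤ R :=
    ⟨max 1 (max (R₁ + 1) R₂), by simp, by simp, by simp⟩
  obtain ⟨L, hL⟩ := exists_lipschitzOnWith_radialPushOut hclosed hp R
  have hbound (x : E) (hx : x ∈ Metric.ball p R) : ‖F x - p‖ ≤ R := by
    rw [← mem_closedBall_iff_norm]
    by_cases hxR : x ∈ Metric.closedBall p R₁
    · exact Metric.closedBall_subset_closedBall hR₂R (hR₂ (mem_image_of_mem F hxR))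
    · rw [show F x = x from hR₁ hxR]
      exact Metric.ball_subset_closedBall hx
  have hcomp : LipschitzWith (L * K) fun x => radialPushOut p R (F x) :=
    lipschitzOnWith_univ.1 (hL.comp hF.lipschitzOnWith fun x _ => mem_range_self x)
  obtain ⟨x, hx, hne⟩ := exists_norm_sub_ne_of_eqOn_id hcomp hRpos fun x hx => by
    have hxR : R ≤ dist x p := by simpa using hx
    have hFx : F x = x := hR₁ (by simpa using hR₁R.trans_le hxR)
    exact (congrArg _ hFx).trans (radialPushOut_of_le (by rwa [← dist_eq_norm]))
  exact hne ((norm_radialPushOut_sub fun h => hp ⟨x, h⟩).trans (max_eq_left (hbound x hx)))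

theorem lipschitzWith_smul_of_norm_le {X F : Type*} [PseudoMetricSpace X] [NormedAddCommGroup F]
    [NormedSpace ℝ F] {η : X → ℝ} {G : X → F} {K L M : NNReal} (hη : LipschitzWith K η)
    (hη1 : ∀ x, |η x| ≤ 1) (hG : LipschitzWith L G) (hM : ∀ x, η x ≠ 0 → ‖G x‖ ≤ M) :
    LipschitzWith (K * M + L) fun x => η x • G x := by
  have hone {x y : X} (hx : η x ≠ 0) : dist (η x • G x) (η y • G y) ≤ (K * M + L) * dist x y := by
    calc dist (η x • G x) (η y • G y) = ‖(η x - η y) • G x + η y • (G x - G y)‖ := by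
          rw [dist_eq_norm]
          congr 1
          module
      _ ≤ dist (η x) (η y) * ‖G x‖ + |η y| * dist (G x) (G y) := by
          refine (norm_add_le _ _).trans_eq ?_
          rw [norm_smul, norm_smul, dist_eq_norm, dist_eq_norm, Real.norm_eq_abs (η y)]
      _ ≤ K * dist x y * M + 1 * (L * dist x y) := by
          gcongr
          exacts [hη.dist_le_mul x y, hM x hx, hη1 y, hG.dist_le_mul x y]
      _ = (K * M + L) * dist x y := by ring
  refine LipschitzWith.of_dist_le_mul fun x y => ?_
  push_cast
  by_cases hx : η x = 0
  · by_cases hy : η y = 0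
    · simpa [hx, hy] using by positivity
    · rw [dist_comm, dist_comm x]
      exact hone hy
  · exact hone hx

theorem exists_lipschitzWith_eqOn_closedBall_half {C : NNReal} {F : E → E} {x₀ : E} {r δ : ℝ}
    (hr : 0 < r) (hF : LipschitzOnWith C F (Metric.closedBall x₀ r))
    (hδ : ∀ x ∈ Metric.closedBall x₀ r, dist (F x) x ≤ δ) :
    ∃ (K : NNReal) (G : E → E), LipschitzWith K G ∧ EqOn G F (Metric.closedBall x₀ (r / 2)) ∧
      EqOn G id (Metric.closedBall x₀ r)ᶜ ∧ ∀ x, dist (G x) x ≤ δ := by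
  obtain ⟨F', hF', hFF'⟩ := hF.extend_finite_dimension
  have hr2 : 0 < r / 2 := by positivity
  let η (x : E) : ℝ := thickenedIndicator hr2 (Metric.closedBall x₀ (r / 2)) x
  have hηone (x : E) : |η x| ≤ 1 := by
    rw [abs_of_nonneg NNReal.zero_le_coe]
    exact_mod_cast thickenedIndicator_le_one hr2 _ x
  have hηzero (x : E) (hx : η x ≠ 0) : x ∈ Metric.closedBall x₀ r := by
    by_contra hxr
    refine hx (NNReal.coe_eq_zero.2 (thickenedIndicator_zero hr2 _ fun hmem => hxr ?_))
    rw [thickening_closedBall hr2 hr2.le, add_halves] at hmem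
    exact Metric.ball_subset_closedBall hmem
  have hF'δ (x : E) (hx : η x ≠ 0) : ‖F' x - x‖ ≤ δ := by
    rw [← dist_eq_norm, ← hFF' (hηzero x hx)]
    exact hδ x (hηzero x hx)
  have hδ0 : 0 ≤ δ := dist_nonneg.trans (hδ x₀ (Metric.mem_closedBall_self hr.le))
  refine ⟨_, fun x => x + η x • (F' x - x), LipschitzWith.id.add
    (lipschitzWith_smul_of_norm_le (M := ⟨δ, hδ0⟩) (lipschitzWith_thickenedIndicator hr2 _) hηone
      (hF'.sub LipschitzWith.id) hF'δ), fun x hx => ?_, fun x hx => ?_, fun x => ?_⟩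
  · have hηx : η x = 1 := NNReal.coe_eq_one.2 (thickenedIndicator_one hr2 _ hx)
    simp [hηx, hFF' (Metric.closedBall_subset_closedBall (half_le_self hr.le) hx)]
  · simp [not_imp_comm.1 (hηzero x) hx]
  · rw [dist_eq_norm, add_sub_cancel_left, norm_smul, Real.norm_eq_abs]
    by_cases hηx : η x = 0
    · simpa [hηx] using hδ0
    · exact (mul_le_of_le_one_left (norm_nonneg _) (hηone x)).trans (hF'δ x hηx)

theorem exists_mem_closedBall_eq_of_dist_le {C : NNReal} {F : E → E} {x₀ p : E} {r δ : ℝ}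
    (hr : 0 < r) (hF : LipschitzOnWith C F (Metric.closedBall x₀ r))
    (hδ : ∀ x ∈ Metric.closedBall x₀ r, dist (F x) x ≤ δ) (hp : dist p x₀ + δ ≤ r / 2) :
    ∃ x ∈ Metric.closedBall x₀ r, F x = p := by
  obtain ⟨K, G, hG, hGF, hGid, hGδ⟩ := exists_lipschitzWith_eqOn_closedBall_half hr hF hδ
  obtain ⟨x, rfl⟩ := surjective_of_lipschitzWith_of_eventually_eq_id hG
    (mem_of_superset (isCompact_closedBall x₀ r).compl_mem_cocompact hGid) p
  have hx : x ∈ Metric.closedBall x₀ (r / 2) := by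
    rw [Metric.mem_closedBall]
    linarith [dist_triangle_left x x₀ (G x), hGδ x]
  exact ⟨x, Metric.closedBall_subset_closedBall (half_le_self hr.le) hx, (hGF hx).symm⟩

variable {K L : NNReal} {h G : E → E} {x₀ : E} {r : ℝ}

theorem le_norm_sub_of_notMem_image_closedBall (hr : 0 < r)
    (hh : LipschitzOnWith K h (Metric.closedBall x₀ r)) (hG : LipschitzWith L G)
    (hGh : LeftInvOn G h (Metric.closedBall x₀ r)) {c : E} (hc : c ∉ h '' Metric.closedBall x₀ r)
    {ε : ℝ} (hε : 0 ≤ ε) {p : E} (hpr : dist p x₀ + L * ε ≤ r / 2)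
    (hp : p ∉ G '' Metric.sphere c ε) : ε ≤ ‖h p - c‖ := by
  have hclosed : IsClosed (h '' Metric.closedBall x₀ r) :=
    ((isCompact_closedBall x₀ r).image_of_continuousOn hh.continuousOn).isClosed
  obtain ⟨M, hM⟩ := exists_lipschitzOnWith_radialPushOut hclosed hc ε
  have hlip := hG.comp_lipschitzOnWith (hM.comp hh (mapsTo_image h _))
  obtain ⟨x, hxr, hx⟩ := exists_mem_closedBall_eq_of_dist_le hr hlip (fun x hx => by
    calc dist (G (radialPushOut c ε (h x))) x
        = dist (G (radialPushOut c ε (h x))) (G (h x)) := by rw [hGh hx]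
      _ ≤ L * ε := (hG.dist_le_mul _ _).trans (by gcongr; exact dist_radialPushOut_le hε)) hpr
  simp only [Function.comp_apply] at hx
  rcases le_total ε ‖h x - c‖ with hle | hle
  · rw [radialPushOut_of_le hle, hGh hxr] at hx
    rwa [← hx]
  · refine absurd ⟨_, mem_sphere_iff_norm.2 ?_, hx⟩ hp
    rw [norm_radialPushOut_sub fun heq => hc ⟨x, hxr, heq⟩, max_eq_left hle]

-- The Lipschitz image of a sphere is null, so the points outside it are dense.
theorem ball_subset_image_closedBall (hr : 0 < r)
    (hh : LipschitzOnWith K h (Metric.closedBall x₀ r)) (hG : LipschitzWith L G)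
    (hGh : LeftInvOn G h (Metric.closedBall x₀ r)) {ε : ℝ} (hε : 0 < ε) (hLε : L * ε < r / 2) :
    Metric.ball (h x₀) ε ⊆ h '' Metric.closedBall x₀ r := by
  borelize E
  intro c hcε
  by_contra hc
  have hnull : volume (G '' Metric.sphere c ε) = 0 :=
    addHaar_image_eq_zero_of_lipschitzOnWith volume hG.lipschitzOnWith
      (Measure.addHaar_sphere_of_ne_zero _ _ hε.ne')
  have hdense : Dense (G '' Metric.sphere c ε)ᶜ :=
    Measure.dense_of_ae (measure_eq_zero_iff_ae_notMem.1 hnull)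
  have hnear : ∀ᶠ p in 𝓝 x₀, dist p x₀ + L * ε ≤ r / 2 :=
    mem_of_superset (Metric.ball_mem_nhds x₀ (sub_pos.2 hLε)) fun p hp =>
      (lt_sub_iff_add_lt.1 (Metric.mem_ball.1 hp)).le
  have hcont : Tendsto (fun p => ‖h p - c‖) (𝓝 x₀) (𝓝 ‖h x₀ - c‖) :=
    ((hh.continuousOn.continuousAt (Metric.closedBall_mem_nhds x₀ hr)).sub_const c).norm
  have hle : ε ≤ ‖h x₀ - c‖ := ge_of_tendsto_of_frequently hcont
    (((mem_closure_iff_frequently.1 (hdense x₀)).and_eventually hnear).mono fun p hp =>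
      le_norm_sub_of_notMem_image_closedBall hr hh hG hGh hc hε.le hp.2 hp.1)
  rw [Metric.mem_ball, dist_comm, dist_eq_norm] at hcε
  exact hle.not_gt hcε

theorem isOpen_image_of_lipschitzOnWith {U : Set E} (hU : IsOpen U) {hinv : E → E}
    (hh : LipschitzOnWith K h U) (hhinv : LipschitzOnWith L hinv (h '' U))
    (hleft : LeftInvOn hinv h U) : IsOpen (h '' U) := by
  rw [isOpen_iff_mem_nhds]
  rintro _ ⟨x, hx, rfl⟩
  obtain ⟨r, hr, hrU⟩ := Metric.nhds_basis_closedBall.mem_iff.1 (hU.mem_nhds hx)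
  obtain ⟨G, hG, hGeq⟩ := hhinv.extend_finite_dimension
  set M := lipschitzExtensionConstant E * L
  have hLε : M * (r / (2 * (M + 1))) < r / 2 := by
    rw [mul_div_assoc', div_lt_div_iff₀ (by positivity) two_pos]
    nlinarith [M.coe_nonneg]
  refine mem_of_superset (Metric.ball_mem_nhds (h x) (show 0 < r / (2 * (M + 1)) by positivity))
    ((ball_subset_image_closedBall hr (hh.mono hrU) hG (fun y hy => ?_) (by positivity) hLε).trans
      (image_mono hrU))
  rw [← hGeq (mem_image_of_mem h (hrU hy)), hleft (hrU hy)]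

end InvarianceOfDomain

/-! ### Oscillation of `C¹` functions on Lipschitz images of convex sets -/

section Path

variable {E F : Type*} [NormedAddCommGroup E] [NormedSpace ℝ E] [NormedAddCommGroup F]
  [NormedSpace ℝ F] {u : E → F} {γ : ℝ → E} {L : NNReal}

theorem eventually_slope_norm_sub_lt (hγ : LipschitzWith L γ) (hu : ContDiff ℝ 1 u) (c : F)
    {x r : ℝ} (hr : L * ‖fderiv ℝ u (γ x)‖ < r) :
    ∀ᶠ z in 𝓝[>] x, slope (fun t => ‖u (γ t) - c‖) x z < r := by
  obtain ⟨K, hKr, hK⟩ : ∃ K : NNReal, L * (K : ℝ) < r ∧ ‖fderiv ℝ u (γ x)‖₊ < K := by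
    have hcont : Continuous fun K : NNReal => L * (K : ℝ) := by fun_prop
    have hlt : ∀ᶠ K : NNReal in 𝓝[>] ‖fderiv ℝ u (γ x)‖₊, L * (K : ℝ) < r :=
      nhdsWithin_le_nhds (hcont.continuousAt.eventually_lt_const hr)
    exact (hlt.and self_mem_nhdsWithin).exists
  obtain ⟨s, hs, hlip⟩ :=
    (hu.contDiffAt.hasStrictFDerivAt one_ne_zero).exists_lipschitzOnWith_of_nnnorm_lt K hK
  filter_upwards [hγ.continuous.continuousAt.continuousWithinAt.eventually hs,
    self_mem_nhdsWithin] with z hz (hxz : x < z)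
  rw [slope_def_field, div_lt_iff₀ (sub_pos.2 hxz)]
  calc ‖u (γ z) - c‖ - ‖u (γ x) - c‖ ≤ ‖u (γ z) - u (γ x)‖ := by
        simpa only [sub_sub_sub_cancel_right] using norm_sub_norm_le (u (γ z) - c) (u (γ x) - c)
    _ ≤ K * (L * (z - x)) := by
        rw [← dist_eq_norm]
        refine (hlip.dist_le_mul _ hz _ (mem_of_mem_nhds hs)).trans ?_
        gcongr
        simpa [Real.dist_eq, abs_of_pos (sub_pos.2 hxz)] using hγ.dist_le_mul z x
    _ = L * K * (z - x) := by ring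
    _ < r * (z - x) := by gcongr

theorem norm_sub_le_mul_integral_norm_fderiv (hγ : LipschitzWith L γ) (hu : ContDiff ℝ 1 u) :
    ‖u (γ 1) - u (γ 0)‖ ≤ L * ∫ t in (0 : ℝ)..1, ‖fderiv ℝ u (γ t)‖ := by
  have hcont : Continuous fun t => ‖fderiv ℝ u (γ t)‖ :=
    ((hu.continuous_fderiv one_ne_zero).comp hγ.continuous).norm
  refine image_le_of_liminf_slope_right_le_deriv_boundary (f := fun t => ‖u (γ t) - u (γ 0)‖)
    (a := 0) (b := 1) (B := fun t => L * ∫ s in (0 : ℝ)..t, ‖fderiv ℝ u (γ s)‖)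
    (B' := fun t => L * ‖fderiv ℝ u (γ t)‖) ?_ (by simp) ?_ (fun x _ => ?_)
    (fun x _ r hr => (eventually_slope_norm_sub_lt hγ hu _ hr).frequently)
    (right_mem_Icc.2 zero_le_one)
  · exact ((hu.continuous.comp hγ.continuous).sub continuous_const).norm.continuousOn
  · exact (continuous_const.mul (intervalIntegral.continuous_primitive
      (fun a b => hcont.intervalIntegrable a b) 0)).continuousOn
  · exact ((hcont.integral_hasStrictDerivAt 0 x).hasDerivAt.const_mul (L : ℝ)).hasDerivWithinAt

theorem enorm_sub_le_mul_lintegral_enorm_fderiv (hγ : LipschitzWith L γ) (hu : ContDiff ℝ 1 u) :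
    ‖u (γ 0) - u (γ 1)‖ₑ ≤ L * ∫⁻ t in Icc (0 : ℝ) 1, ‖fderiv ℝ u (γ t)‖ₑ := by
  have hcont : Continuous fun t => fderiv ℝ u (γ t) :=
    (hu.continuous_fderiv one_ne_zero).comp hγ.continuous
  rw [← ofReal_integral_norm_eq_lintegral_enorm hcont.integrableOn_Icc, ← ENNReal.ofReal_coe_nnreal,
    ← ENNReal.ofReal_mul L.coe_nonneg, ← ofReal_norm, norm_sub_rev, integral_Icc_eq_integral_Ioc,
    ← intervalIntegral.integral_of_le zero_le_one]
  exact ENNReal.ofReal_le_ofReal (norm_sub_le_mul_integral_norm_fderiv hγ hu)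

theorem lipschitzWith_add_smul_sub {d : NNReal} {y z : E} (h : ‖z - y‖₊ ≤ d) :
    LipschitzWith d fun t : ℝ => y + t • (z - y) := by
  refine LipschitzWith.of_dist_le_mul fun s t => ?_
  rw [dist_add_left, dist_eq_norm, ← sub_smul, norm_smul, ← dist_eq_norm, mul_comm]
  gcongr
  exact_mod_cast h

end Path

section Segments

variable {E : Type*} [NormedAddCommGroup E] [NormedSpace ℝ E] [FiniteDimensional ℝ E]
  [MeasurableSpace E] [BorelSpace E] (μ : Measure E) [μ.IsAddHaarMeasure] {H : E → ℝ≥0∞}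

local notation "dim" => Module.finrank ℝ E

theorem lintegral_smul_add_le (hH : Measurable H) {a : ℝ} (ha : 1 / 2 ≤ a) (b : E) :
    ∫⁻ y, H (a • y + b) ∂μ ≤ 2 ^ dim * ∫⁻ y, H y ∂μ := by
  have ha0 : 0 < a := by linarith
  calc ∫⁻ y, H (a • y + b) ∂μ = ∫⁻ y, H (y + b) ∂(Measure.map (a • ·) μ) := by
        rw [lintegral_map (by fun_prop) (by fun_prop)]
    _ = ENNReal.ofReal |(a ^ dim)⁻¹| * ∫⁻ y, H y ∂μ := by
        rw [Measure.map_addHaar_smul _ ha0.ne', lintegral_smul_measure,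
          lintegral_add_right_eq_self, smul_eq_mul]
    _ ≤ 2 ^ dim * ∫⁻ y, H y ∂μ := by
        rw [abs_of_nonneg (by positivity), ← inv_pow, ENNReal.ofReal_pow (by positivity)]
        gcongr
        refine ENNReal.ofReal_le_of_le_toReal ?_
        rw [inv_le_comm₀ ha0 (by norm_num)]
        norm_num at ha ⊢
        exact ha

/- One of the two weights `1 - t`, `t` is at least `1 / 2`; integrate first in the variable that
carries it. -/
theorem lintegral_lintegral_add_smul_sub_le (hH : Measurable H) (t : ℝ) (D : Set E) :
    ∫⁻ y in D, ∫⁻ z in D, H (y + t • (z - y)) ∂μ ∂μ ≤ 2 ^ dim * μ D * ∫⁻ y, H y ∂μ := by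
  have hconst : ∫⁻ _ in D, (2 ^ dim * ∫⁻ y, H y ∂μ) ∂μ = 2 ^ dim * μ D * ∫⁻ y, H y ∂μ := by
    rw [setLIntegral_const]
    ring
  rw [← hconst]
  rcases le_total (1 / 2) t with ht | ht
  · refine lintegral_mono fun y => (setLIntegral_le_lintegral _ _).trans ?_
    have hz : ∀ z, y + t • (z - y) = t • z + (1 - t) • y := fun z => by module
    simpa only [hz] using lintegral_smul_add_le μ hH ht ((1 - t) • y)
  · rw [lintegral_lintegral_swap (by fun_prop)]
    refine lintegral_mono fun z => (setLIntegral_le_lintegral _ _).trans ?_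
    have hy : ∀ y, y + t • (z - y) = (1 - t) • y + t • z := fun y => by module
    simpa only [hy] using lintegral_smul_add_le μ hH (a := 1 - t) (by linarith) (t • z)

theorem lintegral_lintegral_lintegral_Icc_segment_le (hH : Measurable H) (D : Set E) :
    ∫⁻ y in D, ∫⁻ z in D, (∫⁻ t in Icc (0 : ℝ) 1, H (y + t • (z - y))) ∂μ ∂μ ≤
      2 ^ dim * μ D * ∫⁻ y, H y ∂μ := by
  have hmeas : Measurable fun q : (ℝ × E) × E => H (q.1.2 + q.1.1 • (q.2 - q.1.2)) := by fun_prop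
  calc ∫⁻ y in D, ∫⁻ z in D, (∫⁻ t in Icc (0 : ℝ) 1, H (y + t • (z - y))) ∂μ ∂μ
      = ∫⁻ y in D, (∫⁻ t in Icc (0 : ℝ) 1, ∫⁻ z in D, H (y + t • (z - y)) ∂μ) ∂μ :=
        lintegral_congr fun y => lintegral_lintegral_swap (by fun_prop)
    _ = ∫⁻ t in Icc (0 : ℝ) 1, ∫⁻ y in D, ∫⁻ z in D, H (y + t • (z - y)) ∂μ ∂μ :=
        (lintegral_lintegral_swap (f := fun t y => ∫⁻ z in D, H (y + t • (z - y)) ∂μ)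
          hmeas.lintegral_prod_right'.aemeasurable).symm
    _ ≤ ∫⁻ _ in Icc (0 : ℝ) 1, 2 ^ dim * μ D * ∫⁻ y, H y ∂μ :=
        lintegral_mono fun t => lintegral_lintegral_add_smul_sub_le μ hH t D
    _ = 2 ^ dim * μ D * ∫⁻ y, H y ∂μ := by simp

variable {F : Type*} [NormedAddCommGroup F] [NormedSpace ℝ F] {D : Set E} {d K : NNReal}
  {g : E → E} {u : E → F}

theorem lintegral_prod_enorm_comp_sub_comp_le (hDc : Convex ℝ D) (hDm : MeasurableSet D)
    (hd : ∀ y ∈ D, ∀ z ∈ D, ‖z - y‖₊ ≤ d) (hg : LipschitzWith K g) (hu : ContDiff ℝ 1 u) :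
    ∫⁻ p in D ×ˢ D, ‖u (g p.1) - u (g p.2)‖ₑ ∂(μ.prod μ) ≤
      K * d * (2 ^ dim * μ D * ∫⁻ y in D, ‖fderiv ℝ u (g y)‖ₑ ∂μ) := by
  have hmeas : Measurable fun p : E × E => ‖u (g p.1) - u (g p.2)‖ₑ :=
    have hug := hu.continuous.comp hg.continuous
    ((hug.comp continuous_fst).sub (hug.comp continuous_snd)).enorm.measurable
  set H := D.indicator fun y => ‖fderiv ℝ u (g y)‖ₑ with hH
  have hHm : Measurable H :=
    ((hu.continuous_fderiv one_ne_zero).comp hg.continuous).enorm.measurable.indicator hDm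
  have hseg : ∀ y ∈ D, ∀ z ∈ D, ‖u (g y) - u (g z)‖ₑ ≤
      (K * d : NNReal) * ∫⁻ t in Icc (0 : ℝ) 1, H (y + t • (z - y)) := by
    intro y hy z hz
    have hpath := enorm_sub_le_mul_lintegral_enorm_fderiv
      (hg.comp (lipschitzWith_add_smul_sub (hd y hy z hz))) hu
    simp only [Function.comp_apply, zero_smul, add_zero, one_smul, add_sub_cancel] at hpath
    refine hpath.trans (mul_le_mul' le_rfl (setLIntegral_mono' measurableSet_Icc fun t ht => ?_))
    rw [hH, indicator_of_mem (hDc.add_smul_sub_mem hy hz ht)]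
  rw [← Measure.prod_restrict, lintegral_prod _ hmeas.aemeasurable,
    ← lintegral_indicator hDm fun y => ‖fderiv ℝ u (g y)‖ₑ, ← ENNReal.coe_mul]
  calc ∫⁻ y in D, ∫⁻ z in D, ‖u (g y) - u (g z)‖ₑ ∂μ ∂μ
      ≤ ∫⁻ y in D, ∫⁻ z in D,
          (K * d : NNReal) * (∫⁻ t in Icc (0 : ℝ) 1, H (y + t • (z - y))) ∂μ ∂μ :=
        setLIntegral_mono' hDm fun y hy => setLIntegral_mono' hDm fun z hz => hseg y hy z hz
    _ = (K * d : NNReal) *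
          ∫⁻ y in D, ∫⁻ z in D, (∫⁻ t in Icc (0 : ℝ) 1, H (y + t • (z - y))) ∂μ ∂μ := by
        simp only [lintegral_const_mul' _ _ ENNReal.coe_ne_top]
    _ ≤ _ := mul_le_mul' le_rfl (lintegral_lintegral_lintegral_Icc_segment_le μ hHm D)

end Segments

/-! ### Weak derivatives and mollification -/

theorem fderiv_comp_const_sub_apply {E F : Type*} [NormedAddCommGroup E] [NormedSpace ℝ E]
    [NormedAddCommGroup F] [NormedSpace ℝ F] {ψ : E → F} (hψ : Differentiable ℝ ψ) (x t v : E) :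
    fderiv ℝ (fun s => ψ (x - s)) t v = -fderiv ℝ ψ (x - t) v := by
  have hchain := (hψ (x - t)).hasFDerivAt.comp t ((hasFDerivAt_id t).const_sub x)
  simpa [Function.comp_def] using DFunLike.congr_fun hchain.fderiv v

section WeakDerivative

open ContinuousLinearMap (lsmul)
open scoped Convolution

variable {E F : Type*} [NormedAddCommGroup E] [NormedSpace ℝ E] [MeasurableSpace E]
  [NormedAddCommGroup F] [NormedSpace ℝ F] {μ : Measure E} {Ω M : Set E} {u : E → F}
  {Du : E → E →L[ℝ] F} {ψ : E → ℝ}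

/-- `u ∈ W^{1,1}(Ω; F)` with weak derivative `Du`, formulated without coordinates: the weak
derivative is a field of continuous linear maps and is tested in every direction `v`. -/
structure HasWeakFDerivOn (μ : Measure E) (Ω : Set E) (u : E → F) (Du : E → E →L[ℝ] F) :
    Prop where
  integrableOn : IntegrableOn u Ω μ
  integrableOn_fderiv : IntegrableOn Du Ω μ
  integral_fderiv_smul : ∀ φ : E → ℝ, ContDiff ℝ 1 φ → HasCompactSupport φ → tsupport φ ⊆ Ω →
    ∀ v, ∫ x in Ω, fderiv ℝ φ x v • u x ∂μ = -∫ x in Ω, φ x • Du x v ∂μ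

variable [FiniteDimensional ℝ E] [BorelSpace E]

theorem contDiff_convolution_indicator [μ.IsAddHaarMeasure] (hΩ : MeasurableSet Ω)
    (hu : IntegrableOn u Ω μ) (hψ : ContDiff ℝ 1 ψ) (hψc : HasCompactSupport ψ) :
    ContDiff ℝ 1 (ψ ⋆[lsmul ℝ ℝ, μ] Ω.indicator u) := by
  rw [← convolution_flip]
  exact hψc.contDiff_convolution_right _ (hu.integrable_indicator hΩ).locallyIntegrable hψ

theorem fderiv_convolution_indicator_apply [μ.IsAddHaarMeasure] (hΩ : MeasurableSet Ω)
    (hu : IntegrableOn u Ω μ) (hψ : ContDiff ℝ 1 ψ) (hψc : HasCompactSupport ψ) (x v : E) :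
    fderiv ℝ (ψ ⋆[lsmul ℝ ℝ, μ] Ω.indicator u) x v =
      ∫ t in Ω, fderiv ℝ ψ (x - t) v • u t ∂μ := by
  have hloc : LocallyIntegrable (Ω.indicator u) μ := (hu.integrable_indicator hΩ).locallyIntegrable
  rw [← convolution_flip, (hψc.hasFDerivAt_convolution_right _ hloc hψ x).fderiv,
    convolution_precompR_apply _ hloc (hψc.fderiv ℝ) (hψ.continuous_fderiv one_ne_zero),
    convolution_def, ← integral_indicator hΩ]
  congr 1 with t
  by_cases ht : t ∈ Ω <;> simp [ht]

namespace HasWeakFDerivOn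

theorem fderiv_convolution [μ.IsAddHaarMeasure] [CompleteSpace F] (hu : HasWeakFDerivOn μ Ω u Du)
    (hΩ : MeasurableSet Ω) (hψ : ContDiff ℝ 1 ψ) (hψc : HasCompactSupport ψ) {x : E}
    (hx : tsupport (fun t => ψ (x - t)) ⊆ Ω) :
    fderiv ℝ (ψ ⋆[lsmul ℝ ℝ, μ] Ω.indicator u) x = ∫ t in Ω, ψ (x - t) • Du t ∂μ := by
  have hψx : ContDiff ℝ 1 fun t => ψ (x - t) := hψ.comp (contDiff_const.sub contDiff_id)
  have hψxc : HasCompactSupport fun t => ψ (x - t) :=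
    hψc.comp_homeomorph (Homeomorph.subLeft x)
  have hint : Integrable (fun t => ψ (x - t) • Du t) (μ.restrict Ω) :=
    (Integrable.locallyIntegrable hu.integrableOn_fderiv).integrable_smul_left_of_hasCompactSupport
      hψx.continuous hψxc
  ext v
  have hparts := hu.integral_fderiv_smul _ hψx hψxc hx v
  simp only [fderiv_comp_const_sub_apply (hψ.differentiable one_ne_zero), neg_smul, integral_neg,
    neg_inj] at hparts
  rw [fderiv_convolution_indicator_apply hΩ hu.integrableOn hψ hψc, hparts,
    ContinuousLinearMap.integral_apply hint]
  rfl

theorem lintegral_enorm_fderiv_convolution_le [μ.IsAddHaarMeasure] [CompleteSpace F]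
    (hu : HasWeakFDerivOn μ Ω u Du) (hΩ : MeasurableSet Ω) (hψ : ContDiff ℝ 1 ψ)
    (hψc : HasCompactSupport ψ) (hM : MeasurableSet M)
    (hMΩ : ∀ x ∈ M, tsupport (fun t => ψ (x - t)) ⊆ Ω) :
    ∫⁻ x in M, ‖fderiv ℝ (ψ ⋆[lsmul ℝ ℝ, μ] Ω.indicator u) x‖ₑ ∂μ ≤
      (∫⁻ x, ‖ψ x‖ₑ ∂μ) * ∫⁻ x in Ω, ‖Du x‖ₑ ∂μ := by
  have hmeas : AEMeasurable (Function.uncurry fun x t => ‖ψ (x - t)‖ₑ * ‖Du t‖ₑ)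
      (μ.prod (μ.restrict Ω)) :=
    (hψ.continuous.enorm.measurable.comp (measurable_fst.sub measurable_snd)).aemeasurable.mul
      (hu.integrableOn_fderiv.aestronglyMeasurable.enorm.comp_quasiMeasurePreserving
        Measure.quasiMeasurePreserving_snd)
  calc ∫⁻ x in M, ‖fderiv ℝ (ψ ⋆[lsmul ℝ ℝ, μ] Ω.indicator u) x‖ₑ ∂μ
      ≤ ∫⁻ x in M, ∫⁻ t in Ω, ‖ψ (x - t)‖ₑ * ‖Du t‖ₑ ∂μ ∂μ := by
        refine setLIntegral_mono' hM fun x hx => ?_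
        rw [hu.fderiv_convolution hΩ hψ hψc (hMΩ x hx)]
        simpa only [enorm_smul] using
          enorm_integral_le_lintegral_enorm (μ := μ.restrict Ω) fun t => ψ (x - t) • Du t
    _ ≤ ∫⁻ x, ∫⁻ t in Ω, ‖ψ (x - t)‖ₑ * ‖Du t‖ₑ ∂μ ∂μ := setLIntegral_le_lintegral _ _
    _ = ∫⁻ t in Ω, (∫⁻ x, ‖ψ x‖ₑ ∂μ) * ‖Du t‖ₑ ∂μ := by
        rw [lintegral_lintegral_swap hmeas]
        refine lintegral_congr fun t => ?_
        rw [lintegral_mul_const' _ _ enorm_ne_top, lintegral_sub_right_eq_self fun x => ‖ψ x‖ₑ]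
    _ = (∫⁻ x, ‖ψ x‖ₑ ∂μ) * ∫⁻ x in Ω, ‖Du x‖ₑ ∂μ :=
        lintegral_const_mul'' _ hu.integrableOn_fderiv.aestronglyMeasurable.enorm

end HasWeakFDerivOn

theorem lintegral_enorm_contDiffBump_normed [μ.IsAddHaarMeasure] {c : E} (φ : ContDiffBump c) :
    ∫⁻ x, ‖φ.normed μ x‖ₑ ∂μ = 1 := by
  rw [← ofReal_integral_norm_eq_lintegral_enorm φ.integrable_normed]
  simp only [Real.norm_of_nonneg (φ.nonneg_normed _), φ.integral_normed, ENNReal.ofReal_one]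

theorem tsupport_contDiffBump_normed_sub_subset [μ.IsAddHaarMeasure] (φ : ContDiffBump (0 : E))
    (x : E) : tsupport (fun t => φ.normed μ (x - t)) ⊆ Metric.closedBall x φ.rOut := by
  refine closure_minimal (fun t ht => ?_) Metric.isClosed_closedBall
  have hmem : x - t ∈ Function.support (φ.normed μ) := ht
  rw [φ.support_normed_eq, mem_ball_zero_iff] at hmem
  rw [mem_closedBall_iff_norm, norm_sub_rev]
  exact hmem.le

theorem HasWeakFDerivOn.exists_contDiff_approx [μ.IsAddHaarMeasure] [CompleteSpace F]
    (hu : HasWeakFDerivOn μ Ω u Du) (hΩ : IsOpen Ω) (hM : IsCompact M) (hMΩ : M ⊆ Ω) :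
    ∃ U : ℕ → E → F, (∀ k, ContDiff ℝ 1 (U k)) ∧
      (∀ᵐ x ∂μ, x ∈ Ω → Tendsto (fun k => U k x) atTop (𝓝 (u x))) ∧
      ∀ᶠ k in atTop, ∫⁻ x in M, ‖fderiv ℝ (U k) x‖ₑ ∂μ ≤ ∫⁻ x in Ω, ‖Du x‖ₑ ∂μ := by
  let φ : ℕ → ContDiffBump (0 : E) := fun k =>
    ⟨1 / ((k : ℝ) + 1), 2 * (1 / ((k : ℝ) + 1)), by positivity,
      lt_two_mul_self (by positivity)⟩
  have hφ : Tendsto (fun k => (φ k).rOut) atTop (𝓝 0) := by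
    simpa [φ] using (tendsto_one_div_add_atTop_nhds_zero_nat (𝕜 := ℝ)).const_mul 2
  refine ⟨fun k => (φ k).normed μ ⋆[lsmul ℝ ℝ, μ] Ω.indicator u, fun k =>
    contDiff_convolution_indicator hΩ.measurableSet hu.integrableOn (φ k).contDiff_normed
      (φ k).hasCompactSupport_normed, ?_, ?_⟩
  · filter_upwards [ContDiffBump.ae_convolution_tendsto_right_of_locallyIntegrable hφ (K := 2)
      (.of_forall fun k => le_rfl)
      (hu.integrableOn.integrable_indicator hΩ.measurableSet).locallyIntegrable] with x hx hxΩ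
    rwa [indicator_of_mem hxΩ] at hx
  · obtain ⟨δ, hδ, hδΩ⟩ := hM.exists_cthickening_subset_open hΩ hMΩ
    filter_upwards [hφ.eventually_lt_const hδ] with k hk
    refine (hu.lintegral_enorm_fderiv_convolution_le hΩ.measurableSet (φ k).contDiff_normed
      (φ k).hasCompactSupport_normed hM.measurableSet fun x hx => ?_).trans_eq ?_
    · calc _ ⊆ Metric.closedBall x (φ k).rOut := tsupport_contDiffBump_normed_sub_subset _ x
        _ ⊆ Metric.closedBall x δ := Metric.closedBall_subset_closedBall hk.le
        _ ⊆ Metric.cthickening δ M := Metric.closedBall_subset_cthickening hx δ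
        _ ⊆ Ω := hδΩ
    · rw [lintegral_enorm_contDiffBump_normed, one_mul]

end WeakDerivative

/-! ### Oscillation of weakly differentiable functions in bi-Lipschitz charts -/

section Exhaustion

theorem isClosed_setOf_ball_subset {X : Type*} [PseudoMetricSpace X] (r : ℝ) (D : Set X) :
    IsClosed {y | Metric.ball y r ⊆ D} := by
  have hcompl : {y | Metric.ball y r ⊆ D} = (Metric.thickening r Dᶜ)ᶜ := by
    ext y
    simp only [mem_ofPred_eq, mem_compl_iff, Metric.mem_thickening_iff, not_exists, not_and, not_lt,
      subset_def, Metric.mem_ball']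
    exact forall_congr' fun z => by rw [← not_imp_not, not_lt]
  rw [hcompl]
  exact Metric.isOpen_thickening.isClosed_compl

theorem convex_setOf_ball_subset {E : Type*} [NormedAddCommGroup E] [NormedSpace ℝ E] {D : Set E}
    (hD : Convex ℝ D) (r : ℝ) : Convex ℝ {y | Metric.ball y r ⊆ D} := by
  have hinter : {y | Metric.ball y r ⊆ D} = ⋂ v ∈ Metric.ball 0 r, (fun y => v + y) ⁻¹' D := by
    ext y
    simp only [mem_ofPred_eq, mem_iInter, mem_preimage, mem_ball_zero_iff]
    refine ⟨fun h v hv => h (by simpa using hv), fun h z hz => ?_⟩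
    simpa using h (z - y) (by rwa [← mem_ball_iff_norm])
  rw [hinter]
  exact convex_iInter₂ fun v _ => hD.translate_preimage_right v

theorem exists_monotone_isCompact_convex_iUnion_eq {E : Type*} [NormedAddCommGroup E]
    [NormedSpace ℝ E] [ProperSpace E] {D : Set E} (hDo : IsOpen D) (hDc : Convex ℝ D)
    (hDb : Bornology.IsBounded D) :
    ∃ Q : ℕ → Set E, Monotone Q ∧ (∀ j, IsCompact (Q j) ∧ Convex ℝ (Q j)) ∧ ⋃ j, Q j = D := by
  have hsub : ∀ j : ℕ, {y | Metric.ball y (1 / ((j : ℝ) + 1)) ⊆ D} ⊆ D := fun j y hy =>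
    hy (Metric.mem_ball_self (by positivity))
  refine ⟨fun j => {y | Metric.ball y (1 / ((j : ℝ) + 1)) ⊆ D}, fun i j hij y hy => ?_,
    fun j => ⟨Metric.isCompact_of_isClosed_isBounded (isClosed_setOf_ball_subset _ D)
      (hDb.subset (hsub j)), convex_setOf_ball_subset hDc _⟩,
    (iUnion_subset hsub).antisymm fun y hy => ?_⟩
  · exact (Metric.ball_subset_ball (Nat.one_div_le_one_div hij)).trans hy
  · obtain ⟨ε, hε, hball⟩ := Metric.isOpen_iff.1 hDo y hy
    obtain ⟨j, hj⟩ := exists_nat_one_div_lt hε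
    exact mem_iUnion.2 ⟨j, (Metric.ball_subset_ball hj.le).trans hball⟩

end Exhaustion

section Chart

variable {E F : Type*} [NormedAddCommGroup E] [NormedSpace ℝ E] [FiniteDimensional ℝ E]
  [MeasurableSpace E] [BorelSpace E] (μ : Measure E) [μ.IsAddHaarMeasure]
  [NormedAddCommGroup F] [NormedSpace ℝ F] {Ω D : Set E} {d K L : NNReal} {g h : E → E}
  {u : E → F} {Du : E → E →L[ℝ] F}

local notation "dim" => Module.finrank ℝ E

theorem map_restrict_le_of_leftInvOn (hg : Measurable g) (hh : LipschitzOnWith L h (g '' D))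
    (hleft : LeftInvOn h g D) :
    (μ.restrict D).map g ≤ (L : ℝ≥0∞) ^ dim • μ.restrict (g '' D) := by
  refine Measure.le_iff.2 fun A hA => ?_
  rw [Measure.map_apply hg hA, Measure.restrict_apply (hg hA), Measure.smul_apply,
    Measure.restrict_apply hA, smul_eq_mul]
  refine (measure_mono ?_).trans
    (addHaar_image_le_of_lipschitzOnWith μ (hh.mono (inter_subset_right (s := A))))
  rintro y ⟨hyA, hyD⟩
  exact ⟨g y, ⟨hyA, mem_image_of_mem g hyD⟩, hleft hyD⟩

theorem restrict_image_le_of_lipschitzWith (hg : LipschitzWith K g) :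
    μ.restrict (g '' D) ≤ (K : ℝ≥0∞) ^ dim • (μ.restrict D).map g := by
  have hgm : Measurable g := hg.continuous.measurable
  refine Measure.le_iff.2 fun A hA => ?_
  rw [Measure.smul_apply, Measure.map_apply hgm hA, Measure.restrict_apply (hgm hA),
    Measure.restrict_apply hA, smul_eq_mul, inter_comm A, ← image_inter_preimage, inter_comm]
  exact addHaar_image_le_of_lipschitzOnWith μ hg.lipschitzOnWith

theorem quasiMeasurePreserving_of_leftInvOn (hg : Measurable g)
    (hh : LipschitzOnWith L h (g '' D)) (hleft : LeftInvOn h g D) :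
    Measure.QuasiMeasurePreserving g (μ.restrict D) (μ.restrict (g '' D)) :=
  ⟨hg, (Measure.absolutelyContinuous_of_le (map_restrict_le_of_leftInvOn μ hg hh hleft)).trans
    Measure.smul_absolutelyContinuous⟩

variable {μ} [CompleteSpace F]

namespace HasWeakFDerivOn

theorem lintegral_prod_enorm_comp_sub_comp_le_of_isCompact (hu : HasWeakFDerivOn μ Ω u Du)
    (hΩ : IsOpen Ω) (hD : IsCompact D) (hDc : Convex ℝ D)
    (hd : ∀ y ∈ D, ∀ z ∈ D, ‖z - y‖₊ ≤ d) (hg : LipschitzWith K g)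
    (hh : LipschitzOnWith L h (g '' D)) (hleft : LeftInvOn h g D) (hgΩ : g '' D ⊆ Ω) :
    ∫⁻ p in D ×ˢ D, ‖u (g p.1) - u (g p.2)‖ₑ ∂(μ.prod μ) ≤
      K * d * (2 ^ dim * μ D * (L ^ dim * ∫⁻ x in Ω, ‖Du x‖ₑ ∂μ)) := by
  obtain ⟨U, hU, hUu, hDU⟩ := hu.exists_contDiff_approx hΩ (hD.image hg.continuous) hgΩ
  have hgm : Measurable g := hg.continuous.measurable
  have hlim : ∀ᵐ y ∂(μ.restrict D), Tendsto (fun k => U k (g y)) atTop (𝓝 (u (g y))) := by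
    filter_upwards [(quasiMeasurePreserving_of_leftInvOn μ hgm hh hleft).ae
      (ae_restrict_of_ae hUu), ae_restrict_mem hD.measurableSet] with y hy hyD
    exact hy (hgΩ (mem_image_of_mem g hyD))
  have hlim_prod : ∀ᵐ p ∂((μ.prod μ).restrict (D ×ˢ D)), Tendsto
      (fun k => ‖U k (g p.1) - U k (g p.2)‖ₑ) atTop (𝓝 ‖u (g p.1) - u (g p.2)‖ₑ) := by
    rw [← Measure.prod_restrict]
    filter_upwards [Measure.quasiMeasurePreserving_fst.ae hlim,
      Measure.quasiMeasurePreserving_snd.ae hlim] with p hp₁ hp₂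
    exact (hp₁.sub hp₂).enorm
  refine (lintegral_mono_ae (hlim_prod.mono fun p hp => hp.liminf_eq.ge)).trans
    ((lintegral_liminf_le fun k => ?_).trans (liminf_le_of_frequently_le' ?_))
  · have hUg : Continuous fun y => U k (g y) := (hU k).continuous.comp hg.continuous
    exact ((hUg.comp continuous_fst).sub (hUg.comp continuous_snd)).enorm.measurable
  · refine (hDU.mono fun k hk => ?_).frequently
    have hDUm : Measurable fun x => ‖fderiv ℝ (U k) x‖ₑ :=
      ((hU k).continuous_fderiv one_ne_zero).enorm.measurable
    refine (lintegral_prod_enorm_comp_sub_comp_le μ hDc hD.measurableSet hd hg (hU k)).trans ?_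
    gcongr
    calc ∫⁻ y in D, ‖fderiv ℝ (U k) (g y)‖ₑ ∂μ
        = ∫⁻ x, ‖fderiv ℝ (U k) x‖ₑ ∂((μ.restrict D).map g) := (lintegral_map hDUm hgm).symm
      _ ≤ ∫⁻ x, ‖fderiv ℝ (U k) x‖ₑ ∂((L : ℝ≥0∞) ^ dim • μ.restrict (g '' D)) :=
          lintegral_mono' (map_restrict_le_of_leftInvOn μ hgm hh hleft) le_rfl
      _ = L ^ dim * ∫⁻ x in g '' D, ‖fderiv ℝ (U k) x‖ₑ ∂μ := lintegral_smul_measure _ _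
      _ ≤ L ^ dim * ∫⁻ x in Ω, ‖Du x‖ₑ ∂μ := by gcongr

theorem lintegral_prod_enorm_comp_sub_comp_le_of_isOpen (hu : HasWeakFDerivOn μ Ω u Du)
    (hΩ : IsOpen Ω) (hD : IsOpen D) (hDc : Convex ℝ D)
    (hd : ∀ y ∈ D, ∀ z ∈ D, ‖z - y‖₊ ≤ d) (hg : LipschitzWith K g)
    (hh : LipschitzOnWith L h (g '' D)) (hleft : LeftInvOn h g D) (hgΩ : g '' D ⊆ Ω) :
    ∫⁻ p in D ×ˢ D, ‖u (g p.1) - u (g p.2)‖ₑ ∂(μ.prod μ) ≤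
      K * d * (2 ^ dim * μ D * (L ^ dim * ∫⁻ x in Ω, ‖Du x‖ₑ ∂μ)) := by
  have hDb : Bornology.IsBounded D := Metric.isBounded_iff_nndist.2
    ⟨d, fun y hy z hz => by rw [nndist_eq_nnnorm]; exact hd z hz y hy⟩
  obtain ⟨Q, hQmono, hQ, rfl⟩ := exists_monotone_isCompact_convex_iUnion_eq hD hDc hDb
  have hQsub : ∀ j, Q j ⊆ ⋃ j, Q j := subset_iUnion Q
  rw [← iUnion_prod_of_monotone hQmono hQmono, setLIntegral_iUnion_of_directed _
    (Monotone.directed_le fun i j hij => prod_mono (hQmono hij) (hQmono hij))]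
  refine iSup_le fun j => ?_
  refine (hu.lintegral_prod_enorm_comp_sub_comp_le_of_isCompact hΩ (hQ j).1 (hQ j).2
    (fun y hy z hz => hd y (hQsub j hy) z (hQsub j hz)) hg (hh.mono (image_mono (hQsub j)))
    (hleft.mono (hQsub j)) ((image_mono (hQsub j)).trans hgΩ)).trans ?_
  gcongr
  exact hQsub j

end HasWeakFDerivOn

end Chart

/-! ### The Poincaré inequality -/

section FiniteCover

variable {X ι : Type*} [TopologicalSpace X] {Ω : Set X} {V : ι → Set X} {s t : Finset ι}

theorem exists_notMem_biUnion_inter_nonempty (hΩ : IsPreconnected Ω) (hV : ∀ i ∈ t, IsOpen (V i))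
    (hcov : Ω ⊆ ⋃ i ∈ t, V i) (hst : s ⊆ t) (hmeet : (Ω ∩ ⋃ i ∈ s, V i).Nonempty)
    (hnot : ¬Ω ⊆ ⋃ i ∈ s, V i) : ∃ k ∈ t, k ∉ s ∧ ((⋃ i ∈ s, V i) ∩ V k).Nonempty := by
  classical
  have hsplit : ⋃ i ∈ t, V i ⊆ (⋃ i ∈ s, V i) ∪ ⋃ i ∈ t \ s, V i := by
    rw [← Finset.set_biUnion_union, Finset.union_sdiff_of_subset hst]
  obtain ⟨x, hxΩ, hxs⟩ := not_subset.1 hnot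
  obtain ⟨z, -, hzs, hzt⟩ := hΩ _ _ (isOpen_biUnion fun i hi => hV i (hst hi))
    (isOpen_biUnion fun i hi => hV i (Finset.mem_sdiff.1 hi).1) (hcov.trans hsplit) hmeet
    ⟨x, hxΩ, (hsplit (hcov hxΩ)).resolve_left hxs⟩
  obtain ⟨k, hk, hzk⟩ := mem_iUnion₂.1 hzt
  exact ⟨k, (Finset.mem_sdiff.1 hk).1, (Finset.mem_sdiff.1 hk).2, z, hzs, hzk⟩

theorem isPreconnected_induction_of_finite_open_cover {P : Set X → Prop} (hΩ : IsPreconnected Ω)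
    (hΩne : Ω.Nonempty) (hV : ∀ i ∈ t, IsOpen (V i)) (hVne : ∀ i ∈ t, (V i).Nonempty)
    (hcov : ⋃ i ∈ t, V i = Ω) (hP : ∀ i ∈ t, P (V i))
    (hunion : ∀ A B, IsOpen A → IsOpen B → A ⊆ Ω → B ⊆ Ω → (A ∩ B).Nonempty → P A → P B →
      P (A ∪ B)) : P Ω := by
  classical
  have hsub : ∀ s ⊆ t, ⋃ i ∈ s, V i ⊆ Ω := fun s hs => hcov ▸ biUnion_mono hs fun _ _ => le_rfl
  obtain ⟨s, hs⟩ : ∃ s : Finset ι, Maximal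
      (· ∈ t.powerset.filter fun s : Finset ι => s.Nonempty ∧ P (⋃ i ∈ s, V i)) s := by
    obtain ⟨x, hx⟩ := hΩne
    obtain ⟨i, hi, -⟩ := mem_iUnion₂.1 (hcov ▸ hx)
    exact Finset.exists_maximal ⟨{i}, by simpa using ⟨hi, hP i hi⟩⟩
  obtain ⟨hst, ⟨i, hi⟩, hPs⟩ := by simpa using hs.prop
  by_cases hall : Ω ⊆ ⋃ i ∈ s, V i
  · exact (hsub s hst).antisymm hall ▸ hPs
  obtain ⟨y, hy⟩ := hVne i (hst hi)
  have hys : y ∈ ⋃ i ∈ s, V i := mem_iUnion₂.2 ⟨i, hi, hy⟩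
  obtain ⟨k, hkt, hks, hmeet⟩ := exists_notMem_biUnion_inter_nonempty hΩ hV hcov.ge hst
    ⟨y, hsub s hst hys, hys⟩ hall
  have hPk : P (⋃ i ∈ insert k s, V i) := by
    rw [Finset.set_biUnion_insert, union_comm]
    exact hunion _ _ (isOpen_biUnion fun i hi => hV i (hst hi)) (hV k hkt) (hsub s hst)
      (hcov ▸ subset_biUnion_of_mem (u := V) hkt) hmeet hPs (hP k hkt)
  exact absurd (hs.le_of_ge (by simpa [Finset.insert_subset_iff, hkt, hst] using hPk)
    (Finset.subset_insert k s) (Finset.mem_insert_self k s)) hks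

end FiniteCover

section Averages

variable {X F : Type*} [MeasurableSpace X] [NormedAddCommGroup F] {μ : Measure X} {A B : Set X}
  {u : X → F}

theorem enorm_sub_mul_measure_inter_le (hu : AEStronglyMeasurable u (μ.restrict A)) (a b : F) :
    ‖a - b‖ₑ * μ (A ∩ B) ≤ ∫⁻ x in A, ‖u x - a‖ₑ ∂μ + ∫⁻ x in B, ‖u x - b‖ₑ ∂μ := by
  calc ‖a - b‖ₑ * μ (A ∩ B) = ∫⁻ _ in A ∩ B, ‖a - b‖ₑ ∂μ := (setLIntegral_const _ _).symm
    _ ≤ ∫⁻ x in A ∩ B, (‖u x - a‖ₑ + ‖u x - b‖ₑ) ∂μ := by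
        refine lintegral_mono fun x => ?_
        simpa only [edist_eq_enorm_sub, enorm_sub_rev] using edist_triangle_left a b (u x)
    _ = ∫⁻ x in A ∩ B, ‖u x - a‖ₑ ∂μ + ∫⁻ x in A ∩ B, ‖u x - b‖ₑ ∂μ :=
        lintegral_add_left'
          ((hu.mono_set inter_subset_left).sub aestronglyMeasurable_const).enorm _
    _ ≤ _ := add_le_add (lintegral_mono_set inter_subset_left)
        (lintegral_mono_set inter_subset_right)

theorem lintegral_union_enorm_sub_le (a b : F) :
    ∫⁻ x in A ∪ B, ‖u x - a‖ₑ ∂μ ≤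
      ∫⁻ x in A, ‖u x - a‖ₑ ∂μ + (∫⁻ x in B, ‖u x - b‖ₑ ∂μ + ‖a - b‖ₑ * μ B) := by
  refine (lintegral_union_le _ _ _).trans (add_le_add le_rfl ?_)
  rw [← setLIntegral_const, ← lintegral_add_right _ measurable_const]
  refine lintegral_mono fun x => ?_
  simpa only [edist_eq_enorm_sub, enorm_sub_rev a b] using edist_triangle (u x) b a

theorem lintegral_enorm_le_two_mul_of_integral_eq_zero [NormedSpace ℝ F] [CompleteSpace F]
    [IsFiniteMeasure μ] (hu : Integrable u μ) (hmean : ∫ x, u x ∂μ = 0) (c : F) :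
    ∫⁻ x, ‖u x‖ₑ ∂μ ≤ 2 * ∫⁻ x, ‖u x - c‖ₑ ∂μ := by
  have hc : ∫⁻ _, ‖c‖ₑ ∂μ ≤ ∫⁻ x, ‖u x - c‖ₑ ∂μ := by
    have hmean_sub : ∫ x, (u x - c) ∂μ = -(μ.real univ • c) := by
      rw [integral_sub hu (integrable_const c), hmean, zero_sub, integral_const]
    calc ∫⁻ _, ‖c‖ₑ ∂μ = ‖∫ x, (u x - c) ∂μ‖ₑ := by
          rw [hmean_sub, enorm_neg, enorm_smul, lintegral_const, mul_comm,
            Real.enorm_of_nonneg measureReal_nonneg, ofReal_measureReal]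
      _ ≤ ∫⁻ x, ‖u x - c‖ₑ ∂μ := enorm_integral_le_lintegral_enorm _
  calc ∫⁻ x, ‖u x‖ₑ ∂μ ≤ ∫⁻ x, (‖u x - c‖ₑ + ‖c‖ₑ) ∂μ :=
        lintegral_mono fun x => by simpa using enorm_add_le (u x - c) c
    _ = ∫⁻ x, ‖u x - c‖ₑ ∂μ + ∫⁻ _, ‖c‖ₑ ∂μ := lintegral_add_right _ measurable_const
    _ ≤ 2 * ∫⁻ x, ‖u x - c‖ₑ ∂μ := by rw [two_mul]; gcongr

end Averages

section Poincare

variable {E F : Type*} [NormedAddCommGroup E] [NormedSpace ℝ E] [MeasurableSpace E]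
  [NormedAddCommGroup F] [NormedSpace ℝ F] {μ : Measure E} {Ω A B D : Set E} {K L : NNReal}
  {g h : E → E} {u : E → F}

/-- The `L¹` Poincaré inequality on `A` for `F`-valued functions that are weakly differentiable on
`Ω ⊇ A`. The derivative is integrated over all of `Ω`, so that the inequalities on the pieces of a
cover of `Ω` can be combined, and the subtracted constant need not be the mean value. -/
def HasPoincareInequality (F : Type*) [NormedAddCommGroup F] [NormedSpace ℝ F] (μ : Measure E)
    (Ω A : Set E) : Prop :=
  ∃ C : ℝ≥0∞, C ≠ ∞ ∧ ∀ (u : E → F) (Du : E → E →L[ℝ] F), HasWeakFDerivOn μ Ω u Du →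
    ∃ c, ∫⁻ x in A, ‖u x - c‖ₑ ∂μ ≤ C * ∫⁻ x in Ω, ‖Du x‖ₑ ∂μ

namespace HasPoincareInequality

theorem union (hA : HasPoincareInequality F μ Ω A) (hB : HasPoincareInequality F μ Ω B)
    (hAΩ : A ⊆ Ω) (hAB : μ (A ∩ B) ≠ 0) (hBfin : μ B ≠ ∞) :
    HasPoincareInequality F μ Ω (A ∪ B) := by
  obtain ⟨CA, hCA, hA⟩ := hA
  obtain ⟨CB, hCB, hB⟩ := hB
  have hABfin : μ (A ∩ B) ≠ ∞ := measure_ne_top_of_subset inter_subset_right hBfin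
  refine ⟨CA + (CB + (CA + CB) / μ (A ∩ B) * μ B), ?_, fun u Du hu => ?_⟩
  · have := ENNReal.div_ne_top (ENNReal.add_ne_top.2 ⟨hCA, hCB⟩) hAB
    finiteness
  obtain ⟨a, ha⟩ := hA u Du hu
  obtain ⟨b, hb⟩ := hB u Du hu
  set S := ∫⁻ x in Ω, ‖Du x‖ₑ ∂μ
  have hab : ‖a - b‖ₑ ≤ (CA * S + CB * S) / μ (A ∩ B) := by
    rw [ENNReal.le_div_iff_mul_le (.inl hAB) (.inl hABfin)]
    exact (enorm_sub_mul_measure_inter_le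
      (hu.integrableOn.aestronglyMeasurable.mono_set hAΩ) a b).trans (add_le_add ha hb)
  refine ⟨a, ?_⟩
  calc ∫⁻ x in A ∪ B, ‖u x - a‖ₑ ∂μ
      ≤ ∫⁻ x in A, ‖u x - a‖ₑ ∂μ + (∫⁻ x in B, ‖u x - b‖ₑ ∂μ + ‖a - b‖ₑ * μ B) :=
        lintegral_union_enorm_sub_le a b
    _ ≤ CA * S + (CB * S + (CA * S + CB * S) / μ (A ∩ B) * μ B) := by gcongr
    _ = (CA + (CB + (CA + CB) / μ (A ∩ B) * μ B)) * S := by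
        simp only [ENNReal.div_eq_inv_mul]
        ring

theorem of_locally [ProperSpace E] [BorelSpace E] [μ.IsOpenPosMeasure]
    [IsFiniteMeasureOnCompacts μ] (hΩo : IsOpen Ω) (hΩc : IsConnected Ω)
    (hΩb : Bornology.IsBounded Ω) (hloc : ∀ x ∈ closure Ω, ∃ O : Set E, IsOpen O ∧ x ∈ O ∧
      HasPoincareInequality F μ Ω (O ∩ Ω)) :
    HasPoincareInequality F μ Ω Ω := by
  choose! O hO hxO hPO using hloc
  obtain ⟨t, ht, hcov⟩ := hΩb.isCompact_closure.elim_nhds_subcover O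
    fun x hx => (hO x hx).mem_nhds (hxO x hx)
  refine isPreconnected_induction_of_finite_open_cover (V := fun x => O x ∩ Ω) (t := t)
    hΩc.isPreconnected hΩc.nonempty (fun x hx => (hO x (ht x hx)).inter hΩo)
    (fun x hx => mem_closure_iff.1 (ht x hx) _ (hO x (ht x hx)) (hxO x (ht x hx))) ?_
    (fun x hx => hPO x (ht x hx)) fun A B hAo hBo hAΩ hBΩ hAB hA hB =>
      hA.union hB hAΩ ((hAo.inter hBo).measure_pos μ hAB).ne' (hΩb.subset hBΩ).measure_lt_top.ne
  rw [← iUnion₂_inter]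
  exact inter_eq_right.2 (subset_closure.trans hcov)

theorem exists_integral_norm_le (hΩ : HasPoincareInequality F μ Ω Ω) (hfin : μ Ω ≠ ∞)
    [CompleteSpace F] : ∃ C : NNReal, ∀ (u : E → F) (Du : E → E →L[ℝ] F),
      HasWeakFDerivOn μ Ω u Du → ∫ x in Ω, u x ∂μ = 0 →
      ∫ x in Ω, ‖u x‖ ∂μ ≤ C * ∫ x in Ω, ‖Du x‖ ∂μ := by
  obtain ⟨C, hC, hΩ⟩ := hΩ
  have := isFiniteMeasure_restrict.2 hfin
  refine ⟨(2 * C).toNNReal, fun u Du hu hmean => ?_⟩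
  obtain ⟨c, hc⟩ := hΩ u Du hu
  have hbound : ∫⁻ x in Ω, ‖u x‖ₑ ∂μ ≤ 2 * C * ∫⁻ x in Ω, ‖Du x‖ₑ ∂μ := by
    rw [mul_assoc]
    exact (lintegral_enorm_le_two_mul_of_integral_eq_zero hu.integrableOn hmean c).trans
      (mul_le_mul' le_rfl hc)
  rw [integral_norm_eq_lintegral_enorm hu.integrableOn.aestronglyMeasurable,
    integral_norm_eq_lintegral_enorm hu.integrableOn_fderiv.aestronglyMeasurable,
    ENNReal.coe_toNNReal_eq_toReal, ← ENNReal.toReal_mul]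
  exact ENNReal.toReal_mono (ENNReal.mul_ne_top (by finiteness)
    hu.integrableOn_fderiv.hasFiniteIntegral.ne) hbound

variable [FiniteDimensional ℝ E] [BorelSpace E] [CompleteSpace F]

theorem image_of_convex [μ.IsAddHaarMeasure] (hΩ : IsOpen Ω) (hDo : IsOpen D) (hDc : Convex ℝ D)
    (hDne : D.Nonempty) (hDb : Bornology.IsBounded D) (hg : LipschitzWith K g)
    (hh : LipschitzOnWith L h (g '' D)) (hleft : LeftInvOn h g D) (hgΩ : g '' D ⊆ Ω) :
    HasPoincareInequality F μ Ω (g '' D) := by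
  obtain ⟨d, hd⟩ := Metric.isBounded_iff_nndist.1 hDb
  have hD0 : μ D ≠ 0 := (hDo.measure_pos μ hDne).ne'
  have hDfin : μ D ≠ ∞ := hDb.measure_lt_top.ne
  set n := Module.finrank ℝ E
  refine ⟨K ^ n * (K * d * (2 ^ n * μ D * L ^ n) / μ D), ENNReal.mul_ne_top (by finiteness)
    (ENNReal.div_ne_top (by finiteness) hD0), fun u Du hu => ?_⟩
  have hug : AEStronglyMeasurable (fun y => u (g y)) (μ.restrict D) :=
    (hu.integrableOn.aestronglyMeasurable.mono_set hgΩ).comp_quasiMeasurePreserving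
      (quasiMeasurePreserving_of_leftInvOn μ hg.continuous.measurable hh hleft)
  have hmeas : AEMeasurable (fun p : E × E => ‖u (g p.1) - u (g p.2)‖ₑ)
      ((μ.restrict D).prod (μ.restrict D)) := (hug.comp_fst.sub hug.comp_snd).enorm
  have hosc := hu.lintegral_prod_enorm_comp_sub_comp_le_of_isOpen hΩ hDo hDc
    (fun y hy z hz => by simpa only [nndist_eq_nnnorm] using hd hz hy) hg hh hleft hgΩ
  rw [← Measure.prod_restrict, lintegral_prod_symm _ hmeas] at hosc
  obtain ⟨z, -, hz⟩ := exists_le_setLAverage hD0 hDfin hmeas.prod_swap.lintegral_prod_right'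
  rw [setLAverage_eq] at hz
  refine ⟨u (g z), ?_⟩
  calc ∫⁻ x in g '' D, ‖u x - u (g z)‖ₑ ∂μ
      ≤ ∫⁻ x, ‖u x - u (g z)‖ₑ ∂((K : ℝ≥0∞) ^ n • (μ.restrict D).map g) :=
        lintegral_mono' (restrict_image_le_of_lipschitzWith μ hg) le_rfl
    _ ≤ K ^ n * ∫⁻ y in D, ‖u (g y) - u (g z)‖ₑ ∂μ := by
        rw [lintegral_smul_measure]
        exact mul_le_mul' le_rfl (lintegral_map_le _ _)
    _ ≤ K ^ n * (K * d * (2 ^ n * μ D * (L ^ n * ∫⁻ x in Ω, ‖Du x‖ₑ ∂μ)) / μ D) :=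
        mul_le_mul' le_rfl (hz.trans (ENNReal.div_le_div_right hosc _))
    _ = K ^ n * (K * d * (2 ^ n * μ D * L ^ n) / μ D) * ∫⁻ x in Ω, ‖Du x‖ₑ ∂μ := by
        simp only [ENNReal.div_eq_inv_mul]
        ring

end HasPoincareInequality

end Poincare

section LipschitzDomain

variable {E F : Type*} [NormedAddCommGroup E] [InnerProductSpace ℝ E] [FiniteDimensional ℝ E]
  [MeasurableSpace E] [BorelSpace E] {μ : Measure E} [μ.IsAddHaarMeasure]
  [NormedAddCommGroup F] [NormedSpace ℝ F] [CompleteSpace F] {Ω U H : Set E} {K L : NNReal}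
  {h hinv : E → E} {x : E}

theorem exists_isOpen_mem_hasPoincareInequality_inter (hΩ : IsOpen Ω) (hx : x ∈ closure Ω)
    (hU : IsOpen U) (hxU : x ∈ U) (hh : LipschitzOnWith K h U)
    (hhinv : LipschitzOnWith L hinv (h '' U)) (hleft : LeftInvOn hinv h U) (hH : IsOpen H)
    (hHc : Convex ℝ H) (hflat : h '' (U ∩ Ω) = h '' U ∩ H) :
    ∃ O, IsOpen O ∧ x ∈ O ∧ HasPoincareInequality F μ Ω (O ∩ Ω) := by
  obtain ⟨r, hr, hball⟩ := Metric.isOpen_iff.1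
    (isOpen_image_of_lipschitzOnWith hU hh hhinv hleft) _ (mem_image_of_mem h hxU)
  set O := U ∩ h ⁻¹' Metric.ball (h x) r
  set D := Metric.ball (h x) r ∩ H
  have hO : IsOpen O := hh.continuousOn.isOpen_inter_preimage hU Metric.isOpen_ball
  have hxO : x ∈ O := ⟨hxU, Metric.mem_ball_self hr⟩
  have himage : h '' (O ∩ Ω) = D := by
    rw [inter_right_comm, image_inter_preimage, hflat, inter_right_comm, inter_eq_right.2 hball]
  obtain ⟨g, hg, hgeq⟩ :=
    (hhinv.mono (inter_subset_left.trans hball : D ⊆ h '' U)).extend_finite_dimension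
  have hgh : LeftInvOn g h (O ∩ Ω) := fun y hy =>
    (hgeq (himage.subset (mem_image_of_mem h hy))).symm.trans (hleft hy.1.1)
  have hgD : g '' D = O ∩ Ω := by rw [← himage, hgh.image_image]
  have hhg : LeftInvOn h g D := himage ▸ hgh.rightInvOn_image
  refine ⟨O, hO, hxO, hgD ▸ HasPoincareInequality.image_of_convex hΩ (Metric.isOpen_ball.inter hH)
    ((convex_ball _ _).inter hHc) ?_ (Metric.isBounded_ball.subset inter_subset_left) hg
    (hh.mono ?_) hhg ?_⟩
  · exact himage ▸ (mem_closure_iff.1 hx O hO hxO).image h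
  · exact hgD.trans_subset (inter_subset_left.trans inter_subset_left)
  · exact hgD.trans_subset inter_subset_right

end LipschitzDomain

/-! ### Weak gradients in coordinates -/

section Basis

variable {E F κ : Type*} [NormedAddCommGroup E] [NormedSpace ℝ E] [MeasurableSpace E]
  [OpensMeasurableSpace E] [NormedAddCommGroup F] [NormedSpace ℝ F] {μ : Measure E} {Ω : Set E}
  {φ : E → ℝ} {u : E → F} {Du : E → E →L[ℝ] F}

theorem integrable_fderiv_apply_smul (hφ : ContDiff ℝ 1 φ) (hφc : HasCompactSupport φ)
    (hu : Integrable u μ) (v : E) : Integrable (fun x => fderiv ℝ φ x v • u x) μ :=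
  hu.locallyIntegrable.integrable_smul_left_of_hasCompactSupport
    ((hφ.continuous_fderiv one_ne_zero).clm_apply continuous_const) (hφc.fderiv_apply ℝ v)

theorem integrable_smul_clm_apply (hφ : Continuous φ) (hφc : HasCompactSupport φ)
    (hDu : Integrable Du μ) (v : E) : Integrable (fun x => φ x • Du x v) μ :=
  (hDu.apply_continuousLinearMap v).locallyIntegrable.integrable_smul_left_of_hasCompactSupport
    hφ hφc

theorem HasWeakFDerivOn.of_basis (b : Module.Basis κ ℝ E) (hu : IntegrableOn u Ω μ)
    (hDu : IntegrableOn Du Ω μ)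
    (h : ∀ φ : E → ℝ, ContDiff ℝ 1 φ → HasCompactSupport φ → tsupport φ ⊆ Ω →
      ∀ i, ∫ x in Ω, fderiv ℝ φ x (b i) • u x ∂μ = -∫ x in Ω, φ x • Du x (b i) ∂μ) :
    HasWeakFDerivOn μ Ω u Du := by
  refine ⟨hu, hDu, fun φ hφ hφc hφΩ v => ?_⟩
  have hleft := integrable_fderiv_apply_smul hφ hφc hu
  have hright := integrable_smul_clm_apply hφ.continuous hφc hDu
  induction b.mem_span v using Submodule.span_induction with
  | mem v hv =>
    obtain ⟨i, rfl⟩ := hv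
    exact h φ hφ hφc hφΩ i
  | zero => simp
  | add v w _ _ hv hw =>
    simp only [map_add, add_smul, smul_add]
    rw [integral_add (hleft v) (hleft w), integral_add (hright v) (hright w), hv, hw, neg_add]
  | smul c v _ hv =>
    simp only [map_smul, smul_assoc, smul_comm _ c, integral_smul, hv, smul_neg]

end Basis

theorem integrable_linearMap_comp {X V W : Type*} [MeasurableSpace X] {μ : Measure X}
    [NormedAddCommGroup V] [NormedSpace ℝ V] [FiniteDimensional ℝ V] [NormedAddCommGroup W]
    [NormedSpace ℝ W] {f : X → V} (hf : Integrable f μ) (T : V →ₗ[ℝ] W) :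
    Integrable (fun x => T (f x)) μ :=
  T.toContinuousLinearMap.integrable_comp hf

section Coordinates

variable {ι κ : Type*} [Fintype ι] [Fintype κ]

theorem vnorm_eq_norm (v : ι → ℝ) : vnorm v = ‖WithLp.toLp 2 v‖ := by
  simp [vnorm, EuclideanSpace.norm_eq]

theorem mdot_eq_inner (A B : ι → κ → ℝ) :
    mdot A B = ⟪WithLp.toLp 2 (Function.uncurry A), WithLp.toLp 2 (Function.uncurry B)⟫ := by
  simp [mdot, PiLp.inner_apply, Fintype.sum_prod_type, mul_comm]

theorem mnorm_eq_norm (A : ι → κ → ℝ) : mnorm A = ‖WithLp.toLp 2 (Function.uncurry A)‖ := by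
  rw [mnorm, mdot_eq_inner, norm_eq_sqrt_real_inner]

theorem mnorm_nonneg (A : ι → κ → ℝ) : 0 ≤ mnorm A :=
  Real.sqrt_nonneg _

theorem abs_mdot_le_mnorm_mul_mnorm (A B : ι → κ → ℝ) : |mdot A B| ≤ mnorm A * mnorm B := by
  simpa only [mdot_eq_inner, mnorm_eq_norm] using abs_real_inner_le_norm _ _

theorem continuous_mdot : Continuous fun p : (ι → κ → ℝ) × (ι → κ → ℝ) => mdot p.1 p.2 := by
  unfold mdot
  fun_prop

theorem continuous_mnorm : Continuous fun A : ι → κ → ℝ => mnorm A :=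
  (continuous_mdot.comp (continuous_id.prodMk continuous_id)).sqrt

theorem integrable_mnorm {X : Type*} [MeasurableSpace X] {μ : Measure X} {A : X → ι → κ → ℝ}
    (hA : Integrable A μ) : Integrable (fun x => mnorm (A x)) μ := by
  simp only [mnorm_eq_norm]
  exact (Integrable.of_eval_piLp fun p => (hA.eval p.1).eval p.2).norm

/-- The operator `ℝ^κ → ℝ^ι` with matrix `A`, as a linear function of `A`. Matrices are plain
functions here, as in `mdot` and `mnorm`. -/
noncomputable def euclideanCLM [DecidableEq κ] :
    (ι → κ → ℝ) →ₗ[ℝ] EuclideanSpace ℝ κ →L[ℝ] EuclideanSpace ℝ ι :=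
  LinearMap.toContinuousLinearMap.toLinearMap ∘ₗ
    (Matrix.toLpLin (R := ℝ) 2 2).toLinearMap ∘ₗ (Matrix.ofLinearEquiv ℝ).toLinearMap

variable [DecidableEq κ]

theorem euclideanCLM_apply (A : ι → κ → ℝ) (v : EuclideanSpace ℝ κ) (a : ι) :
    euclideanCLM A v a = ∑ i, A a i * v i := by
  rfl

theorem norm_euclideanCLM_le_mnorm (A : ι → κ → ℝ) : ‖euclideanCLM A‖ ≤ mnorm A := by
  refine ContinuousLinearMap.opNorm_le_bound _ (mnorm_nonneg A) fun v => ?_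
  rw [EuclideanSpace.norm_eq, EuclideanSpace.norm_eq, mnorm,
    ← Real.sqrt_mul (real_inner_self_nonneg.trans_eq (mdot_eq_inner A A).symm), mdot,
    Finset.sum_mul]
  refine Real.sqrt_le_sqrt (Finset.sum_le_sum fun a _ => ?_)
  simpa only [euclideanCLM_apply, Real.norm_eq_abs, sq_abs, ← sq] using
    Finset.sum_mul_sq_le_sq_mul_sq Finset.univ (A a) v

end Coordinates

section LipschitzDomain

variable {n : ℕ} {ι : Type*} [Fintype ι] {Ω : Set (EVec n)}

theorem HasWeakDerivOn.hasWeakFDerivOn {u : EVec n → ι → ℝ} {Du : EVec n → ι → Fin n → ℝ}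
    (h : HasWeakDerivOn Ω u Du) :
    HasWeakFDerivOn volume Ω (fun x => WithLp.toLp 2 (u x)) fun x => euclideanCLM (Du x) := by
  obtain ⟨hu, hDu, hparts⟩ := h
  have hu2 : IntegrableOn (fun x => WithLp.toLp 2 (u x)) Ω :=
    Integrable.of_eval_piLp fun a => hu.eval a
  have hDu2 : IntegrableOn (fun x => euclideanCLM (Du x)) Ω :=
    integrable_linearMap_comp hDu euclideanCLM
  refine .of_basis (EuclideanSpace.basisFun (Fin n) ℝ).toBasis hu2 hDu2
    fun φ hφ hφc hφΩ i => ?_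
  have hleft := integrable_fderiv_apply_smul hφ hφc hu2 (EuclideanSpace.single i 1)
  have hright := integrable_smul_clm_apply hφ.continuous hφc hDu2 (EuclideanSpace.single i 1)
  ext a
  simp only [OrthonormalBasis.coe_toBasis, EuclideanSpace.basisFun_apply, PiLp.neg_apply]
  rw [eval_integral_piLp hleft.eval_piLp, eval_integral_piLp hright.eval_piLp]
  simpa [euclideanCLM_apply, mul_comm] using hparts φ hφ hφc hφΩ a i

theorem IsLipschitzDomain.hasPoincareInequality {F : Type*} [NormedAddCommGroup F]
    [NormedSpace ℝ F] [CompleteSpace F] (hΩ : IsLipschitzDomain Ω) (hb : Bornology.IsBounded Ω) :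
    HasPoincareInequality F volume Ω Ω := by
  obtain ⟨hΩo, -, hΩc, hfrontier⟩ := hΩ
  refine .of_locally hΩo hΩc hb fun x hx => ?_
  by_cases hxΩ : x ∈ Ω
  · exact exists_isOpen_mem_hasPoincareInequality_inter hΩo hx hΩo hxΩ (h := id) (hinv := id)
      (K := 1) (L := 1) LipschitzWith.id.lipschitzOnWith LipschitzWith.id.lipschitzOnWith
      (fun _ _ => rfl) isOpen_univ convex_univ (by simp)
  · obtain ⟨U, h, hinv, K, e, -, hU, hxU, hh, hhinv, hleft, hflat⟩ :=
      hfrontier x ⟨hx, hΩo.interior_eq.symm ▸ hxΩ⟩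
    exact exists_isOpen_mem_hasPoincareInequality_inter hΩo hx hU hxU hh hhinv hleft
      (isOpen_lt continuous_const (innerSL ℝ e).continuous)
      (convex_halfSpace_gt (innerSL ℝ e).toLinearMap.isLinear 0) hflat

theorem IsLipschitzDomain.exists_integral_vnorm_le (hΩ : IsLipschitzDomain Ω)
    (hb : Bornology.IsBounded Ω) :
    ∃ C : NNReal, ∀ (u : EVec n → ι → ℝ) (Du : EVec n → ι → Fin n → ℝ), HasWeakDerivOn Ω u Du →
      ZeroMean Ω u → ∫ x in Ω, vnorm (u x) ≤ C * ∫ x in Ω, mnorm (Du x) := by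
  obtain ⟨C, hC⟩ := (hΩ.hasPoincareInequality (F := EuclideanSpace ℝ ι)
    hb).exists_integral_norm_le hb.measure_lt_top.ne
  refine ⟨C, fun u Du hu hmean => ?_⟩
  have hmean' : ∫ x in Ω, WithLp.toLp 2 (u x) = 0 := by
    ext a
    rw [eval_integral_piLp fun a => hu.1.eval a]
    exact hmean a
  calc ∫ x in Ω, vnorm (u x) = ∫ x in Ω, ‖WithLp.toLp 2 (u x)‖ := by simp only [vnorm_eq_norm]
    _ ≤ C * ∫ x in Ω, ‖euclideanCLM (Du x)‖ := hC _ _ hu.hasWeakFDerivOn hmean'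
    _ ≤ C * ∫ x in Ω, mnorm (Du x) :=
        mul_le_mul_of_nonneg_left (integral_mono hu.hasWeakFDerivOn.integrableOn_fderiv.norm
          (integrable_mnorm hu.2.1) fun x => norm_euclideanCLM_le_mnorm (Du x)) C.coe_nonneg

end LipschitzDomain

/-! ### Coerciveness -/

section LinearGrowth

variable {f : ℝ → ℝ} {a b : ℝ}

theorem exists_pos_forall_mul_sub_le (hf : ContinuousOn f (Ici 0))
    (hlim : Tendsto (fun t => f t / t) atTop (𝓝 a)) (hba : b < a) :
    ∃ M, 0 < M ∧ ∀ t, 0 ≤ t → b * t - M ≤ f t := by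
  obtain ⟨R, hR⟩ := eventually_atTop.1 (hlim.eventually_const_lt hba)
  obtain ⟨M, hM⟩ := isCompact_Icc.bddAbove_image
    (f := fun t => b * t - f t) (K := Icc 0 (max R 1))
    ((continuousOn_const.mul continuousOn_id).sub (hf.mono Icc_subset_Ici_self))
  refine ⟨max M 1, by positivity, fun t ht => ?_⟩
  rcases le_total t (max R 1) with htR | htR
  · linarith [hM (mem_image_of_mem _ ⟨ht, htR⟩), le_max_left M 1]
  · have htpos : 0 < t := one_pos.trans_le ((le_max_right R 1).trans htR)
    linarith [(lt_div_iff₀ htpos).1 (hR t ((le_max_left R 1).trans htR)), le_max_right M 1]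

theorem exists_forall_abs_le_mul_add (hf : ContinuousOn f (Ici 0))
    (hlim : Tendsto (fun t => f t / t) atTop (𝓝 a)) :
    ∃ c M : ℝ, ∀ t, 0 ≤ t → |f t| ≤ c * t + M := by
  obtain ⟨M₁, -, hM₁⟩ := exists_pos_forall_mul_sub_le hf hlim (b := -(|a| + 1))
    (by linarith [neg_abs_le a])
  obtain ⟨M₂, -, hM₂⟩ := exists_pos_forall_mul_sub_le (b := -(|a| + 1)) hf.neg
    (by simpa only [Pi.neg_apply, neg_div] using hlim.neg) (by linarith [le_abs_self a])
  refine ⟨|a| + 1, max M₁ M₂, fun t ht => abs_le.2 ⟨?_, ?_⟩⟩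
  · linarith [hM₁ t ht, le_max_left M₁ M₂]
  · linarith [hM₂ t ht, le_max_right M₁ M₂, Pi.neg_apply f t]

theorem integrable_comp_mnorm {X ι κ : Type*} [Fintype ι] [Fintype κ] [MeasurableSpace X]
    {μ : Measure X} [IsFiniteMeasure μ] {A : X → ι → κ → ℝ} (hf : ContinuousOn f (Ici 0))
    (hlim : Tendsto (fun t => f t / t) atTop (𝓝 a)) (hA : Integrable A μ) :
    Integrable (fun x => f (mnorm (A x))) μ := by
  obtain ⟨c, M, hfM⟩ := exists_forall_abs_le_mul_add hf hlim
  exact (((integrable_mnorm hA).const_mul c).add (integrable_const M)).mono'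
    ((hf.comp_continuous continuous_mnorm mnorm_nonneg).comp_aestronglyMeasurable
      hA.aestronglyMeasurable) (ae_of_all _ fun x => hfM _ (mnorm_nonneg _))

end LinearGrowth

theorem tendsto_atTop_of_add_of_le_mul {α : Type*} {l : Filter α} {u v : α → ℝ} {C : NNReal}
    (hadd : Tendsto (fun k => u k + v k) l atTop) (hle : ∀ k, u k ≤ C * v k) :
    Tendsto v l atTop := by
  have hC : (0 : ℝ) < C + 1 := by positivity
  refine (tendsto_const_mul_atTop_of_pos hC).1 (tendsto_atTop_mono (fun k => ?_) hadd)
  linarith [hle k]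

section Functional

variable {n N : ℕ} {Ω : Set (EVec n)} {f : ℝ → ℝ} {T₀ Dw : EVec n → Fin N → Fin n → ℝ}

theorem ae_mnorm_le_linfNormOn (hT : linfNormOn Ω T₀ ≠ ∞) :
    ∀ᵐ x ∂volume.restrict Ω, mnorm (T₀ x) ≤ (linfNormOn Ω T₀).toReal := by
  filter_upwards [ENNReal.ae_le_essSup fun x => ENNReal.ofReal (mnorm (T₀ x))] with x hx
  exact (ENNReal.ofReal_le_iff_le_toReal hT).1 hx

theorem mul_integral_mnorm_sub_le_FF {b M : ℝ} (hΩ : volume Ω ≠ ∞)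
    (hfb : ∀ t, 0 ≤ t → b * t - M ≤ f t)
    (hfDw : IntegrableOn (fun x => f (mnorm (Dw x))) Ω) (hDw : IntegrableOn Dw Ω)
    (hTmeas : AEStronglyMeasurable T₀ (volume.restrict Ω)) (hT : linfNormOn Ω T₀ ≠ ∞) :
    (b - (linfNormOn Ω T₀).toReal) * (∫ x in Ω, mnorm (Dw x)) - M * (volume Ω).toReal ≤
      FF Ω f T₀ Dw := by
  set T := (linfNormOn Ω T₀).toReal
  have hnorm : IntegrableOn (fun x => mnorm (Dw x)) Ω := integrable_mnorm hDw
  have hconst : IntegrableOn (fun _ => M) Ω := integrableOn_const hΩ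
  have hdot_le : ∀ᵐ x ∂volume.restrict Ω, |mdot (T₀ x) (Dw x)| ≤ T * mnorm (Dw x) := by
    filter_upwards [ae_mnorm_le_linfNormOn hT] with x hx
    exact (abs_mdot_le_mnorm_mul_mnorm _ _).trans
      (mul_le_mul_of_nonneg_right hx (mnorm_nonneg _))
  have hdot : IntegrableOn (fun x => mdot (T₀ x) (Dw x)) Ω :=
    (hnorm.const_mul T).mono'
      (continuous_mdot.comp_aestronglyMeasurable (hTmeas.prodMk hDw.aestronglyMeasurable)) hdot_le
  calc (b - T) * (∫ x in Ω, mnorm (Dw x)) - M * (volume Ω).toReal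
      = ∫ x in Ω, ((b - T) * mnorm (Dw x) - M) := by
        rw [integral_sub (hnorm.const_mul _) hconst, integral_const_mul, setIntegral_const,
          smul_eq_mul, measureReal_def, mul_comm M]
    _ ≤ FF Ω f T₀ Dw := by
        refine integral_mono_ae ((hnorm.const_mul _).sub hconst) (hfDw.sub hdot) ?_
        filter_upwards [hdot_le] with x hx
        linarith [hfb _ (mnorm_nonneg (Dw x)), le_of_abs_le hx]

end Functional

theorem coerciveness_of_FF_general {n N : ℕ} (Ω : Set (EVec n)) (hΩ : IsLipschitzDomain Ω)
    (hΩbdd : Bornology.IsBounded Ω) (f : ℝ → ℝ) (hf : ContinuousOn f (Ici 0)) (finf : ℝ)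
    (hfinf : Tendsto (fun t => f t / t) atTop (𝓝 finf)) (T₀ : EVec n → Fin N → Fin n → ℝ)
    (hTmeas : AEStronglyMeasurable T₀ (volume.restrict Ω))
    (hTsmall : linfNormOn Ω T₀ < ENNReal.ofReal finf) :
    ∃ R₀ : ℝ, 0 < R₀ ∧
      (∀ (w : EVec n → Fin N → ℝ) (Dw : EVec n → Fin N → Fin n → ℝ), HasWeakDerivOn Ω w Dw →
        (1 / 2) * (finf - (linfNormOn Ω T₀).toReal) * (∫ x in Ω, mnorm (Dw x)) -
          finf * (volume Ω).toReal * R₀ ≤ FF Ω f T₀ Dw) ∧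
      (∀ (w : ℕ → EVec n → Fin N → ℝ) (Dw : ℕ → EVec n → Fin N → Fin n → ℝ),
        (∀ k, HasWeakDerivOn Ω (w k) (Dw k) ∧ ZeroMean Ω (w k)) →
        Tendsto (fun k => (∫ x in Ω, vnorm (w k x)) + ∫ x in Ω, mnorm (Dw k x)) atTop atTop →
        Tendsto (fun k => FF Ω f T₀ (Dw k)) atTop atTop) := by
  have hvol : volume Ω ≠ ∞ := hΩbdd.measure_lt_top.ne
  have := isFiniteMeasure_restrict.2 hvol
  have hT : linfNormOn Ω T₀ ≠ ∞ := hTsmall.ne_top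
  have hTfinf : (linfNormOn Ω T₀).toReal < finf := (ENNReal.lt_ofReal_iff_toReal_lt hT).1 hTsmall
  have hfinf_pos : 0 < finf := ENNReal.toReal_nonneg.trans_lt hTfinf
  obtain ⟨M, hM, hfM⟩ := exists_pos_forall_mul_sub_le hf hfinf
    (b := (finf + (linfNormOn Ω T₀).toReal) / 2) (by linarith)
  have hbound (w : EVec n → Fin N → ℝ) (Dw : EVec n → Fin N → Fin n → ℝ)
      (hw : HasWeakDerivOn Ω w Dw) :
      (1 / 2) * (finf - (linfNormOn Ω T₀).toReal) * (∫ x in Ω, mnorm (Dw x)) -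
        finf * (volume Ω).toReal * (M / finf) ≤ FF Ω f T₀ Dw := by
    convert mul_integral_mnorm_sub_le_FF hvol hfM (integrable_comp_mnorm hf hfinf hw.2.1) hw.2.1
      hTmeas hT using 2
    · ring
    · field_simp
  refine ⟨M / finf, by positivity, hbound, fun w Dw hw hnorm => ?_⟩
  obtain ⟨C, hC⟩ := hΩ.exists_integral_vnorm_le (ι := Fin N) hΩbdd
  have hgrad : Tendsto (fun k => ∫ x in Ω, mnorm (Dw k x)) atTop atTop :=
    tendsto_atTop_of_add_of_le_mul hnorm fun k => hC _ _ (hw k).1 (hw k).2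
  exact tendsto_atTop_mono (fun k => hbound _ _ (hw k).1) (tendsto_atTop_add_const_right _ _
    (hgrad.const_mul_atTop (mul_pos one_half_pos (sub_pos.2 hTfinf))))

/-- **Coerciveness of `𝔉` (Section 1.1).** Under the coerciveness condition
`‖T₀‖_{L^∞} < f^∞(1)` there is `R₀ > 0` such that
`𝔉[w] ≥ ½(f^∞(1) − ‖T₀‖_∞)‖∇w‖_{L¹} − f^∞(1)|Ω|R₀` for all `w ∈ W^{1,1}(Ω;ℝ^N)`;
in particular `𝔉[w_k] → ∞` along any sequence with zero mean and `W^{1,1}`-norms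
tending to `∞`. -/
theorem coerciveness_of_FF
    {n N : ℕ} (Ω : Set (EVec n))
    (hΩ : IsLipschitzDomain Ω) (hΩbdd : Bornology.IsBounded Ω)
    (ν L : ℝ) (hν : 0 < ν) (hνL : ν ≤ L)
    (f f' : ℝ → ℝ)
    (hderiv : ∀ t ∈ Set.Ici (0:ℝ), HasDerivWithinAt f (f' t) (Set.Ici 0) t)
    (hf'cont : ContinuousOn f' (Set.Ici 0))
    (hconv : ConvexOn ℝ (Set.Ici 0) f)
    (hf0 : f 0 = 0) (hf'0 : f' 0 = 0)
    (hgrowth : ∀ t ∈ Set.Ici (0:ℝ), ν * t - L ≤ f t ∧ f t ≤ L * (t + 1))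
    (finf : ℝ) (hfinf : Filter.Tendsto (fun t => f t / t) Filter.atTop (nhds finf))
    (T₀ : EVec n → Fin N → Fin n → ℝ)
    (hTmeas : AEStronglyMeasurable T₀ (volume.restrict Ω))
    (hTsmall : linfNormOn Ω T₀ < ENNReal.ofReal finf) :
    ∃ R₀ : ℝ, 0 < R₀ ∧
      (∀ (w : EVec n → Fin N → ℝ) (Dw : EVec n → Fin N → Fin n → ℝ),
        HasWeakDerivOn Ω w Dw →
          (1 / 2) * (finf - (linfNormOn Ω T₀).toReal) * (∫ x in Ω, mnorm (Dw x)) -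
              finf * (volume Ω).toReal * R₀ ≤ FF Ω f T₀ Dw) ∧
      (∀ (w : ℕ → EVec n → Fin N → ℝ) (Dw : ℕ → EVec n → Fin N → Fin n → ℝ),
        (∀ k, HasWeakDerivOn Ω (w k) (Dw k) ∧ ZeroMean Ω (w k)) →
        Filter.Tendsto
          (fun k => (∫ x in Ω, vnorm (w k x)) + ∫ x in Ω, mnorm (Dw k x))
          Filter.atTop Filter.atTop →
        Filter.Tendsto (fun k => FF Ω f T₀ (Dw k)) Filter.atTop Filter.atTop) :=
  coerciveness_of_FF_general Ω hΩ hΩbdd f (fun t ht => (hderiv t ht).continuousWithinAt)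
    finf hfinf T₀ hTmeas hTsmall
end
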